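/- Uniform ℓ²-Kazhdan constant: Let K be a field and Γ a finitely generated subgroup of GL_n(K) that is not virtually solvable. Then there exists ε > 0 such that for every finite symmetric generating set Σ of Γ with 1 ∈ Σ and every square-summable function f : Γ → ℂ (i.e. f ∈ ℓ²(Γ)), one has max_{s∈Σ} ‖s·f − f‖₂ ≥ ε·‖f‖₂, where (s·f)(x) = f(s⁻¹x) and ‖·‖₂ denotes the ℓ²(Γ) norm. In other words, the uniform ℓ²-Kazhdan constant κ_Γ = inf over finite symmetric generating sets of the optimal such ε is positive. -/

import Mathlib

open Matrix Pointwise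

/-!
An almost invariant `f` in `ℓ²` gives an almost invariant mean with density `|f|²`, so it suffices
to bound all means away from invariance, uniformly over generating sets. This property passes up
from subgroups of finite index, so `Γ` may be assumed to act irreducibly, in dimension at least
two, together with all its subgroups of finite index, which then span the matrix algebra
(Burnside). The entries lie in a finitely generated domain.

Consider means on `Γ` that are more and more invariant, for varying generating sets, and push them
to the cones in `Kⁿ`. Suppose first that words of bounded length expand every norm, at some place
of a family subject to the product inequality. Choose the lengths so that the expansion at that
place is nearly the largest over all places, and tends to infinity. Large matrices concentrate the
means near hyperplanes. Sequences growing at most like powers of the expansion, modulo those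
decaying faster than all its powers, form a field along an ultrafilter. Over this field, a space of
linear forms of maximal rank among those infinitesimal on a set of positive mass has a finite
orbit, hence is stabilised by subgroups of finite index. These still span the matrix algebra in
the limit, because the product inequality bounds Gram determinants of the trace form from below:
a contradiction.

Without expansion, the traces of words are integers bounded at every place. Over a number field
there are finitely many of these, and `Γ` would have finite image. Over a function field they are
constants once the degree valuation is scaled to be sparse, and all traces would be algebraic. If
all traces are algebraic, reduction modulo a maximal ideal leads back to a number field or a finite
field, since the discriminants of bases of words are units.
-/

namespace UniformKazhdan

open Filter

/-- A mean on `X`: a finitely additive probability measure defined on all subsets of `X`. -/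
structure IsMean {X : Type*} (m : Set X → ℝ) : Prop where
  nonneg : ∀ A, 0 ≤ m A
  univ : m Set.univ = 1
  union : ∀ A B, Disjoint A B → m (A ∪ B) = m A + m B

namespace IsMean

variable {X Y : Type*} {m : Set X → ℝ}

lemma mono (hm : IsMean m) {A B : Set X} (h : A ⊆ B) : m A ≤ m B := by
  have hB := hm.union A (B \ A) Set.disjoint_sdiff_right
  rw [Set.union_sdiff_cancel h] at hB
  linarith [hm.nonneg (B \ A)]

lemma le_one (hm : IsMean m) (A : Set X) : m A ≤ 1 :=
  hm.univ ▸ hm.mono (Set.subset_univ A)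

lemma empty (hm : IsMean m) : m ∅ = 0 := by
  simpa using hm.union ∅ ∅ (Set.disjoint_empty ∅)

lemma union_add_inter (hm : IsMean m) (A B : Set X) : m (A ∪ B) + m (A ∩ B) = m A + m B := by
  have hunion := hm.union (A \ B) B Set.disjoint_sdiff_left
  have hA := hm.union (A \ B) (A ∩ B) (Set.disjoint_sdiff_left.mono_right Set.inter_subset_right)
  rw [Set.sdiff_union_self] at hunion
  rw [Set.sdiff_union_inter] at hA
  linarith

lemma union_le (hm : IsMean m) (A B : Set X) : m (A ∪ B) ≤ m A + m B := by
  linarith [hm.union_add_inter A B, hm.nonneg (A ∩ B)]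

lemma map (hm : IsMean m) (f : X → Y) : IsMean (fun A => m (f ⁻¹' A)) where
  nonneg _ := hm.nonneg _
  univ := hm.univ
  union _ _ h := hm.union _ _ (h.preimage f)

lemma biUnion_le (hm : IsMean m) {α : Type*} (s : Finset α) (A : α → Set X) :
    m (⋃ a ∈ s, A a) ≤ ∑ a ∈ s, m (A a) := by
  classical
  induction s using Finset.induction_on with
  | empty => simp [hm.empty]
  | insert a s ha ih =>
    rw [Finset.set_biUnion_insert, Finset.sum_insert ha]
    linarith [hm.union_le (A a) (⋃ x ∈ s, A x)]

lemma card_mul_le_of_inter_le (hm : IsMean m) {α : Type*} (s : Finset α) (A : α → Set X)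
    {c η : ℝ} (hη : 0 ≤ η) (hc : ∀ a ∈ s, c ≤ m (A a))
    (hinter : ∀ a ∈ s, ∀ b ∈ s, a ≠ b → m (A a ∩ A b) ≤ η) :
    s.card * c ≤ m (⋃ a ∈ s, A a) + s.card * s.card * η := by
  classical
  induction s using Finset.induction_on with
  | empty => simp [hm.empty]
  | insert a s ha ih =>
    have hs := ih (fun b hb => hc b (Finset.mem_insert_of_mem hb)) fun b hb d hd =>
      hinter b (Finset.mem_insert_of_mem hb) d (Finset.mem_insert_of_mem hd)
    have hoverlap : m (A a ∩ ⋃ x ∈ s, A x) ≤ s.card * η := by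
      rw [Set.inter_iUnion₂, ← nsmul_eq_mul]
      exact (hm.biUnion_le s _).trans <| Finset.sum_le_card_nsmul _ _ _ fun b hb =>
        hinter a (Finset.mem_insert_self _ _) b (Finset.mem_insert_of_mem hb)
          fun h => ha (h ▸ hb)
    rw [Finset.set_biUnion_insert, Finset.card_insert_of_notMem ha]
    push_cast
    nlinarith [hm.union_add_inter (A a) (⋃ x ∈ s, A x), hc a (Finset.mem_insert_self _ _),
      mul_nonneg (Nat.cast_nonneg (α := ℝ) s.card) hη]

end IsMean

/-- The set function `m` changes by at most `δ` under pullback along `g` on the family `𝓑`. -/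
def AlmostInvariant {X : Type*} (m : Set X → ℝ) (𝓑 : Set (Set X)) (δ : ℝ) (g : X → X) : Prop :=
  ∀ B ∈ 𝓑, |m (g ⁻¹' B) - m B| ≤ δ

namespace AlmostInvariant

variable {X : Type*} {m : Set X → ℝ} {𝓑 : Set (Set X)} {δ δ' : ℝ} {g h : X → X}

lemma mono (hg : AlmostInvariant m 𝓑 δ g) (hδ : δ ≤ δ') : AlmostInvariant m 𝓑 δ' g :=
  fun B hB => (hg B hB).trans hδ

lemma comp (hg : AlmostInvariant m 𝓑 δ g) (hh : AlmostInvariant m 𝓑 δ' h)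
    (h𝓑 : ∀ B ∈ 𝓑, g ⁻¹' B ∈ 𝓑) : AlmostInvariant m 𝓑 (δ + δ') (g ∘ h) := fun B hB => by
  have hgh := abs_add_le (m (g ⁻¹' B) - m B) (m (h ⁻¹' (g ⁻¹' B)) - m (g ⁻¹' B))
  rw [Set.preimage_comp]
  rw [sub_add_sub_cancel'] at hgh
  linarith [hg B hB, hh _ (h𝓑 B hB)]

lemma of_mem_pow {M : Type*} [Monoid M] {a : M → X → X} (hone : a 1 = id)
    (hmul : ∀ s t, a (s * t) = a s ∘ a t) {S : Set M} (h𝓑 : ∀ s ∈ S, ∀ B ∈ 𝓑, a s ⁻¹' B ∈ 𝓑)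
    (hS : ∀ s ∈ S, AlmostInvariant m 𝓑 δ (a s)) (k : ℕ) {s : M} (hs : s ∈ S ^ k) :
    AlmostInvariant m 𝓑 (k * δ) (a s) := by
  induction k generalizing s with
  | zero =>
    obtain rfl : s = 1 := by simpa using hs
    simp [AlmostInvariant, hone]
  | succ k ih =>
    rw [pow_succ'] at hs
    obtain ⟨t, ht, u, hu, rfl⟩ := Set.mem_mul.1 hs
    rw [hmul]
    exact ((hS t ht).comp (ih hu) (h𝓑 t ht)).mono (by push_cast; linarith)

lemma map (hg : AlmostInvariant m 𝓑 δ g) {Y : Type*} {f : X → Y} {𝓒 : Set (Set Y)} {g' : Y → Y}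
    (hf : ∀ C ∈ 𝓒, f ⁻¹' C ∈ 𝓑) (hfg : ∀ C ∈ 𝓒, f ⁻¹' (g' ⁻¹' C) = g ⁻¹' (f ⁻¹' C)) :
    AlmostInvariant (fun C => m (f ⁻¹' C)) 𝓒 δ g' :=
  fun C hC => by simpa only [hfg C hC] using hg _ (hf C hC)

end AlmostInvariant

/-- The subsets of `V` stable under nonzero scalars, which are the sets pulled back from the
projective space of `V` together with a choice of whether they contain `0`. -/
def cones (K V : Type*) [Zero K] [SMul K V] : Set (Set V) :=
  {A | ∀ c : K, c ≠ 0 → ∀ x ∈ A, c • x ∈ A}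

lemma preimage_mem_cones {K ι : Type*} [Field K] [Fintype ι] (M : Matrix ι ι K)
    {B : Set (ι → K)} (hB : B ∈ cones K (ι → K)) : (M *ᵥ ·) ⁻¹' B ∈ cones K (ι → K) :=
  fun c hc x hx => by simpa only [Set.mem_preimage, mulVec_smul] using hB c hc _ hx

lemma almostInvariant_mulVec_of_mem_pow {Γ K ι : Type*} [Monoid Γ] [Field K] [Fintype ι]
    [DecidableEq ι] (ρ : Γ →* Matrix ι ι K) {S : Set Γ} {m : Set (ι → K) → ℝ} {δ : ℝ}
    (h : ∀ s ∈ S, AlmostInvariant m (cones K (ι → K)) δ (ρ s *ᵥ ·)) (k : ℕ) {s : Γ}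
    (hs : s ∈ S ^ k) : AlmostInvariant m (cones K (ι → K)) (k * δ) (ρ s *ᵥ ·) :=
  AlmostInvariant.of_mem_pow (a := fun s => (ρ s *ᵥ ·)) (by funext x; simp)
    (fun s t => by funext x; simp) (fun s _ _ hB => preimage_mem_cones (ρ s) hB) h k hs

section SupNorm

variable {K ι : Type*} [Field K] [Finite ι] (v : AbsoluteValue K ℝ)

/-- The sup norm on `ι → K` attached to an absolute value, which is not an instance since several
absolute values on the same field are in play. -/
noncomputable def supNorm (x : ι → K) : ℝ := ⨆ i, v (x i)

lemma le_supNorm (x : ι → K) (i : ι) : v (x i) ≤ supNorm v x :=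
  le_ciSup (f := fun i => v (x i)) (Set.finite_range _).bddAbove i

omit [Finite ι] in
lemma supNorm_le {x : ι → K} {c : ℝ} (hc : 0 ≤ c) (h : ∀ i, v (x i) ≤ c) : supNorm v x ≤ c :=
  Real.iSup_le h hc

omit [Finite ι] in
lemma supNorm_nonneg (x : ι → K) : 0 ≤ supNorm v x :=
  Real.iSup_nonneg fun _ => v.nonneg _

omit [Finite ι] in
lemma supNorm_smul (c : K) (x : ι → K) : supNorm v (c • x) = v c * supNorm v x := by
  simp only [supNorm, Pi.smul_apply, smul_eq_mul, map_mul, Real.mul_iSup_of_nonneg (v.nonneg c)]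

lemma supNorm_pos {x : ι → K} (hx : x ≠ 0) : 0 < supNorm v x := by
  obtain ⟨i, hi⟩ := Function.ne_iff.1 hx
  exact (v.pos hi).trans_le (le_supNorm v x i)

lemma supNorm_add_le (x y : ι → K) : supNorm v (x + y) ≤ supNorm v x + supNorm v y :=
  supNorm_le v (add_nonneg (supNorm_nonneg v x) (supNorm_nonneg v y)) fun i =>
    (v.add_le _ _).trans (add_le_add (le_supNorm v x i) (le_supNorm v y i))

end SupNorm

section NearKer

variable {K ι : Type*} [Field K] [Fintype ι] (v : AbsoluteValue K ℝ)

lemma abv_dotProduct_le (φ x : ι → K) {c : ℝ} (hφ : ∀ i, v (φ i) ≤ c) :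
    v (φ ⬝ᵥ x) ≤ Fintype.card ι * c * supNorm v x := by
  have hterm : ∀ i ∈ (Finset.univ : Finset ι), v (φ i * x i) ≤ c * supNorm v x := fun i _ => by
    rw [map_mul]
    exact mul_le_mul (hφ i) (le_supNorm v x i) (v.nonneg _) ((v.nonneg _).trans (hφ i))
  refine (v.sum_le _ _).trans ((Finset.sum_le_card_nsmul _ _ _ hterm).trans_eq ?_)
  rw [Finset.card_univ, nsmul_eq_mul, mul_assoc]

lemma supNorm_mulVec_le (M : Matrix ι ι K) (x : ι → K) {c : ℝ} (hc : 0 ≤ c)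
    (hM : ∀ i k, v (M i k) ≤ c) : supNorm v (M *ᵥ x) ≤ Fintype.card ι * c * supNorm v x :=
  supNorm_le v (mul_nonneg (by positivity) (supNorm_nonneg v x)) fun i =>
    abv_dotProduct_le v (M i) x (hM i)

/-- The neighbourhood of relative size `δ` of the hyperplane `φ = 0`. -/
def nearKer (φ : ι → K) (δ : ℝ) : Set (ι → K) :=
  {x | v (φ ⬝ᵥ x) ≤ δ * supNorm v x}

lemma nearKer_mono (φ : ι → K) {δ δ' : ℝ} (h : δ ≤ δ') : nearKer v φ δ ⊆ nearKer v φ δ' :=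
  fun x hx => hx.trans (mul_le_mul_of_nonneg_right h (supNorm_nonneg v x))

lemma nearKer_mem_cones (φ : ι → K) (δ : ℝ) : nearKer v φ δ ∈ cones K (ι → K) := by
  intro c _ x hx
  change v (φ ⬝ᵥ (c • x)) ≤ δ * supNorm v (c • x)
  rw [dotProduct_smul, smul_eq_mul, map_mul, supNorm_smul, mul_left_comm]
  exact mul_le_mul_of_nonneg_left hx (v.nonneg c)

/-- A linear form of sup norm one which has a coefficient equal to one. -/
def IsNormalized (φ : ι → K) : Prop :=
  (∀ i, v (φ i) ≤ 1) ∧ ∃ i, φ i = 1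

omit [Fintype ι] in
lemma isNormalized_inv_smul {φ : ι → K} {k : ι} (hk : 0 < v (φ k))
    (hmax : ∀ i, v (φ i) ≤ v (φ k)) : IsNormalized v ((φ k)⁻¹ • φ) := by
  refine ⟨fun i => ?_, k, inv_mul_cancel₀ (v.pos_iff.1 hk)⟩
  rw [Pi.smul_apply, smul_eq_mul, map_mul, map_inv₀, inv_mul_le_one₀ hk]
  exact hmax i

variable [DecidableEq ι]

lemma one_le_factorial_mul_of_det_eq_one [Nonempty ι] {b : Matrix ι ι K} (hb : b.det = 1) {c : ℝ}
    (hc : 0 ≤ c) (hbc : ∀ i k, v (b i k) ≤ c) : 1 ≤ (Fintype.card ι).factorial * c := by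
  have hdet := Matrix.det_le (abv := v) hbc
  rw [hb, map_one, nsmul_eq_mul] at hdet
  rcases le_total c 1 with hc1 | hc1
  · exact hdet.trans (mul_le_mul_of_nonneg_left (pow_le_of_le_one hc hc1 Fintype.card_ne_zero)
      (by positivity))
  · have : (1 : ℝ) ≤ (Fintype.card ι).factorial := mod_cast Nat.factorial_pos _
    nlinarith

/-- If `x` is far from the kernel of the `i`-th row of `a`, then `a` expands `x` so much that
`x = b (a x)` is negligible compared to `a x`. -/
lemma mem_nearKer_or_mulVec_mem_nearKer {a b : Matrix ι ι K} (hab : b * a = 1) {Q : ℝ}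
    (hQ : 0 < Q) {i k p q : ι} (ha : Q ^ 3 ≤ v (a i k)) (hb : Q⁻¹ ≤ v (b p q)) (x : ι → K) :
    x ∈ nearKer v ((a i k)⁻¹ • a i) Q⁻¹ ∨ a *ᵥ x ∈ nearKer v ((b p q)⁻¹ • b p) Q⁻¹ := by
  rw [or_iff_not_imp_left]
  intro hx
  have hfar : Q⁻¹ * supNorm v x < v (((a i k)⁻¹ • a i) ⬝ᵥ x) := not_le.1 hx
  have hexpand : v (((a i k)⁻¹ • a i) ⬝ᵥ x) ≤ (Q ^ 3)⁻¹ * supNorm v (a *ᵥ x) := by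
    rw [smul_dotProduct, smul_eq_mul, map_mul, map_inv₀]
    exact mul_le_mul (inv_anti₀ (by positivity) ha) (le_supNorm v (a *ᵥ x) i) (v.nonneg _)
      (by positivity)
  have hback : b p ⬝ᵥ (a *ᵥ x) = x p := by
    change (b *ᵥ (a *ᵥ x)) p = x p
    rw [mulVec_mulVec, hab, one_mulVec]
  change v (((b p q)⁻¹ • b p) ⬝ᵥ (a *ᵥ x)) ≤ Q⁻¹ * supNorm v (a *ᵥ x)
  rw [smul_dotProduct, hback, smul_eq_mul, map_mul, map_inv₀]
  calc (v (b p q))⁻¹ * v (x p) ≤ Q * supNorm v x :=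
        mul_le_mul (inv_le_of_inv_le₀ hQ hb) (le_supNorm v x p) (v.nonneg _) hQ.le
    _ = Q ^ 2 * (Q⁻¹ * supNorm v x) := by field_simp
    _ ≤ Q ^ 2 * ((Q ^ 3)⁻¹ * supNorm v (a *ᵥ x)) :=
        mul_le_mul_of_nonneg_left (hfar.le.trans hexpand) (by positivity)
    _ = Q⁻¹ * supNorm v (a *ᵥ x) := by field_simp

lemma exists_normalized_le_mean_nearKer {m : Set (ι → K) → ℝ} (hm : IsMean m)
    {a b : Matrix ι ι K} (hab : b * a = 1) (hb : b.det = 1) {Q : ℝ}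
    (hQ : ((Fintype.card ι).factorial : ℝ) ≤ Q) {i k : ι} (ha : Q ^ 3 ≤ v (a i k))
    (hinv : AlmostInvariant m (cones K (ι → K)) (1 / 3) (a *ᵥ ·)) :
    ∃ φ : ι → K, IsNormalized v φ ∧ 1 / 3 ≤ m (nearKer v φ Q⁻¹) := by
  have : Nonempty ι := ⟨i⟩
  have hQ0 : 0 < Q := lt_of_lt_of_le (mod_cast Nat.factorial_pos _) hQ
  obtain ⟨l, hl⟩ := Finite.exists_max fun l => v (a i l)
  obtain ⟨⟨p, q⟩, hpq⟩ := Finite.exists_max fun p : ι × ι => v (b p.1 p.2)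
  have hbpq : 1 ≤ Q * v (b p q) :=
    (one_le_factorial_mul_of_det_eq_one v hb (v.nonneg _) fun i k => hpq (i, k)).trans
      (mul_le_mul_of_nonneg_right hQ (v.nonneg _))
  have hbQ : Q⁻¹ ≤ v (b p q) := (inv_le_iff_one_le_mul₀' hQ0).2 hbpq
  have hal : Q ^ 3 ≤ v (a i l) := ha.trans (hl k)
  set φ := (a i l)⁻¹ • a i
  set ψ := (b p q)⁻¹ • b p
  have hφ : IsNormalized v φ := isNormalized_inv_smul v ((pow_pos hQ0 3).trans_le hal) hl
  have hψ : IsNormalized v ψ :=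
    isNormalized_inv_smul v ((inv_pos.2 hQ0).trans_le hbQ) fun i => hpq (p, i)
  have hcover : 1 ≤ m (nearKer v φ Q⁻¹) + m ((a *ᵥ ·) ⁻¹' nearKer v ψ Q⁻¹) :=
    calc 1 = m Set.univ := hm.univ.symm
      _ ≤ m (nearKer v φ Q⁻¹ ∪ (a *ᵥ ·) ⁻¹' nearKer v ψ Q⁻¹) :=
          hm.mono fun x _ => mem_nearKer_or_mulVec_mem_nearKer v hab hQ0 hal hbQ x
      _ ≤ _ := hm.union_le _ _
  have hpull := (abs_le.1 (hinv _ (nearKer_mem_cones v ψ Q⁻¹))).2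
  by_cases hmass : 1 / 3 ≤ m (nearKer v φ Q⁻¹)
  · exact ⟨φ, hφ, hmass⟩
  · exact ⟨ψ, hψ, by linarith⟩

end NearKer

open Filter

/-- A sequence of real numbers at least two, against which the growth of sequences is measured. -/
structure GrowthScale where
  toFun : ℕ → ℝ
  two_le : ∀ j, 2 ≤ toFun j

namespace GrowthScale

instance : CoeFun GrowthScale fun _ => ℕ → ℝ := ⟨toFun⟩

variable (R : GrowthScale)

lemma pos (j : ℕ) : 0 < R j := zero_lt_two.trans_le (R.two_le j)

lemma one_le (j : ℕ) : 1 ≤ R j := one_le_two.trans (R.two_le j)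

lemma inv_pow_le_inv_pow {k l : ℕ} (h : k ≤ l) (j : ℕ) : (R j ^ l)⁻¹ ≤ (R j ^ k)⁻¹ :=
  inv_anti₀ (pow_pos (R.pos j) k) (pow_le_pow_right₀ (R.one_le j) h)

lemma two_mul_inv_pow_succ_le (k j : ℕ) : 2 * (R j ^ (k + 1))⁻¹ ≤ (R j ^ k)⁻¹ := by
  have := R.pos j
  rw [pow_succ, mul_inv, mul_left_comm]
  refine mul_le_of_le_one_right (by positivity) ?_
  rw [← div_eq_mul_inv, div_le_one this]
  exact R.two_le j

lemma natCast_le_pow (n j : ℕ) : (n : ℝ) ≤ R j ^ n :=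
  calc (n : ℝ) ≤ 2 ^ n := mod_cast Nat.lt_two_pow_self.le
    _ ≤ R j ^ n := pow_le_pow_left₀ zero_le_two (R.two_le j) n

lemma pow_mul_inv_pow_add (a b j : ℕ) : R j ^ a * (R j ^ (b + a))⁻¹ = (R j ^ b)⁻¹ := by
  have := R.pos j
  rw [pow_add]
  field_simp

lemma two_mul_inv_pow_succ_mul_supNorm_le {K ι : Type*} [Field K] [Finite ι]
    (v : AbsoluteValue K ℝ) (k j : ℕ) (x : ι → K) :
    2 * ((R j ^ (k + 1))⁻¹ * supNorm v x) ≤ (R j ^ k)⁻¹ * supNorm v x := by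
  rw [← mul_assoc]
  exact mul_le_mul_of_nonneg_right (R.two_mul_inv_pow_succ_le k j) (supNorm_nonneg v x)

end GrowthScale

section LimitField

variable {K : Type*} [Field K] (v : AbsoluteValue K ℝ) (R : GrowthScale)

/-- The sequences in `K` which, along a fixed nonprincipal ultrafilter, grow at most like a power of
the scale `R`. -/
def moderate : Subring (ℕ → K) where
  carrier := {x | ∃ k : ℕ, ∀ᶠ j in hyperfilter ℕ, v (x j) ≤ R j ^ k}
  mul_mem' := by
    rintro a b ⟨k, hk⟩ ⟨l, hl⟩
    refine ⟨k + l, ?_⟩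
    filter_upwards [hk, hl] with j hkj hlj
    rw [Pi.mul_apply, map_mul, pow_add]
    exact mul_le_mul hkj hlj (v.nonneg _) (pow_pos (R.pos j) k).le
  one_mem' := ⟨0, by simp⟩
  add_mem' := by
    rintro a b ⟨k, hk⟩ ⟨l, hl⟩
    refine ⟨k + l + 1, ?_⟩
    filter_upwards [hk, hl] with j hkj hlj
    have hkl : R j ^ k ≤ R j ^ (k + l) := pow_le_pow_right₀ (R.one_le j) (Nat.le_add_right k l)
    have hlk : R j ^ l ≤ R j ^ (k + l) := pow_le_pow_right₀ (R.one_le j) (Nat.le_add_left l k)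
    have htwo := mul_le_mul_of_nonneg_left (R.two_le j) (pow_pos (R.pos j) (k + l)).le
    rw [pow_succ]
    exact (v.add_le _ _).trans (by linarith)
  zero_mem' := ⟨0, by simp⟩
  neg_mem' := by
    rintro a ⟨k, hk⟩
    exact ⟨k, by simpa using hk⟩

/-- The sequences which, along the ultrafilter, decay faster than every power of the scale. -/
def infinitesimal : Ideal (moderate v R) where
  carrier := {x | ∀ k : ℕ, ∀ᶠ j in hyperfilter ℕ, v (x.1 j) ≤ (R j ^ k)⁻¹}
  add_mem' {a b} ha hb k := by
    filter_upwards [ha (k + 1), hb (k + 1)] with j haj hbj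
    exact (v.add_le _ _).trans (by linarith [R.two_mul_inv_pow_succ_le k j])
  zero_mem' k := by
    filter_upwards with j
    simpa using (pow_pos (R.pos j) k).le
  smul_mem' := by
    rintro ⟨c, l, hc⟩ x hx k
    filter_upwards [hc, hx (k + l)] with j hcj hxj
    change v (c j * x.1 j) ≤ _
    rw [map_mul, ← R.pow_mul_inv_pow_add l k j]
    exact mul_le_mul hcj hxj (v.nonneg _) (pow_pos (R.pos j) l).le

/-- A moderate sequence which is not infinitesimal is bounded below by a power of the scale because
the filter is an ultrafilter, hence it has a moderate inverse. -/
instance : (infinitesimal v R).IsMaximal := by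
  refine Ideal.isMaximal_iff.2 ⟨fun hone => ?_, fun J x hJ hx hxJ => ?_⟩
  · obtain ⟨j, hj⟩ := (hone 1).exists
    rw [OneMemClass.coe_one, Pi.one_apply, map_one, pow_one] at hj
    have := inv_anti₀ zero_lt_two (R.two_le j)
    norm_num at this
    linarith
  · obtain ⟨k, hk⟩ : ∃ k : ℕ, ∀ᶠ j in hyperfilter ℕ, (R j ^ k)⁻¹ < v (x.1 j) := by
      by_contra! hcon
      exact hx hcon
    let y : moderate v R := ⟨fun j => (x.1 j)⁻¹, k, by
      filter_upwards [hk] with j hj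
      rw [map_inv₀]
      exact inv_le_of_inv_le₀ (pow_pos (R.pos j) k) hj.le⟩
    have hyx : y * x - 1 ∈ infinitesimal v R := fun l => by
      filter_upwards [hk] with j hj
      have hxj : x.1 j ≠ 0 := v.pos_iff.1 ((inv_pos.2 (pow_pos (R.pos j) k)).trans hj)
      change v ((x.1 j)⁻¹ * x.1 j - 1) ≤ _
      rw [inv_mul_cancel₀ hxj, sub_self, map_zero]
      exact (inv_pos.2 (pow_pos (R.pos j) l)).le
    simpa using J.sub_mem (J.mul_mem_left y hxJ) (hJ hyx)

/-- The field of moderate sequences modulo infinitesimal ones. -/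
def LimitField : Type _ := moderate v R ⧸ infinitesimal v R

noncomputable instance : Field (LimitField v R) :=
  letI := Ideal.Quotient.field (infinitesimal v R)
  inferInstanceAs (Field (moderate v R ⧸ infinitesimal v R))

/-- The class of a moderate sequence in the limit field. -/
noncomputable def residue : moderate v R →+* LimitField v R := Ideal.Quotient.mk _

/-- The `j`-th term of a moderate sequence. -/
def evalAt (j : ℕ) : moderate v R →+* K :=
  (Pi.evalRingHom (fun _ => K) j).comp (moderate v R).subtype

variable {v R}

lemma residue_surjective : Function.Surjective (residue v R) := Ideal.Quotient.mk_surjective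

lemma residue_eq_zero_iff {x : moderate v R} :
    residue v R x = 0 ↔ ∀ k : ℕ, ∀ᶠ j in hyperfilter ℕ, v (evalAt v R j x) ≤ (R j ^ k)⁻¹ :=
  Ideal.Quotient.eq_zero_iff_mem

lemma exists_forall_abv_evalAt_le {ι : Type*} [Finite ι] (b : ι → moderate v R) :
    ∃ e : ℕ, ∀ᶠ j in hyperfilter ℕ, ∀ i, v (evalAt v R j (b i)) ≤ R j ^ e := by
  have := Fintype.ofFinite ι
  choose e he using fun i => (b i).2
  refine ⟨∑ i, e i, eventually_all.2 fun i => ?_⟩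
  filter_upwards [he i] with j hj
  exact hj.trans (pow_le_pow_right₀ (R.one_le j)
    (Finset.single_le_sum (fun _ _ => Nat.zero_le _) (Finset.mem_univ i)))

lemma exists_residue_comp_eq {ι : Type*} (w : ι → LimitField v R) :
    ∃ f : ι → moderate v R, residue v R ∘ f = w :=
  residue_surjective.comp_left w

end LimitField

section Forms

variable {K ι : Type*} [Field K] [Fintype ι] {v : AbsoluteValue K ℝ} {R : GrowthScale}

lemma eventually_abv_dotProduct_le_of_residue_eq_zero {f : ι → moderate v R}
    (hf : residue v R ∘ f = 0) (k : ℕ) :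
    ∀ᶠ j in hyperfilter ℕ, ∀ x, v ((evalAt v R j ∘ f) ⬝ᵥ x) ≤ (R j ^ k)⁻¹ * supNorm v x := by
  have hcoeff : ∀ᶠ j in hyperfilter ℕ, ∀ i,
      v (evalAt v R j (f i)) ≤ (R j ^ (k + Fintype.card ι))⁻¹ :=
    eventually_all.2 fun i => residue_eq_zero_iff.1 (congrFun hf i) _
  filter_upwards [hcoeff] with j hj x
  have := R.pos j
  refine (abv_dotProduct_le v _ x hj).trans (mul_le_mul_of_nonneg_right ?_ (supNorm_nonneg v x))
  rw [← R.pow_mul_inv_pow_add (Fintype.card ι) k j]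
  exact mul_le_mul_of_nonneg_right (R.natCast_le_pow _ j) (by positivity)

lemma eventually_abv_dotProduct_le_of_residue_eq {f g : ι → moderate v R}
    (hfg : residue v R ∘ f = residue v R ∘ g) (k : ℕ) :
    ∀ᶠ j in hyperfilter ℕ, ∀ x, v ((evalAt v R j ∘ f) ⬝ᵥ x) ≤
      v ((evalAt v R j ∘ g) ⬝ᵥ x) + (R j ^ k)⁻¹ * supNorm v x := by
  have hsub : residue v R ∘ (f - g) = 0 := by
    funext i
    simpa [sub_eq_zero] using congrFun hfg i
  filter_upwards [eventually_abv_dotProduct_le_of_residue_eq_zero hsub k] with j hj x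
  have hsplit : evalAt v R j ∘ f = evalAt v R j ∘ g + evalAt v R j ∘ (f - g) := by
    funext i
    simp
  rw [hsplit, add_dotProduct]
  exact (v.add_le _ _).trans (by linarith [hj x])

variable (v R) in
/-- The points at which all forms of the family `F`, evaluated at `j`, are of size at most
`R j ^ (-k)`. -/
def nearKernel (F : Set (ι → moderate v R)) (k j : ℕ) : Set (ι → K) :=
  ⋂ f ∈ F, nearKer v (evalAt v R j ∘ f) (R j ^ k)⁻¹

lemma mem_nearKernel {F : Set (ι → moderate v R)} {k j : ℕ} {x : ι → K} :
    x ∈ nearKernel v R F k j ↔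
      ∀ f ∈ F, v ((evalAt v R j ∘ f) ⬝ᵥ x) ≤ (R j ^ k)⁻¹ * supNorm v x :=
  Set.mem_iInter₂

lemma nearKernel_mem_cones (F : Set (ι → moderate v R)) (k j : ℕ) :
    nearKernel v R F k j ∈ cones K (ι → K) := fun c hc x hx =>
  Set.mem_iInter₂.2 fun f hf => nearKer_mem_cones v _ _ c hc x (Set.mem_iInter₂.1 hx f hf)

lemma nearKernel_anti {k l : ℕ} (h : k ≤ l) (F : Set (ι → moderate v R)) (j : ℕ) :
    nearKernel v R F l j ⊆ nearKernel v R F k j :=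
  Set.iInter₂_mono fun _ _ => nearKer_mono v _ (R.inv_pow_le_inv_pow h j)

lemma nearKernel_union (F G : Set (ι → moderate v R)) (k j : ℕ) :
    nearKernel v R (F ∪ G) k j = nearKernel v R F k j ∩ nearKernel v R G k j :=
  Set.biInter_union F G _

/-- The form `f` is as small as desired on the points where the forms of `G` are small enough. -/
def ControlledBy (G : Set (ι → moderate v R)) (f : ι → moderate v R) : Prop :=
  ∀ k, ∃ k', ∀ᶠ j in hyperfilter ℕ, ∀ x ∈ nearKernel v R G k' j,
    v ((evalAt v R j ∘ f) ⬝ᵥ x) ≤ (R j ^ k)⁻¹ * supNorm v x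

namespace ControlledBy

variable {G : Set (ι → moderate v R)} {f g : ι → moderate v R}

lemma of_mem (hf : f ∈ G) : ControlledBy G f := fun k =>
  ⟨k, Eventually.of_forall fun _ _ hx => mem_nearKernel.1 hx f hf⟩

lemma zero : ControlledBy G 0 := fun k => ⟨0, by
  filter_upwards [eventually_abv_dotProduct_le_of_residue_eq_zero (f := (0 : ι → moderate v R))
    (by funext i; simp) k] with j hj x _ using hj x⟩

lemma add (hf : ControlledBy G f) (hg : ControlledBy G g) : ControlledBy G (f + g) := by
  intro k
  obtain ⟨k₁, hk₁⟩ := hf (k + 1)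
  obtain ⟨k₂, hk₂⟩ := hg (k + 1)
  refine ⟨max k₁ k₂, ?_⟩
  filter_upwards [hk₁, hk₂] with j hj₁ hj₂ x hx
  have hx₁ := hj₁ x (nearKernel_anti (le_max_left k₁ k₂) G j hx)
  have hx₂ := hj₂ x (nearKernel_anti (le_max_right k₁ k₂) G j hx)
  have hsplit : evalAt v R j ∘ (f + g) = evalAt v R j ∘ f + evalAt v R j ∘ g := by
    funext i
    simp
  rw [hsplit, add_dotProduct]
  exact (v.add_le _ _).trans (by linarith [R.two_mul_inv_pow_succ_mul_supNorm_le v k j x])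

lemma smul (hf : ControlledBy G f) (b : moderate v R) : ControlledBy G (b • f) := by
  intro k
  obtain ⟨e, he⟩ := b.2
  obtain ⟨l, hl⟩ := hf (k + e)
  refine ⟨l, ?_⟩
  filter_upwards [hl, he] with j hlj hbj x hx
  have hfx := mul_le_mul hbj (hlj x hx) (v.nonneg _) (pow_pos (R.pos j) e).le
  have hbx : (evalAt v R j ∘ (b • f)) ⬝ᵥ x = b.1 j * ((evalAt v R j ∘ f) ⬝ᵥ x) := by
    rw [← smul_eq_mul, ← smul_dotProduct]
    rfl
  rwa [hbx, map_mul, ← R.pow_mul_inv_pow_add e k, mul_assoc]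

lemma congr (hg : ControlledBy G g) (hfg : residue v R ∘ f = residue v R ∘ g) :
    ControlledBy G f := by
  intro k
  obtain ⟨l, hl⟩ := hg (k + 1)
  refine ⟨l, ?_⟩
  filter_upwards [hl, eventually_abv_dotProduct_le_of_residue_eq hfg (k + 1)] with j hlj hj x hx
  linarith [hj x, hlj x hx, R.two_mul_inv_pow_succ_mul_supNorm_le v k j x]

lemma of_mem_span (hf : residue v R ∘ f ∈
    Submodule.span (LimitField v R) ((residue v R ∘ ·) '' G)) : ControlledBy G f := by
  suffices h : ∀ w ∈ Submodule.span (LimitField v R) ((residue v R ∘ ·) '' G),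
      ∃ g, residue v R ∘ g = w ∧ ControlledBy G g by
    obtain ⟨g, hgf, hg⟩ := h _ hf
    exact hg.congr hgf.symm
  intro w hw
  induction hw using Submodule.span_induction with
  | mem w hw =>
    obtain ⟨g, hg, rfl⟩ := hw
    exact ⟨g, rfl, of_mem hg⟩
  | zero => exact ⟨0, by funext i; simp, zero⟩
  | add _ _ _ _ ih₁ ih₂ =>
    obtain ⟨f₁, rfl, h₁⟩ := ih₁
    obtain ⟨f₂, rfl, h₂⟩ := ih₂
    exact ⟨f₁ + f₂, by funext i; simp, h₁.add h₂⟩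
  | smul c _ _ ih =>
    obtain ⟨b, rfl⟩ := residue_surjective c
    obtain ⟨g, rfl, hg⟩ := ih
    exact ⟨b • g, by funext i; simp, hg.smul b⟩

end ControlledBy

lemma exists_nearKernel_subset {G F : Set (ι → moderate v R)} (hF : F.Finite)
    (h : ∀ f ∈ F, residue v R ∘ f ∈ Submodule.span (LimitField v R) ((residue v R ∘ ·) '' G))
    (k : ℕ) : ∃ k', ∀ᶠ j in hyperfilter ℕ, nearKernel v R G k' j ⊆ nearKernel v R F k j := by
  induction F, hF using Set.Finite.induction_on with
  | empty => exact ⟨0, by simp [nearKernel]⟩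
  | @insert f F _ _ ih =>
    obtain ⟨k₁, hk₁⟩ := ih fun g hg => h g (Set.mem_insert_of_mem _ hg)
    obtain ⟨k₂, hk₂⟩ := ControlledBy.of_mem_span (h f (Set.mem_insert _ _)) k
    refine ⟨max k₁ k₂, ?_⟩
    filter_upwards [hk₁, hk₂] with j hj₁ hj₂ x hx
    refine mem_nearKernel.2 (Set.forall_mem_insert.2 ⟨?_, ?_⟩)
    · exact hj₂ x (nearKernel_anti (le_max_right k₁ k₂) G j hx)
    · exact mem_nearKernel.1 (hj₁ (nearKernel_anti (le_max_left k₁ k₂) G j hx))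

end Forms

open Filter

section Mass

variable {K ι : Type*} [Field K] [Fintype ι] {v : AbsoluteValue K ℝ} {R : GrowthScale}
  {m : ℕ → Set (ι → K) → ℝ} {c : ℝ}

variable (v R) in
/-- The means `m j` asymptotically give mass at least `c` to the points at which the forms
of `W`, a space of forms over the limit field, nearly vanish. -/
def HasMass (m : ℕ → Set (ι → K) → ℝ) (c : ℝ)
    (W : Submodule (LimitField v R) (ι → LimitField v R)) : Prop :=
  ∀ F : Set (ι → moderate v R), F.Finite → (∀ f ∈ F, residue v R ∘ f ∈ W) → ∀ k : ℕ, ∀ c' < c,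
    ∀ᶠ j in hyperfilter ℕ, c' ≤ m j (nearKernel v R F k j)

lemma hasMass_span_singleton (hm : ∀ j, IsMean (m j)) (f : ι → moderate v R)
    (h : ∀ k : ℕ, ∀ c' < c, ∀ᶠ j in hyperfilter ℕ, c' ≤ m j (nearKernel v R {f} k j)) :
    HasMass v R m c (Submodule.span _ {residue v R ∘ f}) := by
  intro F hF hFW k c' hc'
  obtain ⟨k', hk'⟩ := exists_nearKernel_subset (G := {f}) hF (by simpa using hFW) k
  filter_upwards [hk', h k' c' hc'] with j hsub hj
  exact hj.trans ((hm j).mono hsub)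

lemma exists_mulVec_preimage_nearKernel_subset {F : Set (ι → moderate v R)} (hF : F.Finite)
    (M : Matrix ι ι (moderate v R)) {w : (ι → moderate v R) → ι → moderate v R}
    (hw : ∀ f ∈ F, residue v R ∘ f = residue v R ∘ (w f ᵥ* M)) (k : ℕ) :
    ∃ k', ∀ᶠ j in hyperfilter ℕ,
      (M.map (evalAt v R j) *ᵥ ·) ⁻¹' nearKernel v R (w '' F) k' j ⊆ nearKernel v R F k j := by
  obtain ⟨e, he⟩ := exists_forall_abv_evalAt_le fun p : ι × ι => M p.1 p.2
  have hnear : ∀ᶠ j in hyperfilter ℕ, ∀ f ∈ F, ∀ x, v ((evalAt v R j ∘ f) ⬝ᵥ x) ≤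
      v ((evalAt v R j ∘ (w f ᵥ* M)) ⬝ᵥ x) + (R j ^ (k + 1))⁻¹ * supNorm v x :=
    (eventually_all_finite hF).2 fun f hf =>
      eventually_abv_dotProduct_le_of_residue_eq (hw f hf) (k + 1)
  refine ⟨k + 1 + (Fintype.card ι + e), ?_⟩
  filter_upwards [hnear, he] with j hj hM x hx
  refine mem_nearKernel.2 fun f hf => ?_
  have hR := R.pos j
  have hvecMul : evalAt v R j ∘ (w f ᵥ* M) = (evalAt v R j ∘ w f) ᵥ* M.map (evalAt v R j) :=
    funext fun i => RingHom.map_vecMul (evalAt v R j) M (w f) i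
  have hfx := hj f hf x
  rw [hvecMul, ← dotProduct_mulVec] at hfx
  have hMx : supNorm v (M.map (evalAt v R j) *ᵥ x) ≤
      R j ^ (Fintype.card ι + e) * supNorm v x := by
    refine (supNorm_mulVec_le v _ x (pow_pos hR e).le fun i l => hM (i, l)).trans ?_
    rw [pow_add]
    gcongr
    · exact supNorm_nonneg v x
    · exact R.natCast_le_pow _ j
  have hwx := (mem_nearKernel.1 hx (w f) (Set.mem_image_of_mem w hf)).trans
    (mul_le_mul_of_nonneg_left hMx (by positivity))
  rw [← mul_assoc, mul_comm _ (R j ^ _), R.pow_mul_inv_pow_add] at hwx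
  linarith [R.two_mul_inv_pow_succ_mul_supNorm_le v k j x]

lemma HasMass.map_vecMulLinear {W : Submodule (LimitField v R) (ι → LimitField v R)}
    (hW : HasMass v R m c W) (hm : ∀ j, IsMean (m j)) (M : Matrix ι ι (moderate v R))
    (hM : ∀ δ > 0, ∀ᶠ j in hyperfilter ℕ,
      AlmostInvariant (m j) (cones K (ι → K)) δ (M.map (evalAt v R j) *ᵥ ·)) :
    HasMass v R m c (W.map (M.map (residue v R)).vecMulLinear) := by
  intro F hF hFW k c' hc'
  have hlift : ∀ f ∈ F, ∃ w : ι → moderate v R, residue v R ∘ w ∈ W ∧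
      residue v R ∘ f = residue v R ∘ (w ᵥ* M) := fun f hf => by
    obtain ⟨w, hw, hwf⟩ := hFW f hf
    obtain ⟨w, rfl⟩ := exists_residue_comp_eq w
    exact ⟨w, hw, hwf ▸ funext fun i => (RingHom.map_vecMul (residue v R) M w i).symm⟩
  choose! w hwW hwM using hlift
  obtain ⟨k', hk'⟩ := exists_mulVec_preimage_nearKernel_subset hF M hwM k
  obtain ⟨c'', hc', hc''⟩ := exists_between hc'
  filter_upwards [hk', hM (c'' - c') (sub_pos.2 hc'),
    hW (w '' F) (hF.image w) (Set.forall_mem_image.2 hwW) k' c'' hc''] with j hsub hinv hmass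
  have hdiff := abs_le.1 (hinv _ (nearKernel_mem_cones (w '' F) k' j))
  linarith [(hm j).mono hsub, hdiff.1]

lemma not_hasMass_top (hm : ∀ j, IsMean (m j)) (hm0 : ∀ j, m j {0} = 0)
    (hc : 0 < c) : ¬ HasMass v R m c ⊤ := by
  classical
  intro h
  obtain ⟨j, hj⟩ := (h (Set.range fun i : ι => Pi.single i (1 : moderate v R)) (Set.finite_range _)
    (fun _ _ => Submodule.mem_top) 1 (c / 2) (half_lt_self hc)).exists
  have hzero :
      nearKernel v R (Set.range fun i : ι => Pi.single i (1 : moderate v R)) 1 j ⊆ {0} := by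
    intro x hx
    have hcoord (i : ι) : v (x i) ≤ 2⁻¹ * supNorm v x := by
      have hi := mem_nearKernel.1 hx _ (Set.mem_range_self i)
      have heval : evalAt v R j ∘ Pi.single i (1 : moderate v R) = Pi.single i 1 := by
        funext l
        rw [Function.comp_apply, Pi.apply_single (fun _ => evalAt v R j) (fun _ => map_zero _),
          map_one]
      rw [heval, single_one_dotProduct, pow_one] at hi
      exact hi.trans (mul_le_mul_of_nonneg_right (inv_anti₀ zero_lt_two (R.two_le j))
        (supNorm_nonneg v x))
    have hnorm := supNorm_le v (mul_nonneg (by norm_num) (supNorm_nonneg v x)) hcoord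
    by_contra hx0
    linarith [supNorm_pos v hx0]
  linarith [(hm j).mono hzero, hm0 j]

omit [Fintype ι] in
lemma exists_finite_span_residue_eq [Finite ι]
    (W : Submodule (LimitField v R) (ι → LimitField v R)) :
    ∃ G : Set (ι → moderate v R), G.Finite ∧ Submodule.span _ ((residue v R ∘ ·) '' G) = W := by
  obtain ⟨t, ht⟩ := IsNoetherian.noetherian W
  obtain ⟨g, hg⟩ := (residue_surjective (v := v) (R := R)).comp_left (α := ι).hasRightInverse
  refine ⟨g '' t, t.finite_toSet.image g, ?_⟩
  rw [← Set.image_comp, Function.RightInverse.comp_eq_id hg, Set.image_id, ht]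

lemma exists_eventually_inter_nearKernel_le (hm : ∀ j, IsMean (m j))
    {G₁ G₂ : Set (ι → moderate v R)}
    (h : ¬ HasMass v R m c (Submodule.span _ ((residue v R ∘ ·) '' G₁) ⊔
      Submodule.span _ ((residue v R ∘ ·) '' G₂))) :
    ∃ k, ∀ᶠ j in hyperfilter ℕ, m j (nearKernel v R G₁ k j ∩ nearKernel v R G₂ k j) ≤ c := by
  rw [← Submodule.span_union, ← Set.image_union] at h
  simp only [HasMass, not_forall] at h
  obtain ⟨F, hF, hFG, k, c', hc', hmass⟩ := h
  obtain ⟨k', hk'⟩ := exists_nearKernel_subset hF hFG k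
  refine ⟨k', ?_⟩
  filter_upwards [hk', Ultrafilter.eventually_not.2 hmass] with j hsub hj
  rw [nearKernel_union] at hsub
  linarith [(hm j).mono hsub]

/-- Two such subspaces span a subspace of larger rank, which has no mass, so the corresponding
neighbourhoods are almost disjoint. -/
lemma card_le_of_hasMass_of_finrank_eq (hm : ∀ j, IsMean (m j)) (hc : 0 < c) {r : ℕ}
    (hr : ∀ W, (∃ c' > 0, HasMass v R m c' W) → Module.finrank (LimitField v R) W ≤ r)
    (s : Finset (Submodule (LimitField v R) (ι → LimitField v R)))
    (hs : ∀ W ∈ s, HasMass v R m c W ∧ Module.finrank (LimitField v R) W = r) :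
    s.card ≤ 4 / c := by
  choose G hGfin hG using exists_finite_span_residue_eq (v := v) (R := R) (ι := ι)
  by_contra! hcard
  have hpos : (0 : ℝ) < s.card := lt_trans (by positivity) hcard
  set η : ℝ := 1 / (s.card * s.card) with hη
  have hη0 : 0 < η := by positivity
  have hpair : ∀ W₁ ∈ s, ∀ W₂ ∈ s, W₁ ≠ W₂ → ∃ k, ∀ᶠ j in hyperfilter ℕ,
      m j (nearKernel v R (G W₁) k j ∩ nearKernel v R (G W₂) k j) ≤ η := by
    intro W₁ h₁ W₂ h₂ hne
    refine exists_eventually_inter_nearKernel_le hm fun hmass => hne ?_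
    rw [hG, hG] at hmass
    have hle := hr _ ⟨η, hη0, hmass⟩
    exact (Submodule.eq_of_le_of_finrank_le le_sup_left (hle.trans_eq (hs W₁ h₁).2.symm)).trans
      (Submodule.eq_of_le_of_finrank_le le_sup_right (hle.trans_eq (hs W₂ h₂).2.symm)).symm
  choose! l hl using hpair
  set k := s.sup fun W₁ => s.sup (l W₁)
  have hinter : ∀ᶠ j in hyperfilter ℕ, ∀ W₁ ∈ s, ∀ W₂ ∈ s, W₁ ≠ W₂ →
      m j (nearKernel v R (G W₁) k j ∩ nearKernel v R (G W₂) k j) ≤ η := by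
    simp only [eventually_all_finset, eventually_imp_distrib_left]
    intro W₁ h₁ W₂ h₂ hne
    have hlk : l W₁ W₂ ≤ k :=
      (Finset.le_sup h₂).trans (Finset.le_sup (f := fun W => s.sup (l W)) h₁)
    filter_upwards [hl W₁ h₁ W₂ h₂ hne] with j hj
    exact ((hm j).mono
      (Set.inter_subset_inter (nearKernel_anti hlk _ j) (nearKernel_anti hlk _ j))).trans hj
  have hmass : ∀ᶠ j in hyperfilter ℕ, ∀ W ∈ s, c / 2 ≤ m j (nearKernel v R (G W) k j) :=
    (eventually_all_finset s).2 fun W hW => (hs W hW).1 (G W) (hGfin W)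
      (fun f hf => (hG W).le (Submodule.subset_span (Set.mem_image_of_mem _ hf))) k _
      (half_lt_self hc)
  obtain ⟨j, hj₁, hj₂⟩ := (hinter.and hmass).exists
  have hbound := (hm j).card_mul_le_of_inter_le s _ hη0.le hj₂ hj₁
  have hone : (s.card : ℝ) * s.card * η = 1 := mul_one_div_cancel (by positivity)
  rw [div_lt_iff₀ hc] at hcard
  linarith [(hm j).le_one (⋃ W ∈ s, nearKernel v R (G W) k j)]

end Mass

/-- A symmetric generating set of a group which contains the identity. -/
structure IsSymmGen {G : Type*} [Group G] (S : Set G) : Prop where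
  one_mem : 1 ∈ S
  inv_mem : ∀ s ∈ S, s⁻¹ ∈ S
  closure_eq : Subgroup.closure S = ⊤

namespace IsSymmGen

variable {G : Type*} [Group G] {S : Set G}

lemma inv_mem_pow (hS : IsSymmGen S) {k : ℕ} {g : G} (hg : g ∈ S ^ k) : g⁻¹ ∈ S ^ k := by
  have hinv : S⁻¹ = S := Set.ext fun s =>
    ⟨fun hs => inv_inv s ▸ hS.inv_mem _ (Set.mem_inv.1 hs), fun hs => hS.inv_mem s hs⟩
  rwa [← Set.mem_inv, ← inv_pow, hinv]

lemma pow_subset_pow (hS : IsSymmGen S) {k l : ℕ} (h : k ≤ l) : S ^ k ⊆ S ^ l :=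
  Set.pow_subset_pow_right hS.one_mem h

lemma pow (hS : IsSymmGen S) {k : ℕ} (hk : 0 < k) : IsSymmGen (S ^ k) where
  one_mem := Set.one_mem_pow hS.one_mem
  inv_mem _ := hS.inv_mem_pow
  closure_eq := top_unique <| hS.closure_eq.ge.trans <| Subgroup.closure_mono <| by
    simpa using hS.pow_subset_pow hk

lemma exists_mul_mul_inv_mem (hS : IsSymmGen S) {H : Subgroup G} {α : Type*} (h : α → G) (a₀ : α)
    (hH : ∀ a, ∀ s ∈ S, ∃ b, h a * s * (h b)⁻¹ ∈ H) (g : G) : ∃ b, h a₀ * g * (h b)⁻¹ ∈ H := by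
  have hg : g ∈ Subgroup.closure S := hS.closure_eq ▸ Subgroup.mem_top g
  have hstep (g s : G) (hs : s ∈ S) (hg : ∃ b, h a₀ * g * (h b)⁻¹ ∈ H) :
      ∃ b, h a₀ * (g * s) * (h b)⁻¹ ∈ H := by
    obtain ⟨b, hb⟩ := hg
    obtain ⟨c, hc⟩ := hH b s hs
    exact ⟨c, by simpa [mul_assoc] using H.mul_mem hb hc⟩
  induction hg using Subgroup.closure_induction_right with
  | one => exact ⟨a₀, by simp⟩
  | mul_right g _ s hs ih => exact hstep g s hs ih
  | mul_inv_cancel g _ s hs ih => exact hstep g s⁻¹ (hS.inv_mem s hs) ih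

lemma finiteIndex_of_forall_mul_mem (hS : IsSymmGen S) {H : Subgroup G} {α : Type*} [Finite α]
    (h : α → G) (a₀ : α) (hH : ∀ a, ∀ s ∈ S, ∃ b, h a * s * (h b)⁻¹ ∈ H) : H.FiniteIndex := by
  have hsurj : Function.Surjective fun b => (QuotientGroup.mk (h b)⁻¹ : G ⧸ H) := fun x => by
    obtain ⟨g, rfl⟩ := QuotientGroup.mk_surjective x
    obtain ⟨b, hb⟩ := hS.exists_mul_mul_inv_mem h a₀ hH ((h a₀)⁻¹ * g⁻¹)
    exact ⟨b, (QuotientGroup.eq.2 (by simpa using hb)).symm⟩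
  have := Finite.of_surjective _ hsurj
  exact Subgroup.finiteIndex_of_finite_quotient

end IsSymmGen

section LinearAlgebra

variable {k ι : Type*} [Field k]

lemma exists_linearIndependent_of_span_eq_top {M : Type*} [AddCommGroup M] [Module k M] [Finite ι]
    [FiniteDimensional k M] (hcard : Module.finrank k M = Nat.card ι) {s : Set M}
    (hs : Submodule.span k s = ⊤) : ∃ w : ι → M, (∀ i, w i ∈ s) ∧ LinearIndependent k w := by
  obtain ⟨b, hbs, hspan, hb⟩ := exists_linearIndependent k s
  let B := Module.Basis.mk hb (by rw [Subtype.range_coe, hspan, hs])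
  have : Finite b := Module.Finite.finite_basis B
  have hbι : Nat.card ι = Nat.card b := by rw [← hcard, Module.finrank_eq_nat_card_basis B]
  obtain ⟨e⟩ := Finite.card_eq.1 hbι
  exact ⟨fun i => e i, fun i => hbs (e i).2, hb.comp e e.injective⟩

section Span

variable {G A : Type*} [Group G] [Ring A] [Algebra k A] [FiniteDimensional k A] (f : G →* A)

lemma map_mul_mem_of_mem_closure {Z : Set G} {U : Submodule k A}
    (hU : ∀ z ∈ Z, ∀ x ∈ U, f z * x ∈ U) {g : G} (hg : g ∈ Subgroup.closure Z) :
    ∀ x ∈ U, f g * x ∈ U := by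
  induction hg using Subgroup.closure_induction with
  | mem z hz => exact hU z hz
  | one => simp
  | mul g h _ _ ihg ihh => exact fun x hx => by rw [map_mul, mul_assoc]; exact ihg _ (ihh x hx)
  | inv g _ ih =>
    intro x hx
    have hinj : Function.Injective ((LinearMap.mulLeft k (f g)).restrict ih) := fun y z hyz =>
      Subtype.ext (((Group.isUnit g).map f).mul_left_cancel (congrArg Subtype.val hyz))
    obtain ⟨⟨y, hy⟩, hyx⟩ := LinearMap.injective_iff_surjective.1 hinj ⟨x, hx⟩
    have hyx' : f g * y = x := congrArg Subtype.val hyx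
    rwa [← hyx', ← mul_assoc, ← map_mul, inv_mul_cancel, map_one, one_mul]

lemma span_image_pow_eq_top_of_span_succ_le {Z : Set G} (hZ : 1 ∈ Z)
    (hspan : Submodule.span k (f '' (Subgroup.closure Z : Set G)) = ⊤) {d : ℕ}
    (hd : Submodule.span k (f '' (Z ^ (d + 1))) ≤ Submodule.span k (f '' (Z ^ d))) :
    Submodule.span k (f '' (Z ^ d)) = ⊤ := by
  set U := Submodule.span k (f '' (Z ^ d))
  have hstable (z : G) (hz : z ∈ Z) (x : A) (hx : x ∈ U) : f z * x ∈ U := by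
    have hle : U ≤ (Submodule.span k (f '' (Z ^ (d + 1)))).comap (LinearMap.mulLeft k (f z)) := by
      refine Submodule.span_le.2 ?_
      rintro _ ⟨g, hg, rfl⟩
      exact Submodule.subset_span ⟨z * g, pow_succ' Z d ▸ Set.mul_mem_mul hz hg, map_mul f z g⟩
    exact hd (hle hx)
  rw [eq_top_iff, ← hspan, Submodule.span_le]
  rintro _ ⟨g, hg, rfl⟩
  simpa using map_mul_mem_of_mem_closure f hstable hg 1
    (Submodule.subset_span ⟨1, Set.one_mem_pow hZ, map_one f⟩)

lemma span_image_pow_eq_top {Z : Set G} (hZ : 1 ∈ Z)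
    (hspan : Submodule.span k (f '' (Subgroup.closure Z : Set G)) = ⊤) :
    Submodule.span k (f '' (Z ^ Module.finrank k A)) = ⊤ := by
  have hmono : Monotone fun d => Submodule.span k (f '' (Z ^ d)) := fun _ _ h =>
    Submodule.span_mono (Set.image_mono (Set.pow_subset_pow_right hZ h))
  have hgrow (d : ℕ) : Submodule.span k (f '' (Z ^ d)) = ⊤ ∨
      d ≤ Module.finrank k (Submodule.span k (f '' (Z ^ d))) := by
    induction d with
    | zero => exact Or.inr (Nat.zero_le _)
    | succ d ih =>
      by_cases hd : Submodule.span k (f '' (Z ^ (d + 1))) ≤ Submodule.span k (f '' (Z ^ d))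
      · have htop := span_image_pow_eq_top_of_span_succ_le f hZ hspan hd
        exact Or.inl (top_unique (htop.symm.le.trans (hmono d.le_succ)))
      · refine ih.imp (fun h => absurd (le_top.trans_eq h.symm) hd) fun h => ?_
        exact h.trans_lt (Submodule.finrank_lt_finrank_of_lt
          (lt_of_le_not_ge (hmono d.le_succ) hd))
  exact (hgrow _).elim id fun h =>
    Submodule.eq_top_of_finrank_eq (le_antisymm (Submodule.finrank_le _) h)

end Span

variable [Fintype ι]

lemma exists_matrix_projection (W : Submodule k (ι → k)) :
    ∃ P : Matrix ι ι k, (∀ w ∈ W, w ᵥ* P = w) ∧ ∀ w, w ᵥ* P ∈ W := by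
  classical
  obtain ⟨U, hU⟩ := Submodule.exists_isCompl W
  let f : (ι → k) →ₗ[k] ι → k := W.subtype ∘ₗ W.projectionOnto U hU
  have hf (w : ι → k) : w ᵥ* (LinearMap.toMatrix' f)ᵀ = f w := by
    rw [vecMul_transpose, LinearMap.toMatrix'_mulVec]
  refine ⟨(LinearMap.toMatrix' f)ᵀ, fun w hw => ?_, fun w => ?_⟩ <;> rw [hf]
  · exact congrArg Subtype.val (Submodule.projectionOnto_apply_left hU ⟨w, hw⟩)
  · exact (W.projectionOnto U hU w).2

lemma forall_vecMul_mem_iff [DecidableEq ι] {W : Submodule k (ι → k)} {P : Matrix ι ι k}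
    (hP : ∀ w ∈ W, w ᵥ* P = w) (hPW : ∀ w, w ᵥ* P ∈ W) (X : Matrix ι ι k) :
    (∀ w ∈ W, w ᵥ* X ∈ W) ↔ P * X * (1 - P) = 0 := by
  constructor
  · intro h
    refine Matrix.ext_iff_vecMul.2 fun w => ?_
    rw [← vecMul_vecMul, ← vecMul_vecMul, vecMul_sub, vecMul_one, hP _ (h _ (hPW w)), sub_self,
      vecMul_zero]
  · intro h w hw
    have hw' := congrArg (w ᵥ* ·) h
    simp only [← vecMul_vecMul, vecMul_sub, vecMul_one, vecMul_zero, hP w hw] at hw'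
    rw [sub_eq_zero.1 hw']
    exact hPW _

/-- The Gram matrix of a family of matrices for the trace form `(X, Y) ↦ trace (X * Y)`. -/
def traceGram {A κ : Type*} [NonUnitalNonAssocSemiring A] (w : κ → Matrix ι ι A) : Matrix κ κ A :=
  Matrix.of fun i l => (w i * w l).trace

lemma map_traceGram {A B κ : Type*} [Semiring A] [Semiring B] (f : A →+* B)
    (w : κ → Matrix ι ι A) : (traceGram w).map f = traceGram fun i => (w i).map f := by
  ext i l
  simp only [traceGram, map_apply, of_apply, ← Matrix.map_mul]
  exact AddMonoidHom.map_trace f _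

variable {κ : Type*} [Fintype κ] [DecidableEq κ] {w : κ → Matrix ι ι k}

lemma linearIndependent_of_det_traceGram_ne_zero (h : (traceGram w).det ≠ 0) :
    LinearIndependent k w := by
  rw [Fintype.linearIndependent_iff]
  intro c hc
  have hvecMul : c ᵥ* traceGram w = 0 := by
    funext l
    have htrace := congrArg (fun M => (M * w l).trace) hc
    simpa [traceGram, Finset.sum_mul, trace_sum, vecMul, dotProduct] using htrace
  exact congrFun (eq_zero_of_vecMul_eq_zero h hvecMul)

lemma det_traceGram_ne_zero (hw : LinearIndependent k w)
    (hspan : Submodule.span k (Set.range w) = ⊤) : (traceGram w).det ≠ 0 := by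
  refine fun hdet => ?_
  obtain ⟨c, hc, hc0⟩ := Matrix.exists_mulVec_eq_zero_iff.2 hdet
  have hw0 (i : κ) : (w i * ∑ l, c l • w l).trace = 0 := by
    simpa [traceGram, mulVec, dotProduct, Finset.mul_sum, trace_sum, mul_comm] using congrFun hc0 i
  have hall (Y : Matrix ι ι k) : (Y * ∑ l, c l • w l).trace = 0 := by
    have hY : Y ∈ Submodule.span k (Set.range w) := hspan ▸ Submodule.mem_top
    induction hY using Submodule.span_induction with
    | mem _ hx => obtain ⟨i, rfl⟩ := hx; exact hw0 i
    | zero => rw [zero_mul, trace_zero]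
    | add x y _ _ hx hy => rw [add_mul, trace_add, hx, hy, add_zero]
    | smul a x _ hx => rw [smul_mul, trace_smul, hx, smul_zero]
  have hzero : ∑ l, c l • w l = 0 :=
    Matrix.ext_iff_trace_mul_left.2 fun Y => by rw [hall, mul_zero, trace_zero]
  exact hc (funext (Fintype.linearIndependent_iff.1 hw c hzero))

lemma eq_bot_or_eq_top_of_forall_vecMul_mem {W : Submodule k (ι → k)}
    (h : ∀ X : Matrix ι ι k, ∀ w ∈ W, w ᵥ* X ∈ W) : W = ⊥ ∨ W = ⊤ := by
  classical
  refine or_iff_not_imp_left.2 fun hW => (Submodule.eq_top_iff').2 fun u => ?_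
  obtain ⟨w, hw, hw0⟩ := Submodule.exists_mem_ne_zero_of_ne_bot hW
  obtain ⟨i, hi⟩ := Function.ne_iff.1 hw0
  have hu := h (Matrix.vecMulVec (Pi.single i (w i)⁻¹) u) w hw
  rw [vecMul_vecMulVec] at hu
  simpa [mul_inv_cancel₀ hi] using hu

/-- A representation under which every subgroup of finite index spans the whole matrix algebra; by
Burnside's theorem this says that `ρ` is strongly absolutely irreducible. -/
def StronglySpanning {Γ : Type*} [Group Γ] [DecidableEq ι] (ρ : Γ →* Matrix ι ι k) : Prop :=
  ∀ H : Subgroup Γ, H.FiniteIndex → Submodule.span k (ρ '' (H : Set Γ)) = ⊤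

end LinearAlgebra

open Filter

/-- A sequence of representations of `Γ`, with symmetric generating sets on which the entries are
bounded by a fixed power of the scale `R`. -/
structure RepSequence {K : Type*} [Field K] (v : AbsoluteValue K ℝ) (R : GrowthScale)
    (Γ ι : Type*) [Group Γ] [Fintype ι] [DecidableEq ι] where
  gens : ℕ → Set Γ
  isSymmGen : ∀ j, IsSymmGen (gens j)
  rep : ℕ → Γ →* Matrix ι ι K
  exists_abv_le : ∃ e : ℕ, ∀ j, ∀ t ∈ gens j, ∀ i k, v (rep j t i k) ≤ R j ^ e

namespace RepSequence

variable {K Γ ι : Type*} [Field K] {v : AbsoluteValue K ℝ} {R : GrowthScale} [Group Γ] [Fintype ι]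
  [DecidableEq ι] (𝓐 : RepSequence v R Γ ι)

/-- The sequences of elements of `Γ` whose word length in the generating sets stays bounded along
the ultrafilter. -/
def short : Subgroup (ℕ → Γ) where
  carrier := {h | ∃ L : ℕ, ∀ᶠ j in hyperfilter ℕ, h j ∈ 𝓐.gens j ^ L}
  mul_mem' := by
    rintro g h ⟨L, hL⟩ ⟨L', hL'⟩
    refine ⟨L + L', ?_⟩
    filter_upwards [hL, hL'] with j hg hh
    exact pow_add (𝓐.gens j) L L' ▸ Set.mul_mem_mul hg hh
  one_mem' := ⟨0, by simp⟩
  inv_mem' := by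
    rintro h ⟨L, hL⟩
    exact ⟨L, hL.mono fun j hj => (𝓐.isSymmGen j).inv_mem_pow hj⟩

lemma exists_abv_rep_le (L : ℕ) :
    ∃ e : ℕ, ∀ j, ∀ t ∈ 𝓐.gens j ^ L, ∀ i k, v (𝓐.rep j t i k) ≤ R j ^ e := by
  induction L with
  | zero =>
    refine ⟨0, fun j t ht i k => ?_⟩
    obtain rfl : t = 1 := by simpa using ht
    rw [map_one, Matrix.one_apply, pow_zero]
    split_ifs <;> simp
  | succ L ih =>
    obtain ⟨e, he⟩ := ih
    obtain ⟨e₁, he₁⟩ := 𝓐.exists_abv_le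
    refine ⟨Fintype.card ι + e₁ + e, fun j t ht i k => ?_⟩
    rw [pow_succ'] at ht
    obtain ⟨s, hs, u, hu, rfl⟩ := Set.mem_mul.1 ht
    have hpos := R.pos j
    rw [map_mul, pow_add, pow_add]
    calc v ((𝓐.rep j s * 𝓐.rep j u) i k)
        ≤ Fintype.card ι * R j ^ e₁ * supNorm v fun l => 𝓐.rep j u l k :=
          abv_dotProduct_le v _ _ (he₁ j s hs i)
      _ ≤ R j ^ Fintype.card ι * R j ^ e₁ * R j ^ e := by
          gcongr
          · exact supNorm_nonneg v _
          · exact R.natCast_le_pow _ j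
          · exact supNorm_le v (by positivity) fun l => he j u hu l k

/-- The representation of the group of short sequences with moderate entries. -/
def moderateRep : 𝓐.short →* Matrix ι ι (moderate v R) where
  toFun h := Matrix.of fun i k => ⟨fun j => 𝓐.rep j (h.1 j) i k, by
    obtain ⟨L, hL⟩ := h.2
    obtain ⟨e, he⟩ := 𝓐.exists_abv_rep_le L
    exact ⟨e, hL.mono fun j hj => he j _ hj i k⟩⟩
  map_one' := by
    ext i k j
    change 𝓐.rep j 1 i k = evalAt v R j ((1 : Matrix ι ι (moderate v R)) i k)
    rw [map_one, ← map_apply (f := evalAt v R j), Matrix.map_one _ (map_zero _) (map_one _)]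
  map_mul' g h := by
    ext i k j
    simp [Matrix.mul_apply]

lemma moderateRep_map_evalAt (h : 𝓐.short) (j : ℕ) :
    (𝓐.moderateRep h).map (evalAt v R j) = 𝓐.rep j (h.1 j) := rfl

/-- The representation of the group of short sequences over the limit field. -/
noncomputable def limitRep : 𝓐.short →* Matrix ι ι (LimitField v R) :=
  (residue v R).mapMatrix.toMonoidHom.comp 𝓐.moderateRep

lemma limitRep_apply (h : 𝓐.short) :
    𝓐.limitRep h = (𝓐.moderateRep h).map (residue v R) := rfl

/-- The short sequences that stabilize the subspace `W` over the limit field. -/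
def stabilizer (W : Submodule (LimitField v R) (ι → LimitField v R)) : Submonoid (ℕ → Γ) where
  carrier := {h | ∃ hh : h ∈ 𝓐.short, ∀ w ∈ W, w ᵥ* 𝓐.limitRep ⟨h, hh⟩ ∈ W}
  one_mem' := ⟨one_mem _, fun w hw => by
    rwa [show (⟨1, one_mem _⟩ : 𝓐.short) = 1 from rfl, map_one, vecMul_one]⟩
  mul_mem' := by
    rintro g h ⟨hg, hgW⟩ ⟨hh, hhW⟩
    refine ⟨mul_mem hg hh, fun w hw => ?_⟩
    rw [show (⟨g * h, mul_mem hg hh⟩ : 𝓐.short) = ⟨g, hg⟩ * ⟨h, hh⟩ from rfl, map_mul,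
      ← vecMul_vecMul]
    exact hhW _ (hgW w hw)

variable {𝓐} {W : Submodule (LimitField v R) (ι → LimitField v R)}

lemma mul_inv_mem_stabilizer {g h : 𝓐.short}
    (hgh : W.map (𝓐.limitRep g).vecMulLinear = W.map (𝓐.limitRep h).vecMulLinear) :
    ((g * h⁻¹ : 𝓐.short) : ℕ → Γ) ∈ 𝓐.stabilizer W := by
  refine ⟨(g * h⁻¹).2, fun w hw => ?_⟩
  obtain ⟨u, hu, huw : u ᵥ* 𝓐.limitRep h = w ᵥ* 𝓐.limitRep g⟩ :=
    hgh.le (Submodule.mem_map_of_mem hw)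
  rwa [Subtype.coe_eta, map_mul, ← vecMul_vecMul, ← huw, vecMul_vecMul, ← map_mul, mul_inv_cancel,
    map_one, vecMul_one]

lemma finrank_map_limitRep (h : 𝓐.short) :
    Module.finrank (LimitField v R) (W.map (𝓐.limitRep h).vecMulLinear) =
      Module.finrank (LimitField v R) W := by
  refine (Submodule.equivMapOfInjective _ (fun x y hxy => ?_) W).finrank_eq.symm
  have hxy' : (x ᵥ* 𝓐.limitRep h) ᵥ* 𝓐.limitRep h⁻¹ = (y ᵥ* 𝓐.limitRep h) ᵥ* 𝓐.limitRep h⁻¹ :=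
    congrArg (· ᵥ* 𝓐.limitRep h⁻¹) hxy
  simpa only [vecMul_vecMul, ← map_mul, mul_inv_cancel, map_one, vecMul_one] using hxy'

/-- The defect is the size of `P * X * (1 - P)` for a lift `P` of a projection onto `W`. -/
lemma exists_defect (W : Submodule (LimitField v R) (ι → LimitField v R)) :
    ∃ D : ℕ → Γ → ℝ, ∀ h ∈ 𝓐.short,
      h ∈ 𝓐.stabilizer W ↔ ∀ k : ℕ, ∀ᶠ j in hyperfilter ℕ, D j (h j) ≤ (R j ^ k)⁻¹ := by
  obtain ⟨P₀, hP, hPW⟩ := exists_matrix_projection W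
  obtain ⟨P, rfl⟩ : ∃ P : Matrix ι ι (moderate v R), P.map (residue v R) = P₀ := by
    choose P hP using fun i k => residue_surjective (P₀ i k)
    exact ⟨Matrix.of P, Matrix.ext hP⟩
  refine ⟨fun j g => supNorm v fun p : ι × ι =>
    (P.map (evalAt v R j) * 𝓐.rep j g * (1 - P.map (evalAt v R j))) p.1 p.2, fun h hh => ?_⟩
  set Q := P * 𝓐.moderateRep ⟨h, hh⟩ * (1 - P)
  have hQ (j : ℕ) : Q.map (evalAt v R j) =
      P.map (evalAt v R j) * 𝓐.rep j (h j) * (1 - P.map (evalAt v R j)) := by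
    simp only [Q, Matrix.map_mul, Matrix.map_sub _ (map_sub _),
      Matrix.map_one _ (map_zero _) (map_one _), moderateRep_map_evalAt]
  have hmem : h ∈ 𝓐.stabilizer W ↔ Q.map (residue v R) = 0 := by
    simp only [Q, Matrix.map_mul, Matrix.map_sub _ (map_sub _),
      Matrix.map_one _ (map_zero _) (map_one _), ← limitRep_apply]
    rw [← forall_vecMul_mem_iff hP hPW]
    exact exists_prop_of_true hh
  have hnorm (k j : ℕ) :
      supNorm v (fun p : ι × ι => (Q.map (evalAt v R j)) p.1 p.2) ≤ (R j ^ k)⁻¹ ↔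
        ∀ i l, v (evalAt v R j (Q i l)) ≤ (R j ^ k)⁻¹ :=
    ⟨fun hj i l => (le_supNorm v (fun p : ι × ι => (Q.map (evalAt v R j)) p.1 p.2) (i, l)).trans hj,
      fun hj => supNorm_le v (inv_nonneg.2 (pow_nonneg (R.pos j).le k)) fun p => hj p.1 p.2⟩
  beta_reduce
  simp_rw [← hQ, hnorm, eventually_all]
  rw [hmem, ← Matrix.ext_iff]
  simp only [map_apply, Matrix.zero_apply, residue_eq_zero_iff]
  exact ⟨fun H k i l => H i l k, fun H i l k => H k i l⟩

end RepSequence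

open Filter

lemma mem_of_eventually_mem_pow {α M : Type*} [Monoid M] {l : Filter α} {S : Submonoid (α → M)}
    {Z : α → Set M} (hone : ∀ a, 1 ∈ Z a) (hZ : ∀ z : α → M, (∀ᶠ a in l, z a ∈ Z a) → z ∈ S)
    (N : ℕ) : ∀ h : α → M, (∀ᶠ a in l, h a ∈ Z a ^ N) → h ∈ S := by
  induction N with
  | zero =>
    refine fun h hh => hZ h (hh.mono fun a ha => ?_)
    rw [pow_zero, Set.mem_one] at ha
    exact ha ▸ hone a
  | succ N ih =>
    intro h hh
    have hfactor (a : α) : ∃ y z, h a = y * z ∧ (h a ∈ Z a ^ (N + 1) → y ∈ Z a ^ N ∧ z ∈ Z a) := by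
      by_cases ha : h a ∈ Z a ^ (N + 1)
      · obtain ⟨y, hy, z, hz, hyz⟩ := Set.mem_mul.1 (pow_succ (Z a) N ▸ ha)
        exact ⟨y, z, hyz.symm, fun _ => ⟨hy, hz⟩⟩
      · exact ⟨h a, 1, (mul_one _).symm, fun h => absurd h ha⟩
    choose y z hyz hmem using hfactor
    rw [show h = y * z from funext hyz]
    have hy : y ∈ S := ih y (hh.mono fun a ha => (hmem a ha).1)
    have hz : z ∈ S := hZ z (hh.mono fun a ha => (hmem a ha).2)
    exact mul_mem hy hz

namespace RepSequence

variable {K Γ ι : Type*} [Field K] {v : AbsoluteValue K ℝ} {R : GrowthScale} [Group Γ] [Fintype ι]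
  [DecidableEq ι] {𝓐 : RepSequence v R Γ ι} {W : Submodule (LimitField v R) (ι → LimitField v R)}

lemma mem_stabilizer_of_eventually_eq {g h : ℕ → Γ} (hg : g ∈ 𝓐.stabilizer W)
    (hgh : ∀ᶠ j in hyperfilter ℕ, h j = g j) : h ∈ 𝓐.stabilizer W := by
  obtain ⟨D, hD⟩ := 𝓐.exists_defect W
  obtain ⟨L, hL⟩ := hg.1
  have hh : h ∈ 𝓐.short := ⟨L, hgh.mp (hL.mono fun j hj hghj => hghj ▸ hj)⟩
  refine (hD h hh).2 fun k => ?_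
  filter_upwards [(hD g hg.1).1 hg k, hgh] with j hj hghj
  rwa [hghj]

section Representatives

variable {α : Type*} [Finite α] (h : α → 𝓐.short)

lemma exists_eventually_forall_mem_pow :
    ∃ N : ℕ, ∀ᶠ j in hyperfilter ℕ, ∀ a, (h a).1 j ∈ 𝓐.gens j ^ N := by
  choose N hN using fun a => (h a).2
  obtain ⟨M, hM⟩ := (Set.finite_range N).bddAbove
  refine ⟨M, eventually_all.2 fun a => (hN a).mono fun j hj => ?_⟩
  exact (𝓐.isSymmGen j).pow_subset_pow (hM ⟨a, rfl⟩) hj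

/-- Among the representatives `b` of the orbit of `W`, choose one minimising the defect of
`h a * t * (h b)⁻¹`. -/
lemma exists_mul_inv_mem_stabilizer [Nonempty α]
    (hh : ∀ g : 𝓐.short, ∃ a, W.map (𝓐.limitRep g).vecMulLinear =
      W.map (𝓐.limitRep (h a)).vecMulLinear) :
    ∃ β : ℕ → α → Γ → α, ∀ a, ∀ t : ℕ → Γ, (∀ᶠ j in hyperfilter ℕ, t j ∈ 𝓐.gens j) →
      (fun j => (h a).1 j * t j * ((h (β j a (t j))).1 j)⁻¹) ∈ 𝓐.stabilizer W := by
  obtain ⟨D, hD⟩ := 𝓐.exists_defect W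
  choose β hβ using fun j a t => Finite.exists_min fun b => D j ((h a).1 j * t * ((h b).1 j)⁻¹)
  refine ⟨β, fun a t ht => ?_⟩
  have htshort : t ∈ 𝓐.short := ⟨1, by simpa using ht⟩
  have hβshort : (fun j => (h (β j a (t j))).1 j) ∈ 𝓐.short := by
    obtain ⟨N, hN⟩ := exists_eventually_forall_mem_pow h
    exact ⟨N, hN.mono fun j hj => hj _⟩
  obtain ⟨b, hb⟩ := hh (h a * ⟨t, htshort⟩)
  have hstab : (fun j => (h a).1 j * t j * ((h b).1 j)⁻¹) ∈ 𝓐.stabilizer W :=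
    mul_inv_mem_stabilizer hb
  have hbest := (hD _ hstab.1).1 hstab
  have hshort := mul_mem (mul_mem (h a).2 htshort) (inv_mem hβshort)
  exact (hD _ hshort).2 fun k => (hbest k).mono fun j hj => (hβ j a (t j) b).trans hj

end Representatives

/-- The sets `Z j` consist of the Schreier generators attached to the orbit of `W`. -/
lemma exists_finiteIndex_eventually_mem_stabilizer
    (hW : (Set.range fun h : 𝓐.short => W.map (𝓐.limitRep h).vecMulLinear).Finite) :
    ∃ Z : ℕ → Set Γ, (∀ j, 1 ∈ Z j) ∧ (∃ L, ∀ᶠ j in hyperfilter ℕ, Z j ⊆ 𝓐.gens j ^ L) ∧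
      (∀ j, (Subgroup.closure (Z j)).FiniteIndex) ∧
      ∀ z : ℕ → Γ, (∀ᶠ j in hyperfilter ℕ, z j ∈ Z j) → z ∈ 𝓐.stabilizer W := by
  let α := Set.range fun h : 𝓐.short => W.map (𝓐.limitRep h).vecMulLinear
  have : Finite α := hW
  have : Nonempty α := ⟨⟨_, 1, rfl⟩⟩
  choose h hh using fun U : α => U.2
  obtain ⟨β, hβ⟩ := exists_mul_inv_mem_stabilizer (W := W) h fun g =>
    ⟨⟨_, g, rfl⟩, (hh ⟨_, g, rfl⟩).symm⟩
  let schreier (j : ℕ) (a : α) (t : Γ) : Γ := (h a).1 j * t * ((h (β j a t)).1 j)⁻¹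
  refine ⟨fun j => insert 1 (⋃ a, schreier j a '' 𝓐.gens j), fun j => Set.mem_insert _ _, ?_,
    fun j => ?_, fun z hz => ?_⟩
  · obtain ⟨N, hN⟩ := exists_eventually_forall_mem_pow h
    refine ⟨N + 1 + N, hN.mono fun j hj => Set.insert_subset
      (Set.one_mem_pow (𝓐.isSymmGen j).one_mem) (Set.iUnion_subset fun a => ?_)⟩
    rintro _ ⟨t, ht, rfl⟩
    rw [pow_add, pow_add, pow_one]
    exact Set.mul_mem_mul (Set.mul_mem_mul (hj a) ht) ((𝓐.isSymmGen j).inv_mem_pow (hj _))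
  · refine (𝓐.isSymmGen j).finiteIndex_of_forall_mul_mem (fun a => (h a).1 j)
      (Classical.arbitrary α) fun a t ht => ⟨β j a t, Subgroup.subset_closure (.inr ?_)⟩
    exact Set.mem_iUnion.2 ⟨a, t, ht, rfl⟩
  · rcases Ultrafilter.eventually_or.1 hz with hone | hz
    · exact mem_stabilizer_of_eventually_eq (one_mem _) hone
    · simp only [Set.mem_iUnion] at hz
      obtain ⟨a, ha⟩ := Ultrafilter.eventually_exists_iff.1 hz
      choose! t ht htz using fun j (hj : z j ∈ schreier j a '' 𝓐.gens j) => hj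
      exact mem_stabilizer_of_eventually_eq (hβ a t (ha.mono ht))
        (ha.mono fun j hj => (htz j hj).symm)

lemma linearIndependent_limitRep {κ : Type*} [Fintype κ] [DecidableEq κ] (w : κ → 𝓐.short) {e : ℕ}
    (hw : ∀ᶠ j in hyperfilter ℕ,
      (R j ^ e)⁻¹ ≤ v (traceGram fun i => 𝓐.rep j ((w i).1 j)).det) :
    LinearIndependent (LimitField v R) fun i => 𝓐.limitRep (w i) := by
  refine linearIndependent_of_det_traceGram_ne_zero fun hdet => ?_
  have hres : residue v R (traceGram fun i => 𝓐.moderateRep (w i)).det = 0 := by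
    rwa [RingHom.map_det, RingHom.mapMatrix_apply, map_traceGram]
  obtain ⟨j, hj, hsmall⟩ := (hw.and (residue_eq_zero_iff.1 hres (e + 1))).exists
  rw [RingHom.map_det, RingHom.mapMatrix_apply, map_traceGram] at hsmall
  have hle : (R j ^ e)⁻¹ ≤ (R j ^ (e + 1))⁻¹ := hj.trans hsmall
  linarith [R.two_mul_inv_pow_succ_le e j, inv_pos.2 (pow_pos (R.pos j) (e + 1))]

lemma eq_bot_or_eq_top_of_span_stabilizer {κ : Type*} (w : κ → 𝓐.short)
    (hw : ∀ i, (w i : ℕ → Γ) ∈ 𝓐.stabilizer W)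
    (hspan : Submodule.span (LimitField v R) (Set.range fun i => 𝓐.limitRep (w i)) = ⊤) :
    W = ⊥ ∨ W = ⊤ := by
  refine eq_bot_or_eq_top_of_forall_vecMul_mem fun X => ?_
  have hX : X ∈ Submodule.span (LimitField v R) (Set.range fun i => 𝓐.limitRep (w i)) :=
    hspan ▸ Submodule.mem_top
  induction hX using Submodule.span_induction with
  | mem X hX =>
    obtain ⟨i, rfl⟩ := hX
    exact (hw i).2
  | zero => simp
  | add X Y _ _ hX hY => exact fun u hu => vecMul_add X Y u ▸ W.add_mem (hX u hu) (hY u hu)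
  | smul c X _ hX => exact fun u hu => vecMul_smul u c X ▸ W.smul_mem c (hX u hu)

lemma eq_bot_or_eq_top_of_finite_orbit
    (hspan : ∀ j, StronglySpanning (𝓐.rep j))
    (hgram : ∀ L, ∃ e : ℕ, ∀ j, ∀ w : ι × ι → Γ, (∀ i, w i ∈ 𝓐.gens j ^ L) →
      LinearIndependent K (fun i => 𝓐.rep j (w i)) →
        (R j ^ e)⁻¹ ≤ v (traceGram fun i => 𝓐.rep j (w i)).det)
    (hW : (Set.range fun h : 𝓐.short => W.map (𝓐.limitRep h).vecMulLinear).Finite) :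
    W = ⊥ ∨ W = ⊤ := by
  obtain ⟨Z, hone, ⟨L, hL⟩, hindex, hstab⟩ := exists_finiteIndex_eventually_mem_stabilizer hW
  set N := Module.finrank K (Matrix ι ι K)
  have hbasis (j : ℕ) : ∃ w : ι × ι → Γ, (∀ i, w i ∈ Z j ^ N) ∧
      LinearIndependent K fun i => 𝓐.rep j (w i) := by
    obtain ⟨w, hwZ, hw⟩ := exists_linearIndependent_of_span_eq_top (ι := ι × ι)
      (by simp [Module.finrank_matrix])
      (span_image_pow_eq_top (k := K) (𝓐.rep j) (hone j) (hspan j _ (hindex j)))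
    choose γ hγ hγw using hwZ
    exact ⟨γ, hγ, by simpa only [hγw] using hw⟩
  choose w hwZ hw using hbasis
  have hwstab (i : ι × ι) : (fun j => w j i) ∈ 𝓐.stabilizer W :=
    mem_of_eventually_mem_pow hone hstab N _ (.of_forall fun j => hwZ j i)
  obtain ⟨e, he⟩ := hgram (L * N)
  have hli : LinearIndependent (LimitField v R) fun i => 𝓐.limitRep ⟨_, (hwstab i).1⟩ := by
    refine linearIndependent_limitRep (e := e) _
      (hL.mono fun j hj => he j (w j) (fun i => ?_) (hw j))
    exact pow_mul (𝓐.gens j) L N ▸ Set.pow_subset_pow_left hj (hwZ j i)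
  exact eq_bot_or_eq_top_of_span_stabilizer _ hwstab
    (hli.span_eq_top_of_card_eq_finrank' (by simp [Module.finrank_matrix]))

section Means

variable {m : ℕ → Set (ι → K) → ℝ} {c : ℝ}

lemma hasMass_map_limitRep (hW : HasMass v R m c W) (hm : ∀ j, IsMean (m j))
    (hinv : ∀ j, ∀ t ∈ 𝓐.gens j ^ j,
      AlmostInvariant (m j) (cones K (ι → K)) (1 / (j + 1)) (𝓐.rep j t *ᵥ ·)) (h : 𝓐.short) :
    HasMass v R m c (W.map (𝓐.limitRep h).vecMulLinear) := by
  refine hW.map_vecMulLinear hm (𝓐.moderateRep h) fun δ hδ => ?_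
  obtain ⟨L, hL⟩ := h.2
  have hlarge : ∀ᶠ j in atTop, L ≤ j ∧ 1 / ((j : ℝ) + 1) < δ :=
    (eventually_ge_atTop L).and (tendsto_one_div_add_atTop_nhds_zero_nat.eventually_lt_const hδ)
  filter_upwards [hL, hlarge.filter_mono Nat.hyperfilter_le_atTop] with j hj hlarge
  exact (hinv j _ ((𝓐.isSymmGen j).pow_subset_pow hlarge.1 hj)).mono hlarge.2.le

lemma finite_orbit_of_hasMass (hW : HasMass v R m c W) (hc : 0 < c) (hm : ∀ j, IsMean (m j))
    (hinv : ∀ j, ∀ t ∈ 𝓐.gens j ^ j,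
      AlmostInvariant (m j) (cones K (ι → K)) (1 / (j + 1)) (𝓐.rep j t *ᵥ ·))
    (hmax : ∀ U, (∃ c' > 0, HasMass v R m c' U) →
      Module.finrank (LimitField v R) U ≤ Module.finrank (LimitField v R) W) :
    (Set.range fun h : 𝓐.short => W.map (𝓐.limitRep h).vecMulLinear).Finite := by
  by_contra hinf
  obtain ⟨s, hs, hcard⟩ := Set.Infinite.exists_subset_card_eq hinf (⌊4 / c⌋₊ + 1)
  have hle := card_le_of_hasMass_of_finrank_eq hm hc hmax s fun U hU => by
    obtain ⟨h, rfl⟩ := hs hU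
    exact ⟨hasMass_map_limitRep hW hm hinv h, finrank_map_limitRep h⟩
  rw [hcard] at hle
  push_cast at hle
  linarith [Nat.lt_floor_add_one (4 / c)]

end Means

end RepSequence

open Filter

section MassiveSubspaces

variable {K ι : Type*} [Field K] {v : AbsoluteValue K ℝ} {R : GrowthScale} [Fintype ι]
  {m : ℕ → Set (ι → K) → ℝ}

lemma exists_ne_zero_hasMass_span_singleton {c : ℝ} (hm : ∀ j, IsMean (m j))
    (hφ : ∀ᶠ j in atTop, ∃ φ : ι → K, IsNormalized v φ ∧ c ≤ m j (nearKer v φ (R j ^ j)⁻¹)) :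
    ∃ w : ι → LimitField v R, w ≠ 0 ∧ HasMass v R m c (Submodule.span _ {w}) := by
  have hφ' := hφ.filter_mono Nat.hyperfilter_le_atTop
  choose! φ hnorm hmass using fun j (h : ∃ φ : ι → K, IsNormalized v φ ∧
    c ≤ m j (nearKer v φ (R j ^ j)⁻¹)) => h
  let f (i : ι) : moderate v R := ⟨fun j => φ j i, 0, by
    filter_upwards [hφ'] with j hj
    simpa using (hnorm j hj).1 i⟩
  refine ⟨residue v R ∘ f, fun hf => ?_, hasMass_span_singleton hm f fun k c' hc' => ?_⟩
  · have hone : ∀ᶠ j in hyperfilter ℕ, ∃ i, φ j i = 1 := hφ'.mono fun j hj => (hnorm j hj).2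
    obtain ⟨i, hi⟩ := Ultrafilter.eventually_exists_iff.1 hone
    obtain ⟨j, hj, hsmall⟩ := (hi.and (residue_eq_zero_iff.1 (congrFun hf i) 1)).exists
    have hsmall' : v (φ j i) ≤ (R j ^ 1)⁻¹ := hsmall
    have hR := inv_anti₀ zero_lt_two (R.two_le j)
    rw [hj, map_one, pow_one] at hsmall'
    norm_num at hR
    linarith
  · filter_upwards [hφ', (eventually_ge_atTop k).filter_mono Nat.hyperfilter_le_atTop] with j hj hkj
    refine hc'.le.trans ((hmass j hj).trans ((hm j).mono fun x hx => mem_nearKernel.2 ?_))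
    rintro _ rfl
    exact nearKer_mono v _ (R.inv_pow_le_inv_pow hkj j) hx

lemma exists_hasMass_finrank_max {W : Submodule (LimitField v R) (ι → LimitField v R)}
    (hW : ∃ c > 0, HasMass v R m c W) :
    ∃ W, (∃ c > 0, HasMass v R m c W) ∧ ∀ U, (∃ c > 0, HasMass v R m c U) →
      Module.finrank (LimitField v R) U ≤ Module.finrank (LimitField v R) W := by
  let ranks := (fun U : Submodule (LimitField v R) (ι → LimitField v R) =>
    Module.finrank (LimitField v R) U) '' {U | ∃ c > 0, HasMass v R m c U}
  have hbdd : BddAbove ranks := ⟨_, Set.forall_mem_image.2 fun U _ => Submodule.finrank_le U⟩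
  obtain ⟨U, hU, hmax⟩ := Nat.sSup_mem (s := ranks) ⟨_, W, hW, rfl⟩ hbdd
  exact ⟨U, hU, fun U' hU' => (le_csSup hbdd (Set.mem_image_of_mem _ hU')).trans hmax.ge⟩

end MassiveSubspaces

/-- A massive subspace of maximal rank over the limit field has a finite orbit, hence is trivial,
while neither the zero subspace nor the whole space is possible. -/
theorem RepSequence.false_of_almostInvariant {K Γ ι : Type*} [Field K] {v : AbsoluteValue K ℝ}
    {R : GrowthScale} [Group Γ] [Fintype ι] [DecidableEq ι] (𝓐 : RepSequence v R Γ ι)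
    (hdet : ∀ j γ, (𝓐.rep j γ).det = 1) {m : ℕ → Set (ι → K) → ℝ} (hm : ∀ j, IsMean (m j))
    (hm0 : ∀ j, m j {0} = 0)
    (hinv : ∀ j, ∀ t ∈ 𝓐.gens j ^ j,
      AlmostInvariant (m j) (cones K (ι → K)) (1 / (j + 1)) (𝓐.rep j t *ᵥ ·))
    (hlarge : ∀ j, ∃ a, (∃ i k, R j ^ (3 * j) ≤ v (𝓐.rep j a i k)) ∧
      AlmostInvariant (m j) (cones K (ι → K)) (1 / (j + 1)) (𝓐.rep j a *ᵥ ·))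
    (hspan : ∀ j, StronglySpanning (𝓐.rep j))
    (hgram : ∀ L, ∃ e : ℕ, ∀ j, ∀ w : ι × ι → Γ, (∀ i, w i ∈ 𝓐.gens j ^ L) →
      LinearIndependent K (fun i => 𝓐.rep j (w i)) →
        (R j ^ e)⁻¹ ≤ v (traceGram fun i => 𝓐.rep j (w i)).det) : False := by
  have hφ : ∀ᶠ j in atTop, ∃ φ : ι → K, IsNormalized v φ ∧
      1 / 3 ≤ m j (nearKer v φ (R j ^ j)⁻¹) := by
    filter_upwards [eventually_ge_atTop 2, eventually_ge_atTop (Fintype.card ι).factorial]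
      with j htwo hfact
    obtain ⟨a, ⟨i, k, ha⟩, hinva⟩ := hlarge j
    refine exists_normalized_le_mean_nearKer v (i := i) (k := k) (hm j)
      (by rw [← map_mul, inv_mul_cancel, map_one]) (hdet j a⁻¹) ?_ ?_ (hinva.mono ?_)
    · exact (R.natCast_le_pow _ j).trans (pow_le_pow_right₀ (R.one_le j) hfact)
    · rwa [← pow_mul, mul_comm]
    · have : (2 : ℝ) ≤ j := mod_cast htwo
      exact one_div_le_one_div_of_le (by norm_num) (by linarith)
  obtain ⟨w, hw0, hw⟩ := exists_ne_zero_hasMass_span_singleton hm hφ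
  obtain ⟨W, ⟨c, hc, hW⟩, hmax⟩ := exists_hasMass_finrank_max ⟨1 / 3, by norm_num, hw⟩
  rcases eq_bot_or_eq_top_of_finite_orbit hspan hgram (finite_orbit_of_hasMass hW hc hm hinv hmax)
    with rfl | rfl
  · have hrank := hmax _ ⟨1 / 3, by norm_num, hw⟩
    rw [finrank_span_singleton hw0, finrank_bot] at hrank
    omega
  · exact not_hasMass_top hm hm0 hc hW

/-- A norm on `K^ι` over the valued field `(K, v)`. As `K` need not be complete, domination of the
sup norm has to be required separately. -/
structure IsNorm {K ι : Type*} [Field K] (v : AbsoluteValue K ℝ) (N : (ι → K) → ℝ) : Prop where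
  smul : ∀ c x, N (c • x) = v c * N x
  add_le : ∀ x y, N (x + y) ≤ N x + N y
  exists_mul_supNorm_le : ∃ c > 0, ∀ x, c * supNorm v x ≤ N x

namespace IsNorm

variable {K ι : Type*} [Field K] {v : AbsoluteValue K ℝ} {N : (ι → K) → ℝ}

lemma nonneg (hN : IsNorm v N) (x : ι → K) : 0 ≤ N x := by
  obtain ⟨c, hc, h⟩ := hN.exists_mul_supNorm_le
  exact (mul_nonneg hc.le (supNorm_nonneg v x)).trans (h x)

variable [Finite ι]

lemma pos (hN : IsNorm v N) {x : ι → K} (hx : x ≠ 0) : 0 < N x := by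
  obtain ⟨c, hc, h⟩ := hN.exists_mul_supNorm_le
  exact (mul_pos hc (supNorm_pos v hx)).trans_le (h x)

variable (v) in
lemma supNorm : IsNorm v (supNorm v : (ι → K) → ℝ) :=
  ⟨supNorm_smul v, supNorm_add_le v, 1, one_pos, fun _ => (one_mul _).le⟩

omit [Finite ι] in
lemma row_pos [Fintype ι] [DecidableEq ι] (hN : IsNorm v N) {E : Matrix ι ι K} (hE : E.det ≠ 0)
    (i : ι) : 0 < N (E i) :=
  hN.pos fun h => hE (det_eq_zero_of_row_eq_zero i (congrFun h))

omit [Finite ι] in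
lemma exists_smul_mem_Icc (hN : IsNorm v N) {c : K} (hc : 1 < v c) {x : ι → K} (hx : 0 < N x) :
    ∃ d : K, d ≠ 0 ∧ N (d • x) ∈ Set.Icc 1 (v c) := by
  obtain ⟨z, hlow, hup⟩ := exists_mem_Ioc_zpow hx hc
  have hc0 : c ≠ 0 := v.pos_iff.1 (one_pos.trans hc)
  refine ⟨(c ^ z)⁻¹, inv_ne_zero (zpow_ne_zero _ hc0), ?_⟩
  rw [hN.smul, map_inv₀, map_zpow₀, Set.mem_Icc, le_inv_mul_iff₀ (by positivity),
    inv_mul_le_iff₀ (by positivity), mul_one, ← zpow_add_one₀ (by positivity)]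
  exact ⟨hlow.le, hup⟩

end IsNorm

section MatrixEntries

variable {K ι : Type*} [Field K] (v : AbsoluteValue K ℝ) [Fintype ι]

omit [Fintype ι] in
lemma exists_abv_entry_le [Finite ι] (M : Matrix ι ι K) : ∃ c, 0 ≤ c ∧ ∀ i k, v (M i k) ≤ c := by
  have := Fintype.ofFinite ι
  refine ⟨∑ i, ∑ k, v (M i k), by positivity, fun i k => ?_⟩
  exact (Finset.single_le_sum (fun k _ => v.nonneg (M i k)) (Finset.mem_univ k)).trans
    (Finset.single_le_sum (f := fun i => ∑ k, v (M i k)) (fun i _ => by positivity)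
      (Finset.mem_univ i))

lemma abv_det_le_factorial_mul_prod_supNorm [DecidableEq ι] (E : Matrix ι ι K) :
    v E.det ≤ (Fintype.card ι).factorial * ∏ i, supNorm v (E i) := by
  have hterm (σ : Equiv.Perm ι) :
      v (Equiv.Perm.sign σ • ∏ i, Eᵀ (σ i) i) ≤ ∏ i, supNorm v (E i) := by
    rw [v.map_units_int_smul, map_prod]
    exact Finset.prod_le_prod (fun _ _ => v.nonneg _) fun i _ => le_supNorm v (E i) _
  rw [← det_transpose, det_apply]
  refine (v.sum_le _ _).trans ((Finset.sum_le_card_nsmul _ _ _ fun σ _ => hterm σ).trans_eq ?_)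
  rw [Finset.card_univ, Fintype.card_perm, nsmul_eq_mul]

lemma isNorm_supNorm_mulVec [DecidableEq ι] (P : (Matrix ι ι K)ˣ) :
    IsNorm v fun x => supNorm v (P.val *ᵥ x) where
  smul c x := by rw [mulVec_smul, supNorm_smul]
  add_le x y := by rw [mulVec_add]; exact supNorm_add_le v _ _
  exists_mul_supNorm_le := by
    obtain ⟨c, hc, hQ⟩ := exists_abv_entry_le v P⁻¹.val
    refine ⟨(Fintype.card ι * c + 1)⁻¹, by positivity, fun x => ?_⟩
    have hback := supNorm_mulVec_le v P⁻¹.val (P.val *ᵥ x) hc hQ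
    rw [mulVec_mulVec, P.inv_mul, one_mulVec] at hback
    rw [inv_mul_le_iff₀ (by positivity), add_one_mul]
    exact hback.trans (le_add_of_nonneg_right (supNorm_nonneg v _))

end MatrixEntries

section Auerbach

variable {K ι : Type*} [Field K] {v : AbsoluteValue K ℝ} [Fintype ι] [DecidableEq ι]
  {N : (ι → K) → ℝ}

/-- The volume spanned by the rows of `E`, relative to the product of their norms. -/
noncomputable def volumeRatio (v : AbsoluteValue K ℝ) (N : (ι → K) → ℝ) (E : Matrix ι ι K) : ℝ :=
  v E.det / ∏ i, N (E i)

lemma volumeRatio_pos (hN : IsNorm v N) {E : Matrix ι ι K} (hE : E.det ≠ 0) :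
    0 < volumeRatio v N E :=
  div_pos (v.pos hE) (Finset.prod_pos fun i _ => hN.row_pos hE i)

lemma bddAbove_volumeRatio (hN : IsNorm v N) :
    BddAbove (volumeRatio v N '' {E | E.det ≠ 0}) := by
  obtain ⟨a, ha, hlower⟩ := hN.exists_mul_supNorm_le
  refine ⟨(Fintype.card ι).factorial * a⁻¹ ^ Fintype.card ι, Set.forall_mem_image.2 fun E hE => ?_⟩
  rw [volumeRatio, div_le_iff₀ (Finset.prod_pos fun i _ => hN.row_pos hE i)]
  calc v E.det ≤ (Fintype.card ι).factorial * ∏ i, supNorm v (E i) :=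
        abv_det_le_factorial_mul_prod_supNorm v E
    _ ≤ (Fintype.card ι).factorial * ∏ i, a⁻¹ * N (E i) := by
        gcongr with i
        · exact fun i _ => supNorm_nonneg v _
        · rw [le_inv_mul_iff₀ ha]
          exact hlower _
    _ = _ := by rw [Finset.prod_mul_distrib, Finset.prod_const, Finset.card_univ, mul_assoc]

lemma det_updateRow_vecMul (E : Matrix ι ι K) (c : ι → K) (i : ι) :
    (E.updateRow i (c ᵥ* E)).det = c i * E.det := by
  rw [vecMul_eq_sum, det_updateRow_sum, smul_eq_mul]

lemma volumeRatio_updateRow_mul {E : Matrix ι ι K} {c : ι → K} {i : ι} (hi : N (E i) ≠ 0)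
    (hc : N (c ᵥ* E) ≠ 0) :
    volumeRatio v N (E.updateRow i (c ᵥ* E)) * N (c ᵥ* E) =
      volumeRatio v N E * (v (c i) * N (E i)) := by
  have hprod (F : Matrix ι ι K) :
      ∏ k, N (F k) = N (F i) * ∏ k ∈ Finset.univ.erase i, N (F k) :=
    (Finset.mul_prod_erase _ _ (Finset.mem_univ i)).symm
  have herase : ∏ k ∈ Finset.univ.erase i, N (E.updateRow i (c ᵥ* E) k) =
      ∏ k ∈ Finset.univ.erase i, N (E k) :=
    Finset.prod_congr rfl fun k hk => by rw [updateRow_ne (Finset.ne_of_mem_erase hk)]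
  rw [volumeRatio, volumeRatio, hprod, hprod E, herase, updateRow_self, det_updateRow_vecMul,
    map_mul]
  field_simp

/-- The rows of `E` form a basis for which the coordinate forms are, up to a factor two, as small
as in an Auerbach basis. -/
structure IsAuerbach (v : AbsoluteValue K ℝ) (N : (ι → K) → ℝ) (E : Matrix ι ι K) : Prop where
  det_ne_zero : E.det ≠ 0
  abv_mul_le : ∀ (c : ι → K) (i), v (c i) * N (E i) ≤ 2 * N (c ᵥ* E)

lemma IsNorm.exists_isAuerbach (hN : IsNorm v N) : ∃ E, IsAuerbach v N E := by
  have hbdd := bddAbove_volumeRatio hN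
  have hone : volumeRatio v N 1 ∈ volumeRatio v N '' {E | E.det ≠ 0} := ⟨1, by simp, rfl⟩
  have hsup : 0 < sSup (volumeRatio v N '' {E | E.det ≠ 0}) :=
    (volumeRatio_pos hN (by simp)).trans_le (le_csSup hbdd hone)
  obtain ⟨_, ⟨E, hE, rfl⟩, hmax⟩ := exists_lt_of_lt_csSup ⟨_, hone⟩ (half_lt_self hsup)
  refine ⟨E, hE, fun c i => ?_⟩
  by_cases hc : c i = 0
  · rw [hc, map_zero, zero_mul]
    exact mul_nonneg zero_le_two (hN.nonneg _)
  have hE' : (E.updateRow i (c ᵥ* E)).det ≠ 0 := by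
    rw [det_updateRow_vecMul]
    exact mul_ne_zero hc hE
  have hcE : 0 < N (c ᵥ* E) := by simpa using hN.row_pos hE' i
  refine le_of_mul_le_mul_left ?_ (volumeRatio_pos hN hE)
  calc volumeRatio v N E * (v (c i) * N (E i))
      = volumeRatio v N (E.updateRow i (c ᵥ* E)) * N (c ᵥ* E) :=
        (volumeRatio_updateRow_mul (hN.row_pos hE i).ne' hcE.ne').symm
    _ ≤ 2 * volumeRatio v N E * N (c ᵥ* E) := by
        gcongr
        have := le_csSup hbdd ⟨_, hE', rfl⟩
        linarith
    _ = _ := by ring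

namespace IsAuerbach

variable {E M : Matrix ι ι K} {Λ : ℝ}

lemma isUnit_det_transpose (hE : IsAuerbach v N E) : IsUnit Eᵀ.det := by
  rw [det_transpose]
  exact hE.det_ne_zero.isUnit

lemma abv_conj_mul_le (hE : IsAuerbach v N E) (hM : ∀ x, N (M *ᵥ x) ≤ Λ * N x) (i k : ι) :
    v ((Eᵀ⁻¹ * M * Eᵀ) k i) * N (E k) ≤ 2 * (Λ * N (E i)) := by
  have hcoord : (fun k => (Eᵀ⁻¹ * M * Eᵀ) k i) ᵥ* E = M *ᵥ E i := by
    have hconj : Eᵀ * (Eᵀ⁻¹ * M * Eᵀ) = M * Eᵀ := by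
      rw [mul_assoc Eᵀ⁻¹, mul_nonsing_inv_cancel_left _ _ hE.isUnit_det_transpose]
    rw [← mulVec_transpose]
    exact funext fun l => congrFun (congrFun hconj l) i
  calc v ((Eᵀ⁻¹ * M * Eᵀ) k i) * N (E k) ≤ 2 * N (M *ᵥ E i) :=
        hcoord ▸ hE.abv_mul_le (fun k => (Eᵀ⁻¹ * M * Eᵀ) k i) k
    _ ≤ 2 * (Λ * N (E i)) := by gcongr; exact hM _

lemma diagonal_mul (hE : IsAuerbach v N E) (hN : IsNorm v N) {d : ι → K} (hd : ∀ i, d i ≠ 0) :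
    IsAuerbach v N (diagonal d * E) where
  det_ne_zero := by
    rw [det_mul, det_diagonal]
    exact mul_ne_zero (Finset.prod_ne_zero_iff.2 fun i _ => hd i) hE.det_ne_zero
  abv_mul_le c i := by
    have hrow : (diagonal d * E) i = d i • E i := funext fun k => Matrix.diagonal_mul d E i k
    have hcoord : (c ᵥ* diagonal d) i = c i * d i := vecMul_diagonal c d i
    have h := hE.abv_mul_le (c ᵥ* diagonal d) i
    rwa [hcoord, map_mul, vecMul_vecMul, mul_assoc, ← hN.smul, ← hrow] at h

end IsAuerbach

namespace IsNorm

omit [DecidableEq ι] in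
lemma abv_trace_le (hN : IsNorm v N) {M : Matrix ι ι K} {Λ : ℝ}
    (hM : ∀ x, N (M *ᵥ x) ≤ Λ * N x) : v M.trace ≤ Fintype.card ι * (2 * Λ) := by
  classical
  obtain ⟨E, hE⟩ := hN.exists_isAuerbach
  have hconj : M.trace = (Eᵀ⁻¹ * M * Eᵀ).trace := by
    rw [trace_mul_comm, mul_nonsing_inv_cancel_left _ _ hE.isUnit_det_transpose]
  rw [hconj, trace]
  refine (v.sum_le _ _).trans ((Finset.sum_le_card_nsmul _ _ (2 * Λ) fun i _ => ?_).trans_eq ?_)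
  · refine le_of_mul_le_mul_right ?_ (hN.row_pos hE.det_ne_zero i)
    exact (hE.abv_conj_mul_le hM i i).trans_eq (mul_assoc _ _ _).symm
  · rw [Finset.card_univ, nsmul_eq_mul]

lemma exists_abv_conj_le (hN : IsNorm v N) {c : K} (hc : 1 < v c) :
    ∃ Q : (Matrix ι ι K)ˣ, ∀ (M : Matrix ι ι K) (Λ : ℝ), 0 ≤ Λ → (∀ x, N (M *ᵥ x) ≤ Λ * N x) →
      ∀ i k, v ((Q⁻¹.val * M * Q.val) i k) ≤ 2 * Λ * v c := by
  obtain ⟨E₀, hE₀⟩ := hN.exists_isAuerbach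
  choose d hd0 hd using fun i => hN.exists_smul_mem_Icc hc (hN.row_pos hE₀.det_ne_zero i)
  set E := diagonal d * E₀
  have hE : IsAuerbach v N E := hE₀.diagonal_mul hN hd0
  have hrow (i : ι) : N (E i) ∈ Set.Icc 1 (v c) := by
    have hi : E i = d i • E₀ i := funext fun k => Matrix.diagonal_mul d E₀ i k
    exact hi ▸ hd i
  refine ⟨Eᵀ.nonsingInvUnit hE.isUnit_det_transpose, fun M Λ hΛ hM k i => ?_⟩
  calc v ((Eᵀ⁻¹ * M * Eᵀ) k i) ≤ v ((Eᵀ⁻¹ * M * Eᵀ) k i) * N (E k) :=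
        le_mul_of_one_le_right (v.nonneg _) (hrow k).1
    _ ≤ 2 * (Λ * N (E i)) := hE.abv_conj_mul_le hM i k
    _ ≤ 2 * (Λ * v c) := by gcongr; exact (hrow i).2
    _ = 2 * Λ * v c := (mul_assoc _ _ _).symm

end IsNorm

end Auerbach

/-- The matrices of `𝓜` expand some norm by a factor of at most `Λ`. -/
def ExpansionLE {K ι : Type*} [Field K] [Fintype ι] (v : AbsoluteValue K ℝ)
    (𝓜 : Set (Matrix ι ι K)) (Λ : ℝ) : Prop :=
  ∃ N : (ι → K) → ℝ, IsNorm v N ∧ ∀ M ∈ 𝓜, ∀ x, N (M *ᵥ x) ≤ Λ * N x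

section AdaptedNorm

variable {K ι : Type*} [Field K] {v : AbsoluteValue K ℝ} [Fintype ι] [DecidableEq ι]
  {N : (ι → K) → ℝ} {𝓜 : Set (Matrix ι ι K)} {Λ : ℝ}

lemma mulVec_le_pow_mul (hΛ : 0 ≤ Λ) (h : ∀ M ∈ 𝓜, ∀ x, N (M *ᵥ x) ≤ Λ * N x) (L : ℕ) :
    ∀ M ∈ 𝓜 ^ L, ∀ x, N (M *ᵥ x) ≤ Λ ^ L * N x := by
  induction L with
  | zero =>
    rintro M hM x
    obtain rfl : M = 1 := by simpa using hM
    simp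
  | succ L ih =>
    rw [pow_succ' 𝓜]
    rintro _ ⟨A, hA, B, hB, rfl⟩ x
    dsimp only
    rw [← mulVec_mulVec, pow_succ', mul_assoc]
    exact (h A hA _).trans (mul_le_mul_of_nonneg_left (ih B hB x) hΛ)

/-- The largest value of `N` on the translates of `x` by products of fewer than `m` elements of
`𝓜`, rescaled so that each factor of `𝓜` expands it by at most `Λ`. -/
noncomputable def adaptedNorm (N : (ι → K) → ℝ) (𝓜 : Set (Matrix ι ι K)) (Λ : ℝ) (m : ℕ)
    (x : ι → K) : ℝ :=
  ⨆ p : Σ i : Fin m, ↥(𝓜 ^ (i : ℕ)), (Λ ^ (p.1 : ℕ))⁻¹ * N (p.2.1 *ᵥ x)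

section

variable {m : ℕ} (hN : IsNorm v N) (hone : 1 ∈ 𝓜) (hΛ : 1 ≤ Λ)
  (hpow : ∀ M ∈ 𝓜 ^ m, ∀ x, N (M *ᵥ x) ≤ Λ ^ m * N x)
include hN hone hΛ hpow

lemma le_adaptedNorm {i : ℕ} (hi : i < m) {M : Matrix ι ι K} (hM : M ∈ 𝓜 ^ i) (x : ι → K) :
    (Λ ^ i)⁻¹ * N (M *ᵥ x) ≤ adaptedNorm N 𝓜 Λ m x := by
  refine le_ciSup (f := fun p : Σ i : Fin m, ↥(𝓜 ^ (i : ℕ)) => (Λ ^ (p.1 : ℕ))⁻¹ * N (p.2.1 *ᵥ x))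
    ⟨Λ ^ m * N x, Set.forall_mem_range.2 fun p => ?_⟩ ⟨⟨i, hi⟩, M, hM⟩
  calc (Λ ^ (p.1 : ℕ))⁻¹ * N (p.2.1 *ᵥ x) ≤ N (p.2.1 *ᵥ x) :=
        mul_le_of_le_one_left (hN.nonneg _) (inv_le_one_of_one_le₀ (one_le_pow₀ hΛ))
    _ ≤ Λ ^ m * N x := hpow _ (Set.pow_subset_pow_right hone p.1.2.le p.2.2) x

lemma self_le_adaptedNorm (hm : 0 < m) (x : ι → K) : N x ≤ adaptedNorm N 𝓜 Λ m x := by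
  simpa using le_adaptedNorm hN hone hΛ hpow hm (M := 1) (by simp) x

lemma isNorm_adaptedNorm (hm : 0 < m) : IsNorm v (adaptedNorm N 𝓜 Λ m) where
  smul c x := by
    simp only [adaptedNorm, mulVec_smul, hN.smul, Real.mul_iSup_of_nonneg (v.nonneg c),
      mul_left_comm]
  add_le x y := by
    have hnonneg (x : ι → K) : 0 ≤ adaptedNorm N 𝓜 Λ m x :=
      (hN.nonneg x).trans (self_le_adaptedNorm hN hone hΛ hpow hm x)
    refine Real.iSup_le (fun p => ?_) (add_nonneg (hnonneg x) (hnonneg y))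
    calc (Λ ^ (p.1 : ℕ))⁻¹ * N (p.2.1 *ᵥ (x + y))
        ≤ (Λ ^ (p.1 : ℕ))⁻¹ * (N (p.2.1 *ᵥ x) + N (p.2.1 *ᵥ y)) := by
          rw [mulVec_add]
          gcongr
          exact hN.add_le _ _
      _ ≤ adaptedNorm N 𝓜 Λ m x + adaptedNorm N 𝓜 Λ m y := by
          rw [mul_add]
          exact add_le_add (le_adaptedNorm hN hone hΛ hpow p.1.2 p.2.2 x)
            (le_adaptedNorm hN hone hΛ hpow p.1.2 p.2.2 y)
  exists_mul_supNorm_le := by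
    obtain ⟨c, hc, hlower⟩ := hN.exists_mul_supNorm_le
    exact ⟨c, hc, fun x => (hlower x).trans (self_le_adaptedNorm hN hone hΛ hpow hm x)⟩

lemma adaptedNorm_mulVec_le (hm : 0 < m) {M : Matrix ι ι K} (hM : M ∈ 𝓜) (x : ι → K) :
    adaptedNorm N 𝓜 Λ m (M *ᵥ x) ≤ Λ * adaptedNorm N 𝓜 Λ m x := by
  have hself := self_le_adaptedNorm hN hone hΛ hpow hm x
  refine Real.iSup_le ?_ (mul_nonneg (by positivity) ((hN.nonneg x).trans hself))
  rintro ⟨⟨i, hi⟩, A, hA : A ∈ 𝓜 ^ i⟩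
  have hAM : A * M ∈ 𝓜 ^ (i + 1) := pow_succ 𝓜 i ▸ Set.mul_mem_mul hA hM
  change (Λ ^ i)⁻¹ * N (A *ᵥ (M *ᵥ x)) ≤ _
  rw [mulVec_mulVec]
  rcases (Nat.succ_le_of_lt hi).lt_or_eq with hlt | rfl
  · calc (Λ ^ i)⁻¹ * N ((A * M) *ᵥ x) = Λ * ((Λ ^ (i + 1))⁻¹ * N ((A * M) *ᵥ x)) := by
          field_simp
          ring
      _ ≤ Λ * adaptedNorm N 𝓜 Λ m x := by
          gcongr
          exact le_adaptedNorm hN hone hΛ hpow hlt hAM x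
  · calc (Λ ^ i)⁻¹ * N ((A * M) *ᵥ x) ≤ (Λ ^ i)⁻¹ * (Λ ^ (i + 1) * N x) := by
          gcongr
          exact hpow _ hAM x
      _ = Λ * N x := by
          field_simp
          ring
      _ ≤ Λ * adaptedNorm N 𝓜 Λ (i + 1) x := by gcongr

end

end AdaptedNorm

namespace ExpansionLE

variable {K ι : Type*} [Field K] {v : AbsoluteValue K ℝ} [Fintype ι] {𝓜 : Set (Matrix ι ι K)}
  {Λ Λ' : ℝ}

lemma mono (h : ExpansionLE v 𝓜 Λ) (hΛ : Λ ≤ Λ') : ExpansionLE v 𝓜 Λ' := by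
  obtain ⟨N, hN, h⟩ := h
  exact ⟨N, hN, fun M hM x => (h M hM x).trans (mul_le_mul_of_nonneg_right hΛ (hN.nonneg x))⟩

lemma of_pow [DecidableEq ι] (hone : 1 ∈ 𝓜) (hΛ : 1 ≤ Λ) {m : ℕ} (hm : 0 < m)
    (h : ExpansionLE v (𝓜 ^ m) (Λ ^ m)) : ExpansionLE v 𝓜 Λ := by
  obtain ⟨N, hN, hpow⟩ := h
  exact ⟨_, isNorm_adaptedNorm hN hone hΛ hpow hm,
    fun _ hM => adaptedNorm_mulVec_le hN hone hΛ hpow hm hM⟩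

lemma of_abv_conj_le [DecidableEq ι] (Q : (Matrix ι ι K)ˣ) {B : ℝ} (hB : 0 ≤ B)
    (h : ∀ M ∈ 𝓜, ∀ i k, v ((Q⁻¹.val * M * Q.val) i k) ≤ B) :
    ExpansionLE v 𝓜 (Fintype.card ι * B) := by
  refine ⟨_, isNorm_supNorm_mulVec v Q⁻¹, fun M hM x => ?_⟩
  have hconj := supNorm_mulVec_le v _ (Q⁻¹.val *ᵥ x) hB (h M hM)
  rwa [mulVec_mulVec, mul_assoc, Q.mul_inv, mul_one, ← mulVec_mulVec] at hconj

lemma of_finite (h𝓜 : 𝓜.Finite) (v : AbsoluteValue K ℝ) : ∃ Λ, ExpansionLE v 𝓜 Λ := by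
  choose c hc0 hc using exists_abv_entry_le (ι := ι) v
  obtain ⟨B, hB⟩ := (h𝓜.image c).bddAbove
  refine ⟨Fintype.card ι * B, _, IsNorm.supNorm v, fun M hM x => ?_⟩
  have hMB : c M ≤ B := hB ⟨M, hM, rfl⟩
  exact supNorm_mulVec_le v M x ((hc0 M).trans hMB) fun i k => (hc M i k).trans hMB

lemma one_of_forall_abv_le_one (hv : ∀ a : K, v a ≤ 1) (𝓜 : Set (Matrix ι ι K)) :
    ExpansionLE v 𝓜 1 := by
  refine ⟨_, IsNorm.supNorm v, fun M _ x => ?_⟩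
  rw [one_mul]
  by_cases hx : x = 0
  · rw [hx, mulVec_zero]
  obtain ⟨i, hi⟩ := Function.ne_iff.1 hx
  have hxi : 1 ≤ v (x i) := by
    have hinv := hv (x i)⁻¹
    rwa [map_inv₀, inv_le_one₀ (v.pos hi)] at hinv
  exact (supNorm_le v zero_le_one fun k => hv _).trans (hxi.trans (le_supNorm v x i))

end ExpansionLE

section Places

variable {K V : Type*} [Field K] [Fintype V]

/-- A finite family of absolute values on a field and a subring on which they satisfy the product
inequality, such as the `S`-integers of a number field and the places that are archimedean or in
`S`. -/
structure PlaceSystem (K V : Type*) [Field K] [Fintype V] where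
  abv : V → AbsoluteValue K ℝ
  integers : Subring K
  one_le_prod : ∀ x ∈ integers, x ≠ 0 → 1 ≤ ∏ u, abv u x

lemma PlaceSystem.inv_pow_card_le_abv (𝓕 : PlaceSystem K V) {x : K} (hx : x ∈ 𝓕.integers)
    (hx0 : x ≠ 0) {B : ℝ} (hB : 1 ≤ B) (h : ∀ u, 𝓕.abv u x ≤ B) (u : V) :
    (B ^ Fintype.card V)⁻¹ ≤ 𝓕.abv u x := by
  classical
  rw [inv_le_iff_one_le_mul₀ (by positivity)]
  have hothers : ∏ u' ∈ Finset.univ.erase u, 𝓕.abv u' x ≤ B ^ Fintype.card V :=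
    calc ∏ u' ∈ Finset.univ.erase u, 𝓕.abv u' x ≤ ∏ _u' ∈ Finset.univ.erase u, B :=
          Finset.prod_le_prod (fun _ _ => (𝓕.abv _).nonneg _) fun u' _ => h u'
      _ = B ^ (Finset.univ.erase u).card := Finset.prod_const B
      _ ≤ B ^ Fintype.card V := pow_le_pow_right₀ hB (Finset.card_le_univ _)
  calc 1 ≤ ∏ u', 𝓕.abv u' x := 𝓕.one_le_prod x hx hx0
    _ = 𝓕.abv u x * ∏ u' ∈ Finset.univ.erase u, 𝓕.abv u' x :=
        (Finset.mul_prod_erase _ _ (Finset.mem_univ u)).symm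
    _ ≤ 𝓕.abv u x * B ^ Fintype.card V :=
        mul_le_mul_of_nonneg_left hothers ((𝓕.abv u).nonneg _)

end Places

lemma det_mem_of_forall_mem {A κ : Type*} [CommRing A] [Fintype κ] [DecidableEq κ] (O : Subring A)
    {M : Matrix κ κ A} (h : ∀ i k, M i k ∈ O) : M.det ∈ O := by
  have hlift : M = O.subtype.mapMatrix (Matrix.of fun i k => ⟨M i k, h i k⟩) := rfl
  rw [hlift, ← RingHom.map_det]
  exact SetLike.coe_mem _

section ConjRep

variable {Γ K ι : Type*} [Group Γ] [Field K] [Fintype ι] [DecidableEq ι] (ρ : Γ →* Matrix ι ι K)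
  (Q : (Matrix ι ι K)ˣ)

/-- The representation `ρ` in the basis formed by the columns of `Q`. -/
def conjRep : Γ →* Matrix ι ι K where
  toFun γ := Q⁻¹.val * ρ γ * Q.val
  map_one' := by simp
  map_mul' a b := by simp only [map_mul, mul_assoc, Units.mul_inv_cancel_left]

lemma conjRep_apply (γ : Γ) : conjRep ρ Q γ = Q⁻¹.val * ρ γ * Q.val := rfl

lemma traceGram_conjRep {κ : Type*} (w : κ → Γ) :
    (traceGram fun i => conjRep ρ Q (w i)) = traceGram fun i => ρ (w i) := by
  ext i l
  simp only [traceGram, of_apply, ← map_mul]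
  exact trace_units_conj' Q _

lemma StronglySpanning.conjRep {ρ : Γ →* Matrix ι ι K} (h : StronglySpanning ρ) :
    StronglySpanning (conjRep ρ Q) := fun H hH => by
  let e := (MulSemiringAction.toAlgEquiv K (Matrix ι ι K) (ConjAct.toConjAct Q⁻¹)).toLinearEquiv
  have he (X : Matrix ι ι K) : e X = Q⁻¹.val * X * Q.val := by
    rw [AlgEquiv.toLinearEquiv_apply, MulSemiringAction.toAlgEquiv_apply, ConjAct.units_smul_def,
      ConjAct.ofConjAct_toConjAct, inv_inv]
  have himage : UniformKazhdan.conjRep ρ Q '' H = e.toLinearMap '' (ρ '' H) := by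
    rw [Set.image_image]
    exact Set.image_congr fun γ _ => (he _).symm
  rw [himage, ← Submodule.map_span, h H hH, Submodule.map_top, LinearEquiv.range]

lemma AlmostInvariant.conjRep {ρ : Γ →* Matrix ι ι K} {m : Set (ι → K) → ℝ} {δ : ℝ} {γ : Γ}
    (h : AlmostInvariant m (cones K (ι → K)) δ (ρ γ *ᵥ ·)) :
    AlmostInvariant (fun B => m ((Q⁻¹.val *ᵥ ·) ⁻¹' B)) (cones K (ι → K)) δ
      (conjRep ρ Q γ *ᵥ ·) := by
  refine h.map (fun _ hB => preimage_mem_cones _ hB) fun B _ => ?_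
  ext x
  simp only [Set.mem_preimage, mulVec_mulVec, conjRep_apply, mul_assoc, Units.mul_inv, mul_one]

end ConjRep

section TraceGram

variable {K ι κ : Type*} [Field K] [Fintype ι] [DecidableEq ι] [Fintype κ] [DecidableEq κ]
  {v : AbsoluteValue K ℝ} {𝓜 : Set (Matrix ι ι K)} {Λ : ℝ}

lemma ExpansionLE.abv_trace_le (h : ExpansionLE v 𝓜 Λ) (hΛ : 0 ≤ Λ) {L : ℕ} {M : Matrix ι ι K}
    (hM : M ∈ 𝓜 ^ L) : v M.trace ≤ Fintype.card ι * (2 * Λ ^ L) := by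
  obtain ⟨N, hN, h⟩ := h
  exact hN.abv_trace_le (mulVec_le_pow_mul hΛ h L M hM)

lemma ExpansionLE.abv_det_traceGram_le (h : ExpansionLE v 𝓜 Λ) (hΛ : 0 ≤ Λ) {L : ℕ}
    {w : κ → Matrix ι ι K} (hw : ∀ i, w i ∈ 𝓜 ^ L) :
    v (traceGram w).det ≤
      (Fintype.card κ).factorial * (Fintype.card ι * (2 * Λ ^ (L + L))) ^ Fintype.card κ := by
  rw [← nsmul_eq_mul]
  exact Matrix.det_le fun i l =>
    h.abv_trace_le hΛ (pow_add 𝓜 L L ▸ Set.mul_mem_mul (hw i) (hw l))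

end TraceGram

/-- A generating set on which the expansion of `ρ` at the place `u` is, up to a factor two, the
maximum over all places, together with a mean on `ι → K` which is almost invariant on cones under
long words. The quality of both improves with `j`. -/
structure CriticalScale {Γ K V ι : Type*} [Group Γ] [Field K] [Fintype ι] [DecidableEq ι]
    (ρ : Γ →* Matrix ι ι K) (abv : V → AbsoluteValue K ℝ) (u : V) (j : ℕ) where
  gens : Set Γ
  isSymmGen : IsSymmGen gens
  ratio : ℝ
  four_le : 4 ≤ ratio
  two_pow_le : 2 ^ j ≤ ratio
  expansionLE : ∀ u', ExpansionLE (abv u') (ρ '' gens) ratio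
  not_expansionLE : ¬ ExpansionLE (abv u) (ρ '' gens) (ratio / 2)
  mean : Set (ι → K) → ℝ
  isMean : IsMean mean
  mean_zero : mean {0} = 0
  almostInvariant : ∀ t ∈ gens ^ (2 * (3 * j + Fintype.card ι)),
    AlmostInvariant mean (cones K (ι → K)) (1 / (j + 1)) (ρ t *ᵥ ·)

namespace CriticalScale

variable {Γ K V ι : Type*} [Group Γ] [Field K] [Fintype ι] [DecidableEq ι]
  {ρ : Γ →* Matrix ι ι K}

section

variable {abv : V → AbsoluteValue K ℝ} {u : V} {j : ℕ}

def anti (𝓒 : CriticalScale ρ abv u j) {i : ℕ} (hij : i ≤ j) : CriticalScale ρ abv u i where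
  __ := 𝓒
  two_pow_le := (pow_le_pow_right₀ one_le_two hij).trans 𝓒.two_pow_le
  almostInvariant t ht := by
    refine (𝓒.almostInvariant t (𝓒.isSymmGen.pow_subset_pow (by gcongr) ht)).mono ?_
    gcongr

lemma exists_one_lt_abv (𝓒 : CriticalScale ρ abv u j) : ∃ c, 1 < abv u c := by
  by_contra! h
  exact 𝓒.not_expansionLE ((ExpansionLE.one_of_forall_abv_le_one h _).mono (by
    linarith [𝓒.four_le]))

lemma exists_abv_conjRep_le (𝓒 : CriticalScale ρ abv u j) {c : K} (hc : 1 < abv u c)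
    (hratio : 2 * abv u c ≤ 𝓒.ratio) : ∃ Q : (Matrix ι ι K)ˣ, ∀ t ∈ 𝓒.gens, ∀ i k,
      abv u (conjRep ρ Q t i k) ≤ 𝓒.ratio ^ 2 := by
  obtain ⟨N, hN, h⟩ := 𝓒.expansionLE u
  obtain ⟨Q, hQ⟩ := hN.exists_abv_conj_le hc
  refine ⟨Q, fun t ht i k => ?_⟩
  have hpos : 0 < 𝓒.ratio := by linarith [𝓒.four_le]
  rw [conjRep_apply]
  calc abv u ((Q⁻¹.val * ρ t * Q.val) i k) ≤ 2 * 𝓒.ratio * abv u c :=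
        hQ (ρ t) 𝓒.ratio hpos.le (h _ ⟨t, ht, rfl⟩) i k
    _ = 2 * abv u c * 𝓒.ratio := by ring
    _ ≤ 𝓒.ratio ^ 2 := by rw [sq]; gcongr

/-- Were all entries of words of length `2 * (3 * j + card ι)` small in some basis, the expansion
would be at most the square root of `ratio`, which is at most `ratio / 2`. -/
lemma exists_lt_abv_conjRep [Nonempty ι] (𝓒 : CriticalScale ρ abv u j) (Q : (Matrix ι ι K)ˣ) :
    ∃ t ∈ 𝓒.gens ^ (2 * (3 * j + Fintype.card ι)), ∃ i k,
      𝓒.ratio ^ (3 * j) < abv u (conjRep ρ Q t i k) := by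
  by_contra! hsmall
  have hfour := 𝓒.four_le
  have hcard : (Fintype.card ι : ℝ) ≤ 𝓒.ratio ^ Fintype.card ι :=
    calc (Fintype.card ι : ℝ) ≤ 2 ^ Fintype.card ι := mod_cast Nat.lt_two_pow_self.le
      _ ≤ 𝓒.ratio ^ Fintype.card ι := pow_le_pow_left₀ zero_le_two (by linarith) _
  refine 𝓒.not_expansionLE (.of_pow ⟨1, 𝓒.isSymmGen.one_mem, map_one ρ⟩ (by linarith)
    (m := 2 * (3 * j + Fintype.card ι)) (by have := Fintype.card_pos (α := ι); omega) ?_)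
  rw [← Set.image_pow]
  refine (ExpansionLE.of_abv_conj_le Q (B := 𝓒.ratio ^ (3 * j)) (by positivity)
    (Set.forall_mem_image.2 hsmall)).mono ?_
  calc Fintype.card ι * 𝓒.ratio ^ (3 * j)
      ≤ 𝓒.ratio ^ Fintype.card ι * 𝓒.ratio ^ (3 * j) := by gcongr
    _ = 𝓒.ratio ^ (3 * j + Fintype.card ι) := by rw [← pow_add, add_comm]
    _ ≤ ((𝓒.ratio / 2) ^ 2) ^ (3 * j + Fintype.card ι) := by gcongr; nlinarith
    _ = (𝓒.ratio / 2) ^ (2 * (3 * j + Fintype.card ι)) := (pow_mul _ _ _).symm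

end

variable [Fintype V] {𝓕 : PlaceSystem K V} {u : V}

lemma exists_inv_pow_le_abv_det_traceGram (hρ : ∀ γ i k, ρ γ i k ∈ 𝓕.integers)
    (κ : Type*) [Fintype κ] [DecidableEq κ] (L : ℕ) :
    ∃ e : ℕ, ∀ j, ∀ 𝓒 : CriticalScale ρ 𝓕.abv u j, ∀ w : κ → Γ, (∀ i, w i ∈ 𝓒.gens ^ L) →
      (traceGram fun i => ρ (w i)).det ≠ 0 →
        (𝓒.ratio ^ e)⁻¹ ≤ 𝓕.abv u (traceGram fun i => ρ (w i)).det := by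
  let d := Fintype.card κ
  let e := d.factorial + (Fintype.card ι + (1 + (L + L))) * d
  refine ⟨e * Fintype.card V, fun j 𝓒 w hw hdet => ?_⟩
  have htwo : 2 ≤ 𝓒.ratio := by linarith [𝓒.four_le]
  have hnat (n : ℕ) : (n : ℝ) ≤ 𝓒.ratio ^ n :=
    GrowthScale.natCast_le_pow ⟨fun _ => 𝓒.ratio, fun _ => htwo⟩ n 0
  rw [pow_mul]
  refine 𝓕.inv_pow_card_le_abv (det_mem_of_forall_mem _ fun i l => ?_) hdet
    (one_le_pow₀ (by linarith)) (fun u' => ?_) u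
  · simp only [traceGram, of_apply, ← map_mul]
    exact sum_mem fun i _ => hρ _ i i
  · calc 𝓕.abv u' (traceGram fun i => ρ (w i)).det
        ≤ d.factorial * (Fintype.card ι * (2 * 𝓒.ratio ^ (L + L))) ^ d :=
          (𝓒.expansionLE u').abv_det_traceGram_le (by linarith) fun i => by
            rw [← Set.image_pow]
            exact Set.mem_image_of_mem ρ (hw i)
      _ ≤ 𝓒.ratio ^ d.factorial *
          (𝓒.ratio ^ Fintype.card ι * (𝓒.ratio ^ 1 * 𝓒.ratio ^ (L + L))) ^ d := by
          gcongr
          · exact hnat _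
          · exact hnat _
          · rwa [pow_one]
      _ = 𝓒.ratio ^ e := by simp only [e, pow_add, pow_mul]

variable (hdet : ∀ γ, (ρ γ).det = 1) (hspan : StronglySpanning ρ)
  (hρ : ∀ γ i k, ρ γ i k ∈ 𝓕.integers)

include hdet hspan hρ

lemma false_of_two_mul_abv_le [Nonempty ι] (𝓒 : ∀ j, CriticalScale ρ 𝓕.abv u j) {c : K}
    (hc : 1 < 𝓕.abv u c) (hratio : ∀ j, 2 * 𝓕.abv u c ≤ (𝓒 j).ratio) : False := by
  choose Q hQ using fun j => (𝓒 j).exists_abv_conjRep_le hc (hratio j)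
  let R : GrowthScale := ⟨fun j => (𝓒 j).ratio, fun j => by linarith [(𝓒 j).four_le]⟩
  let 𝓐 : RepSequence (𝓕.abv u) R Γ ι :=
    ⟨fun j => (𝓒 j).gens, fun j => (𝓒 j).isSymmGen, fun j => conjRep ρ (Q j), 2, hQ⟩
  refine 𝓐.false_of_almostInvariant (m := fun j B => (𝓒 j).mean (((Q j)⁻¹.val *ᵥ ·) ⁻¹' B))
    (fun j γ => (det_units_conj' (Q j) (ρ γ)).trans (hdet γ)) (fun j => (𝓒 j).isMean.map _)
    (fun j => ?_) (fun j t ht => ?_) (fun j => ?_) (fun j => hspan.conjRep (Q j)) fun L => ?_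
  · have hzero : ((Q j)⁻¹.val *ᵥ ·) ⁻¹' {0} = {(0 : ι → K)} := by
      ext x
      exact (mulVec_injective_of_isUnit (Q j)⁻¹.isUnit).eq_iff' (mulVec_zero _)
    exact (congrArg (𝓒 j).mean hzero).trans (𝓒 j).mean_zero
  · exact ((𝓒 j).almostInvariant t ((𝓒 j).isSymmGen.pow_subset_pow (by omega) ht)).conjRep (Q j)
  · obtain ⟨t, ht, i, k, hlarge⟩ := (𝓒 j).exists_lt_abv_conjRep (Q j)
    exact ⟨t, ⟨i, k, hlarge.le⟩, ((𝓒 j).almostInvariant t ht).conjRep (Q j)⟩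
  · obtain ⟨e, he⟩ := exists_inv_pow_le_abv_det_traceGram (u := u) hρ (ι × ι) L
    refine ⟨e, fun j w hw hli => ?_⟩
    have hne := det_traceGram_ne_zero hli
      (hli.span_eq_top_of_card_eq_finrank' (by simp [Module.finrank_matrix]))
    have hgram : (traceGram fun i => 𝓐.rep j (w i)) = traceGram fun i => ρ (w i) :=
      traceGram_conjRep ρ (Q j) w
    rw [hgram] at hne ⊢
    exact he j (𝓒 j) w hw hne

theorem not_forall_nonempty [Nonempty ι] : ¬ ∀ j, Nonempty (CriticalScale ρ 𝓕.abv u j) := by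
  intro h
  let 𝓒 j := (h j).some
  obtain ⟨c, hc⟩ := (𝓒 0).exists_one_lt_abv
  obtain ⟨J, hJ⟩ := pow_unbounded_of_one_lt (2 * 𝓕.abv u c) (one_lt_two : (1 : ℝ) < 2)
  refine false_of_two_mul_abv_le hdet hspan hρ (fun j => (𝓒 (j + J)).anti (j.le_add_right J)) hc
    fun j => ?_
  calc 2 * 𝓕.abv u c ≤ 2 ^ J := hJ.le
    _ ≤ 2 ^ (j + J) := pow_le_pow_right₀ one_le_two (Nat.le_add_left J j)
    _ ≤ (𝓒 (j + J)).ratio := (𝓒 (j + J)).two_pow_le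

end CriticalScale

lemma finite_pow {M : Type*} [Monoid M] {S : Set M} (hS : S.Finite) (k : ℕ) : (S ^ k).Finite := by
  induction k with
  | zero => simp
  | succ k ih => exact pow_succ S k ▸ ih.mul hS

section LinearAction

variable {Γ K V ι : Type*} [Group Γ] [Field K] [Finite V] [Fintype ι] [DecidableEq ι]
  {ρ : Γ →* Matrix ι ι K}

lemma exists_forall_expansionLE_two_pow (abv : V → AbsoluteValue K ℝ) {T : Set Γ}
    (hT : T.Finite) : ∃ k : ℕ, ∀ u, ExpansionLE (abv u) (ρ '' T) (2 ^ k) := by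
  choose Λ hΛ using fun u => ExpansionLE.of_finite (hT.image ρ) (abv u)
  obtain ⟨B, hB⟩ := (Set.finite_range Λ).bddAbove
  obtain ⟨k, hk⟩ := pow_unbounded_of_one_lt B (one_lt_two : (1 : ℝ) < 2)
  exact ⟨k, fun u => (hΛ u).mono ((hB ⟨u, rfl⟩).trans hk.le)⟩

/-- The powers of two which bound the expansion of the words of length `p * (j + 1)` at all places
have a least element, and it exceeds `2 ^ (j + 1)`. -/
lemma exists_nonempty_criticalScale {abv : V → AbsoluteValue K ℝ} {S : Set Γ} (hS : IsSymmGen S)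
    (hfin : S.Finite) {p : ℕ} (hp : 0 < p) (hexp : ∃ u, ¬ ExpansionLE (abv u) (ρ '' (S ^ p)) 2)
    {m : Set (ι → K) → ℝ} (hm : IsMean m) (hm0 : m {0} = 0) {j : ℕ} {δ : ℝ}
    (hδ : ↑(p * (j + 1) * (2 * (3 * j + Fintype.card ι))) * δ ≤ 1 / (j + 1))
    (hinv : ∀ s ∈ S, AlmostInvariant m (cones K (ι → K)) δ (ρ s *ᵥ ·)) :
    ∃ u, Nonempty (CriticalScale ρ abv u j) := by
  classical
  have hbounded := exists_forall_expansionLE_two_pow (ρ := ρ) abv (finite_pow hfin (p * (j + 1)))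
  let k := Nat.find hbounded
  have hk : ∀ u, ExpansionLE (abv u) (ρ '' (S ^ (p * (j + 1)))) (2 ^ k) := Nat.find_spec hbounded
  have hjk : j + 1 < k := by
    by_contra! hkj
    obtain ⟨u, hu⟩ := hexp
    refine hu (.of_pow ⟨1, Set.one_mem_pow hS.one_mem, map_one ρ⟩ one_le_two j.succ_pos ?_)
    rw [← Set.image_pow, ← pow_mul]
    exact (hk u).mono (pow_le_pow_right₀ one_le_two hkj)
  obtain ⟨u, hu⟩ := not_forall.1 (Nat.find_min hbounded (Nat.sub_one_lt_of_lt hjk))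
  have hhalf : (2 : ℝ) ^ (k - 1) = 2 ^ k / 2 := by
    rw [eq_div_iff two_ne_zero, pow_sub_one_mul (by omega)]
  have hfour : (4 : ℝ) ≤ 2 ^ k :=
    calc (4 : ℝ) = 2 ^ 2 := by norm_num
      _ ≤ 2 ^ k := pow_le_pow_right₀ one_le_two (by omega)
  refine ⟨u, ⟨{
    gens := S ^ (p * (j + 1))
    isSymmGen := hS.pow (by positivity)
    ratio := 2 ^ k
    four_le := hfour
    two_pow_le := pow_le_pow_right₀ one_le_two (by omega)
    expansionLE := hk
    not_expansionLE := hhalf ▸ hu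
    mean := m
    isMean := hm
    mean_zero := hm0
    almostInvariant := fun t ht =>
      (almostInvariant_mulVec_of_mem_pow ρ hinv _ (pow_mul S _ _ ▸ ht)).mono hδ }⟩⟩

omit [Finite V] in
theorem exists_not_almostInvariant_cones [Fintype V] [Nonempty ι] (hdet : ∀ γ, (ρ γ).det = 1)
    (hspan : StronglySpanning ρ) (𝓕 : PlaceSystem K V) (hρ : ∀ γ i k, ρ γ i k ∈ 𝓕.integers)
    {p : ℕ} (hp : 0 < p) (hexp : ∀ S : Set Γ, S.Finite → IsSymmGen S →
      ∃ u, ¬ ExpansionLE (𝓕.abv u) (ρ '' (S ^ p)) 2) :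
    ∃ ε > 0, ∀ S : Set Γ, S.Finite → IsSymmGen S → ∀ m : Set (ι → K) → ℝ, IsMean m → m {0} = 0 →
      ∃ s ∈ S, ¬ AlmostInvariant m (cones K (ι → K)) ε (ρ s *ᵥ ·) := by
  by_contra! hcon
  have hscale (j : ℕ) : ∃ u, Nonempty (CriticalScale ρ 𝓕.abv u j) := by
    let q := p * (j + 1) * (2 * (3 * j + Fintype.card ι))
    obtain ⟨S, hfin, hS, m, hm, hm0, hinv⟩ := hcon (1 / ((j + 1) * (q + 1))) (by positivity)
    refine exists_nonempty_criticalScale hS hfin hp (hexp S hfin hS) hm hm0 ?_ hinv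
    rw [mul_one_div, div_le_div_iff₀ (by positivity) (by positivity)]
    nlinarith
  choose u hu using hscale
  obtain ⟨u₀, hu₀⟩ := Finite.exists_infinite_fiber u
  refine CriticalScale.not_forall_nonempty (u := u₀) hdet hspan hρ fun j => ?_
  obtain ⟨i, rfl, hij⟩ := (Set.infinite_coe_iff.1 hu₀).exists_gt j
  exact (hu i).map fun 𝓒 => 𝓒.anti hij.le

end LinearAction

/-- Uniform non-amenability: no mean on `G` is almost invariant under a finite generating set, with
a constant independent of the generating set. -/
def UniformlyNonamenable (G : Type*) [Group G] : Prop :=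
  ∃ ε > 0, ∀ S : Set G, S.Finite → IsSymmGen S → ∀ m : Set G → ℝ, IsMean m →
    ∃ s ∈ S, ¬AlmostInvariant m Set.univ ε (s * ·)

section SquareSummable

variable {X E : Type*} [NormedAddCommGroup E]

lemma isMean_tsum_indicator_div {w : X → ℝ} (hw : ∀ x, 0 ≤ w x) (hsum : Summable w)
    (hpos : 0 < ∑' x, w x) : IsMean fun A => (∑' x, A.indicator w x) / ∑' x, w x where
  nonneg A := div_nonneg (tsum_nonneg fun x => Set.indicator_nonneg (fun y _ => hw y) x) hpos.le
  univ := by rw [Set.indicator_univ, div_self hpos.ne']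
  union A B hAB := by
    rw [← add_div, ← (hsum.indicator A).tsum_add (hsum.indicator B),
      Set.indicator_union_of_disjoint hAB]

lemma abs_norm_sq_sub_norm_sq_le {ε : ℝ} (hε : 0 < ε) (a b : E) :
    |‖a‖ ^ 2 - ‖b‖ ^ 2| ≤ ε / 4 * (‖a‖ ^ 2 + ‖b‖ ^ 2) + 2 / ε * ‖a - b‖ ^ 2 := by
  have hfactor : |‖a‖ ^ 2 - ‖b‖ ^ 2| ≤ (‖a‖ + ‖b‖) * ‖a - b‖ := by
    rw [sq_sub_sq, abs_mul, abs_of_nonneg (add_nonneg (norm_nonneg a) (norm_nonneg b))]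
    exact mul_le_mul_of_nonneg_left (abs_norm_sub_norm_le a b) (by positivity)
  have hsquares : ε / 4 * (‖a‖ ^ 2 + ‖b‖ ^ 2) + 2 / ε * ‖a - b‖ ^ 2 - (‖a‖ + ‖b‖) * ‖a - b‖ =
      ε / 8 * (‖a‖ + ‖b‖ - 4 / ε * ‖a - b‖) ^ 2 + ε / 8 * (‖a‖ - ‖b‖) ^ 2 := by
    field_simp
    ring
  have : 0 ≤ ε / 8 * (‖a‖ + ‖b‖ - 4 / ε * ‖a - b‖) ^ 2 + ε / 8 * (‖a‖ - ‖b‖) ^ 2 := by positivity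
  linarith

lemma summable_norm_sub_sq {f g : X → E} (hf : Summable fun x => ‖f x‖ ^ 2)
    (hg : Summable fun x => ‖g x‖ ^ 2) : Summable fun x => ‖f x - g x‖ ^ 2 :=
  ((hf.add hg).mul_left 2).of_nonneg_of_le (fun _ => by positivity) fun x => by
    nlinarith [norm_sub_le (f x) (g x), norm_nonneg (f x - g x), sq_nonneg (‖f x‖ - ‖g x‖)]

lemma abs_tsum_indicator_norm_sq_sub_le {f g : X → E} (hf : Summable fun x => ‖f x‖ ^ 2)
    (hg : Summable fun x => ‖g x‖ ^ 2) {ε : ℝ} (hε : 0 < ε) (A : Set X) :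
    |∑' x, A.indicator (fun x => ‖f x‖ ^ 2) x - ∑' x, A.indicator (fun x => ‖g x‖ ^ 2) x| ≤
      ε / 4 * (∑' x, ‖f x‖ ^ 2 + ∑' x, ‖g x‖ ^ 2) + 2 / ε * ∑' x, ‖f x - g x‖ ^ 2 := by
  have hbound := (((hf.hasSum.add hg.hasSum).mul_left (ε / 4)).add
    ((summable_norm_sub_sq hf hg).hasSum.mul_left (2 / ε)))
  rw [← (hf.indicator A).tsum_sub (hg.indicator A), ← Real.norm_eq_abs]
  refine tsum_of_norm_bounded hbound fun x => ?_
  by_cases hx : x ∈ A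
  · simp only [Set.indicator_of_mem hx, Real.norm_eq_abs]
    exact abs_norm_sq_sub_norm_sq_le hε (f x) (g x)
  · simp only [Set.indicator_of_notMem hx, sub_zero, norm_zero]
    positivity

variable {G : Type*} [Group G]

lemma almostInvariant_of_tsum_norm_sub_sq_le {f : G → E} (hf : Summable fun x => ‖f x‖ ^ 2)
    (hpos : 0 < ∑' x, ‖f x‖ ^ 2) {ε : ℝ} (hε : 0 < ε) {s : G}
    (hs : ∑' x, ‖f (s⁻¹ * x) - f x‖ ^ 2 ≤ (ε / 2) ^ 2 * ∑' x, ‖f x‖ ^ 2) :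
    AlmostInvariant (fun A => (∑' x, A.indicator (fun x => ‖f x‖ ^ 2) x) / ∑' x, ‖f x‖ ^ 2)
      Set.univ ε (s * ·) := by
  intro A _
  have htranslate : ∑' x, ((s * ·) ⁻¹' A).indicator (fun x => ‖f x‖ ^ 2) x =
      ∑' x, A.indicator (fun x => ‖f (s⁻¹ * x)‖ ^ 2) x := by
    rw [← (Equiv.mulLeft s).tsum_eq (A.indicator fun x => ‖f (s⁻¹ * x)‖ ^ 2)]
    refine tsum_congr fun x => ?_
    rw [Equiv.coe_mulLeft, ← Set.indicator_comp_right (s * ·)]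
    simp only [Function.comp_def, inv_mul_cancel_left]
  have hf' : Summable fun x => ‖f (s⁻¹ * x)‖ ^ 2 := (Equiv.mulLeft s⁻¹).summable_iff.2 hf
  have hbound := abs_tsum_indicator_norm_sq_sub_le hf' hf hε A
  have hnorm : ∑' x, ‖f (s⁻¹ * x)‖ ^ 2 = ∑' x, ‖f x‖ ^ 2 :=
    (Equiv.mulLeft s⁻¹).tsum_eq fun x => ‖f x‖ ^ 2
  have hscaled := mul_le_mul_of_nonneg_left hs (by positivity : 0 ≤ 2 / ε)
  have hhalf : 2 / ε * ((ε / 2) ^ 2 * ∑' x, ‖f x‖ ^ 2) = ε / 2 * ∑' x, ‖f x‖ ^ 2 := by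
    field_simp
  rw [← sub_div, abs_div, abs_of_pos hpos, div_le_iff₀ hpos, htranslate]
  refine hbound.trans ?_
  rw [hnorm]
  linarith

theorem UniformlyNonamenable.exists_forall_mul_tsum_le (h : UniformlyNonamenable G) :
    ∃ ε > 0, ∀ S : Set G, S.Finite → IsSymmGen S → ∀ f : G → E, (Summable fun x => ‖f x‖ ^ 2) →
      ∃ s ∈ S, ε ^ 2 * ∑' x, ‖f x‖ ^ 2 ≤ ∑' x, ‖f (s⁻¹ * x) - f x‖ ^ 2 := by
  obtain ⟨ε, hε, h⟩ := h
  refine ⟨ε / 2, by positivity, fun S hfin hS f hf => ?_⟩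
  rcases (tsum_nonneg fun x => sq_nonneg ‖f x‖).eq_or_lt with hzero | hpos
  · exact ⟨1, hS.one_mem, by rw [← hzero, mul_zero]; exact tsum_nonneg fun _ => by positivity⟩
  · obtain ⟨s, hs, hinv⟩ :=
      h S hfin hS _ (isMean_tsum_indicator_div (fun x => sq_nonneg ‖f x‖) hf hpos)
    exact ⟨s, hs, le_of_not_ge fun hle =>
      hinv (almostInvariant_of_tsum_norm_sub_sq_le hf hpos hε hle)⟩

end SquareSummable

namespace IsSymmGen

variable {G : Type*} [Group G] {S : Set G}

lemma eq_univ_of_forall_smul_mem {X : Type*} [MulAction G X] [MulAction.IsPretransitive G X]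
    (hS : IsSymmGen S) {C : Set X} (hfin : C.Finite) (hC : C.Nonempty)
    (hstable : ∀ s ∈ S, ∀ x ∈ C, s • x ∈ C) : C = Set.univ := by
  have htop : MulAction.stabilizer G C = ⊤ := top_unique <| hS.closure_eq.ge.trans <|
    (Subgroup.closure_le _).2 fun s hs =>
      (MulAction.mem_stabilizer_set' hfin).2 fun {x} hx => hstable s hs x hx
  obtain ⟨x, hx⟩ := hC
  refine Set.eq_univ_of_forall fun y => ?_
  obtain ⟨g, rfl⟩ := MulAction.exists_smul_eq G x y
  exact (MulAction.mem_stabilizer_set' hfin).1 (htop ▸ Subgroup.mem_top g) hx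

lemma image_pow_smul_eq_univ_of_ncard_le {X : Type*} [MulAction G X]
    [MulAction.IsPretransitive G X] (hS : IsSymmGen S) {x : X}
    (hfin : ∀ k, ((· • x) '' (S ^ k)).Finite) {k : ℕ}
    (hk : ((· • x) '' (S ^ k)).ncard ≤ k) : (· • x) '' (S ^ k) = Set.univ := by
  have hmono : Monotone fun k => (· • x) '' (S ^ k) := fun _ _ h =>
    Set.image_mono (hS.pow_subset_pow h)
  have hgrow (k : ℕ) : (· • x) '' (S ^ k) = Set.univ ∨ k + 1 ≤ ((· • x) '' (S ^ k)).ncard := by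
    induction k with
    | zero => right; simp
    | succ k ih =>
      by_cases hk : (· • x) '' (S ^ (k + 1)) ⊆ (· • x) '' (S ^ k)
      · have huniv : (· • x) '' (S ^ k) = Set.univ := by
          refine hS.eq_univ_of_forall_smul_mem (hfin k)
            ⟨1 • x, 1, Set.one_mem_pow hS.one_mem, rfl⟩ ?_
          rintro s hs _ ⟨w, hw, rfl⟩
          exact hk ⟨s * w, pow_succ' S k ▸ Set.mul_mem_mul hs hw, mul_smul s w x⟩
        exact Or.inl (Set.univ_subset_iff.1 (huniv ▸ hmono k.le_succ))
      · refine ih.imp (fun h => absurd (h ▸ Set.subset_univ _) hk) fun h => ?_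
        exact Nat.succ_le_of_lt (h.trans_lt
          (Set.ncard_lt_ncard ⟨hmono k.le_succ, hk⟩ (hfin _)))
  exact (hgrow k).resolve_right (Nat.not_succ_le_self k <| ·.trans hk)

lemma exists_mem_pow_mul_inv_mem (hS : IsSymmGen S) (H : Subgroup G) [H.FiniteIndex] (g : G) :
    ∃ w ∈ S ^ H.index, g * w⁻¹ ∈ H := by
  have hg : (QuotientGroup.mk g⁻¹ : G ⧸ H) ∈
      (· • (QuotientGroup.mk 1 : G ⧸ H)) '' (S ^ H.index) := by
    have huniv := hS.image_pow_smul_eq_univ_of_ncard_le (x := (QuotientGroup.mk 1 : G ⧸ H))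
      (fun _ => Set.toFinite _) (k := H.index) (Set.ncard_le_card _)
    exact huniv ▸ Set.mem_univ _
  obtain ⟨w, hw, hwg⟩ := hg
  have hwgH : w⁻¹ * g⁻¹ ∈ H := QuotientGroup.eq.1 (by simpa using hwg)
  exact ⟨w⁻¹, hS.inv_mem_pow hw, by simpa using H.inv_mem hwgH⟩

/-- Schreier's lemma, with coset representatives of length at most the index. -/
lemma subtype_preimage_pow (hS : IsSymmGen S) (H : Subgroup G) [H.FiniteIndex] :
    IsSymmGen (H.subtype ⁻¹' (S ^ (2 * H.index + 1))) where
  one_mem := Set.one_mem_pow hS.one_mem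
  inv_mem _ hs := hS.inv_mem_pow hs
  closure_eq := by
    set Z := H.subtype ⁻¹' (S ^ (2 * H.index + 1))
    set Δ := (Subgroup.closure Z).map H.subtype
    have hΔ {g : G} (hg : g ∈ S ^ (2 * H.index + 1)) (hgH : g ∈ H) : g ∈ Δ :=
      ⟨⟨g, hgH⟩, Subgroup.subset_closure hg, rfl⟩
    have hΔH : Δ ≤ H := Subgroup.map_subtype_le _
    have hrep (w : ↥(S ^ H.index)) (s : G) (hs : s ∈ S) :
        ∃ w' : ↥(S ^ H.index), w * s * (w' : G)⁻¹ ∈ Δ := by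
      obtain ⟨w', hw', hmem⟩ := hS.exists_mem_pow_mul_inv_mem H (w * s)
      refine ⟨⟨w', hw'⟩, hΔ ?_ hmem⟩
      rw [show 2 * H.index + 1 = H.index + 1 + H.index by ring, pow_add, pow_succ]
      exact Set.mul_mem_mul (Set.mul_mem_mul w.2 hs) (hS.inv_mem_pow hw')
    have hHΔ : H ≤ Δ := fun g hg => by
      obtain ⟨w, hw⟩ := hS.exists_mul_mul_inv_mem Subtype.val ⟨1, Set.one_mem_pow hS.one_mem⟩ hrep g
      have hw' : (g * (w : G)⁻¹) ∈ Δ := by simpa using hw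
      have hwH : (w : G) ∈ H := by simpa using H.mul_mem (H.inv_mem (hΔH hw')) hg
      simpa using Δ.mul_mem hw' (hΔ (hS.pow_subset_pow (by lia) w.2) hwH)
    refine Subgroup.map_injective H.subtype_injective ?_
    rw [← MonoidHom.range_eq_map, H.range_subtype]
    exact le_antisymm hΔH hHΔ

lemma preimage {Γ : Type*} [Group Γ] (hS : IsSymmGen S) {p : Γ →* G}
    (hp : Function.Surjective p) : IsSymmGen (p ⁻¹' S) where
  one_mem := by simpa using hS.one_mem
  inv_mem s hs := by simpa using hS.inv_mem _ hs
  closure_eq := by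
    have hker : p.ker ≤ Subgroup.closure (p ⁻¹' S) := fun z hz =>
      Subgroup.subset_closure (by simpa [MonoidHom.mem_ker.1 hz] using hS.one_mem)
    rw [← Subgroup.comap_map_eq_self hker, MonoidHom.map_closure, Set.image_preimage_eq S hp,
      hS.closure_eq, Subgroup.comap_top]

end IsSymmGen

lemma exists_subgroup_equivariant_map {G : Type*} [Group G] (H : Subgroup G) :
    ∃ π : G → H, ∀ (h : H) (g : G), π (h * g) = h * π g := by
  have hmem (g : G) : g * (QuotientGroup.mk g⁻¹ : G ⧸ H).out ∈ H := by
    simpa using QuotientGroup.eq.1 (QuotientGroup.out_eq' (QuotientGroup.mk g⁻¹ : G ⧸ H)).symm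
  refine ⟨fun g => ⟨_, hmem g⟩, fun h g => Subtype.ext ?_⟩
  have hcoset : (QuotientGroup.mk ((h : G) * g)⁻¹ : G ⧸ H) = QuotientGroup.mk g⁻¹ := by
    simp
  simp only [hcoset, Subgroup.coe_mul, mul_assoc]

theorem UniformlyNonamenable.of_finiteIndex {G : Type*} [Group G] (H : Subgroup G)
    [H.FiniteIndex] (h : UniformlyNonamenable H) : UniformlyNonamenable G := by
  obtain ⟨ε, hε, h⟩ := h
  obtain ⟨π, hπ⟩ := exists_subgroup_equivariant_map H
  set q := 2 * H.index + 1
  refine ⟨ε / q, by positivity, fun S hfin hS m hm => ?_⟩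
  by_contra! hinv
  have hfin' : (H.subtype ⁻¹' (S ^ q)).Finite :=
    (finite_pow hfin q).preimage H.subtype_injective.injOn
  obtain ⟨s, hs, hnot⟩ := h _ hfin' (hS.subtype_preimage_pow H) _ (hm.map π)
  have hword : AlmostInvariant m Set.univ ε ((s : G) * ·) := by
    have := AlmostInvariant.of_mem_pow (a := fun s : G => (s * ·)) (by funext x; simp)
      (fun s t => by funext x; simp [mul_assoc]) (fun _ _ _ _ => Set.mem_univ _) hinv q hs
    rwa [mul_div_cancel₀ ε (by positivity)] at this
  refine hnot (hword.map (fun _ _ => Set.mem_univ _) fun C _ => ?_)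
  ext g
  simp only [Set.mem_preimage, hπ]

section FiniteKernel

variable {Γ G K ι : Type*} [Group Γ] [Group G] [Field K] [Fintype ι] [DecidableEq ι]

lemma finite_preimage_of_finite_ker {p : Γ →* G} (hker : (p.ker : Set Γ).Finite) {S : Set G}
    (hS : S.Finite) : (p ⁻¹' S).Finite := by
  refine hS.preimage' fun g _ => ?_
  rcases (p ⁻¹' {g}).eq_empty_or_nonempty with hempty | ⟨x, hx⟩
  · exact hempty ▸ Set.finite_empty
  · refine (hker.image (x * ·)).subset fun y hy => ⟨x⁻¹ * y, ?_, mul_inv_cancel_left x y⟩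
    have hxy : p y = p x := hy.trans hx.symm
    simp [MonoidHom.mem_ker, hxy]

lemma mulVec_mem_iff_of_map_eq {p : Γ →* G} {ρ : Γ →* Matrix ι ι K}
    (hscalar : ∀ z ∈ p.ker, ∃ c : K, ρ z = c • 1) {B : Set (ι → K)} (hB : B ∈ cones K (ι → K))
    {γ γ' : Γ} (hγ : p γ = p γ') (x : ι → K) : ρ γ *ᵥ x ∈ B ↔ ρ γ' *ᵥ x ∈ B := by
  suffices himp : ∀ γ γ', p γ = p γ' → ρ γ *ᵥ x ∈ B → ρ γ' *ᵥ x ∈ B from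
    ⟨himp γ γ' hγ, himp γ' γ hγ.symm⟩
  intro γ γ' hγ hmem
  obtain ⟨c, hc⟩ := hscalar (γ⁻¹ * γ') (by simp [MonoidHom.mem_ker, hγ])
  have hγ' : ρ γ' *ᵥ x = c • (ρ γ *ᵥ x) := by
    rw [← mul_inv_cancel_left γ γ', map_mul, hc, mul_smul_one, smul_mulVec]
  rcases eq_or_ne c 0 with rfl | hc0
  · have hzero : ρ γ *ᵥ x = 0 := by
      have hγ0 : ρ (γ'⁻¹ * γ') *ᵥ x = 0 := by
        rw [map_mul, ← mulVec_mulVec, hγ', zero_smul, mulVec_zero]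
      rw [inv_mul_cancel, map_one, one_mulVec] at hγ0
      rw [hγ0, mulVec_zero]
    rwa [hγ', zero_smul, ← hzero]
  · exact hγ' ▸ hB c hc0 _ hmem

/-- A determinant one linear representation `ρ` of a finite extension `p : Γ → G` whose kernel acts
by scalars, that is, a projective representation of `G`. The condition on trace forms amounts to
strong absolute irreducibility when `K` is a field, but it makes sense over a ring and passes to
suitable quotients. -/
structure IsStrongProjectiveRep {Γ G K ι : Type*} [Group Γ] [Group G] [CommRing K] [Fintype ι]
    [DecidableEq ι] (p : Γ →* G) (ρ : Γ →* Matrix ι ι K) : Prop where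
  surjective : Function.Surjective p
  finite_ker : (p.ker : Set Γ).Finite
  det_eq_one : ∀ γ, (ρ γ).det = 1
  scalar_of_mem_ker : ∀ z ∈ p.ker, ∃ c : K, ρ z = c • 1
  exists_det_traceGram_ne_zero : ∀ H : Subgroup Γ, H.FiniteIndex →
    ∃ w : ι × ι → Γ, (∀ i, w i ∈ H) ∧ (traceGram fun i => ρ (w i)).det ≠ 0

lemma IsStrongProjectiveRep.stronglySpanning {p : Γ →* G} {ρ : Γ →* Matrix ι ι K}
    (h : IsStrongProjectiveRep p ρ) : StronglySpanning ρ := fun H hH => by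
  obtain ⟨w, hw, hdet⟩ := h.exists_det_traceGram_ne_zero H hH
  refine top_unique <| ((linearIndependent_of_det_traceGram_ne_zero
    hdet).span_eq_top_of_card_eq_finrank' (by simp [Module.finrank_matrix])).symm.le.trans ?_
  exact Submodule.span_mono (Set.range_subset_iff.2 fun i => ⟨w i, hw i, rfl⟩)

theorem IsStrongProjectiveRep.uniformlyNonamenable_of_not_expansionLE [Nonempty ι] {V : Type*}
    [Fintype V] {p : Γ →* G} {ρ : Γ →* Matrix ι ι K} (hrep : IsStrongProjectiveRep p ρ)
    (𝓕 : PlaceSystem K V) (hρ : ∀ γ i k, ρ γ i k ∈ 𝓕.integers) {q : ℕ} (hq : 0 < q)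
    (hexp : ∀ S : Set Γ, S.Finite → IsSymmGen S → ∃ u, ¬ExpansionLE (𝓕.abv u) (ρ '' (S ^ q)) 2) :
    UniformlyNonamenable G := by
  obtain ⟨ε, hε, h⟩ :=
    exists_not_almostInvariant_cones hrep.det_eq_one hrep.stronglySpanning 𝓕 hρ hq hexp
  refine ⟨ε, hε, fun S hfin hS m hm => ?_⟩
  choose σ hσ using hrep.surjective
  obtain ⟨x, hx⟩ := exists_ne (0 : ι → K)
  let f : G → ι → K := fun g => ρ (σ g) *ᵥ x
  have hf0 : f ⁻¹' {0} = ∅ := by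
    refine Set.eq_empty_of_forall_notMem fun g hg => hx ?_
    have hg0 : ρ (σ g) *ᵥ x = 0 := hg
    rw [← one_mulVec x, ← map_one ρ, ← inv_mul_cancel (σ g), map_mul, ← mulVec_mulVec, hg0,
      mulVec_zero]
  obtain ⟨s, hs, hnot⟩ := h _ (finite_preimage_of_finite_ker hrep.finite_ker hfin)
    (hS.preimage fun g => ⟨σ g, hσ g⟩) _ (hm.map f) (by rw [hf0, hm.empty])
  refine ⟨p s, hs, fun hinv => hnot (hinv.map (fun _ _ => Set.mem_univ _) fun B hB => ?_)⟩
  ext g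
  simp only [Set.mem_preimage, f, mulVec_mulVec, ← map_mul]
  exact mulVec_mem_iff_of_map_eq hrep.scalar_of_mem_ker hB (by simp [hσ]) x

end FiniteKernel

section TraceOfWords

variable {Γ K ι : Type*} [Group Γ] [Field K] [Fintype ι] [DecidableEq ι]

omit [DecidableEq ι] in
lemma eq_of_forall_trace_mul_eq {s : Set (Matrix ι ι K)} (hs : Submodule.span K s = ⊤)
    {X Y : Matrix ι ι K} (h : ∀ M ∈ s, (X * M).trace = (Y * M).trace) : X = Y := by
  refine Matrix.ext_iff_trace_mul_right.2 fun M => ?_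
  have hM : M ∈ Submodule.span K s := hs ▸ Submodule.mem_top
  induction hM using Submodule.span_induction with
  | mem M hM => exact h M hM
  | zero => simp
  | add M N _ _ hM hN => simp [mul_add, hM, hN]
  | smul a M _ hM => simp [hM]

lemma exists_words_det_traceGram_ne_zero {ρ : Γ →* Matrix ι ι K}
    (hspan : Submodule.span K (Set.range ρ) = ⊤) {S : Set Γ} (hS : IsSymmGen S) :
    ∃ w : ι × ι → Γ, (∀ i, w i ∈ S ^ Fintype.card ι ^ 2) ∧
      Submodule.span K (Set.range fun i => ρ (w i)) = ⊤ ∧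
      (traceGram fun i => ρ (w i)).det ≠ 0 := by
  have hpow := span_image_pow_eq_top (k := K) ρ hS.one_mem
    (by rw [hS.closure_eq, Subgroup.coe_top, Set.image_univ, hspan])
  obtain ⟨M, hM, hind⟩ := exists_linearIndependent_of_span_eq_top (ι := ι × ι)
    (by simp [Module.finrank_matrix]) hpow
  choose w hw hwM using hM
  obtain rfl : (fun i => ρ (w i)) = M := funext hwM
  have hrange := hind.span_eq_top_of_card_eq_finrank' (by simp [Module.finrank_matrix])
  refine ⟨w, fun i => ?_, hrange, det_traceGram_ne_zero hind hrange⟩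
  simpa [Module.finrank_matrix, sq] using hw i

lemma inv_mem_of_forall_mem {κ : Type*} [Fintype κ] [DecidableEq κ] (F : Subfield K)
    {A : Matrix κ κ K} (h : ∀ i k, A i k ∈ F) (i k : κ) : A⁻¹ i k ∈ F := by
  rw [inv_def, Matrix.smul_apply, Ring.inverse_eq_inv', adjugate_apply, smul_eq_mul]
  refine mul_mem (inv_mem (det_mem_of_forall_mem F.toSubring h))
    (det_mem_of_forall_mem F.toSubring fun a b => ?_)
  change A.updateRow k (Pi.single i 1) a b ∈ F
  rw [updateRow_apply, Pi.single_apply]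
  split_ifs
  exacts [one_mem F, zero_mem F, h a b]

omit [DecidableEq ι] in
lemma mem_span_subfield_of_forall_trace_mem {κ : Type*} [Fintype κ] [DecidableEq κ]
    (F : Subfield K) {w : κ → Matrix ι ι K} (hspan : Submodule.span K (Set.range w) = ⊤)
    (hdet : (traceGram w).det ≠ 0) (hw : ∀ i l, (w i * w l).trace ∈ F) {X : Matrix ι ι K}
    (hX : ∀ l, (X * w l).trace ∈ F) : X ∈ Submodule.span F (Set.range w) := by
  set t : κ → K := fun l => (X * w l).trace
  set c := t ᵥ* (traceGram w)⁻¹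
  have hc (i : κ) : c i ∈ F :=
    sum_mem fun l _ => mul_mem (hX l) (inv_mem_of_forall_mem F hw l i)
  have hct : c ᵥ* traceGram w = t := by
    rw [vecMul_vecMul, nonsing_inv_mul _ (isUnit_iff_ne_zero.2 hdet), vecMul_one]
  have hXc : X = ∑ i, c i • w i := by
    refine eq_of_forall_trace_mul_eq hspan (Set.forall_mem_range.2 fun l => ?_)
    simpa [Finset.sum_mul, trace_sum, traceGram, vecMul, dotProduct] using (congrFun hct l).symm
  rw [hXc]
  exact sum_mem fun i _ =>
    Submodule.smul_mem _ (⟨c i, hc i⟩ : F) (Submodule.subset_span ⟨i, rfl⟩)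

/-- Once the traces of sufficiently long words lie in a subfield, a basis of matrices made of words
spans a form of the matrix algebra over that subfield which contains the image of `ρ`. -/
theorem trace_mem_subfield_of_forall_mem_pow {ρ : Γ →* Matrix ι ι K}
    (hspan : Submodule.span K (Set.range ρ) = ⊤) {S : Set Γ} (hS : IsSymmGen S) (F : Subfield K)
    (hF : ∀ g ∈ S ^ (2 * Fintype.card ι ^ 2 + 1), (ρ g).trace ∈ F) (g : Γ) :
    (ρ g).trace ∈ F := by
  obtain ⟨w, hw, hwspan, hdet⟩ := exists_words_det_traceGram_ne_zero hspan hS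
  have hw₂ (i l : ι × ι) : w i * w l ∈ S ^ (2 * Fintype.card ι ^ 2) := by
    rw [two_mul, pow_add]
    exact Set.mul_mem_mul (hw i) (hw l)
  have hgram (i l : ι × ι) : (ρ (w i) * ρ (w l)).trace ∈ F := by
    rw [← map_mul]
    exact hF _ (hS.pow_subset_pow (Nat.le_succ _) (hw₂ i l))
  set U := Submodule.span F (Set.range fun i => ρ (w i))
  have hU {h : Γ} (hh : ∀ l, (ρ (h * w l)).trace ∈ F) : ρ h ∈ U :=
    mem_span_subfield_of_forall_trace_mem F hwspan hdet hgram fun l => map_mul ρ h _ ▸ hh l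
  have hstep (s : Γ) (hs : s ∈ S) (X : Matrix ι ι K) (hX : X ∈ U) : ρ s * X ∈ U := by
    suffices hle : U ≤ U.comap (LinearMap.mulLeft F (ρ s)) from hle hX
    refine Submodule.span_le.2 (Set.range_subset_iff.2 fun i => ?_)
    have hword (l : ι × ι) : s * w i * w l ∈ S ^ (2 * Fintype.card ι ^ 2 + 1) := by
      rw [mul_assoc, pow_succ']
      exact Set.mul_mem_mul hs (hw₂ i l)
    simpa using hU fun l => hF _ (hword l)
  have hρ : ρ g ∈ U := by
    have hg : g ∈ Subgroup.closure S := hS.closure_eq ▸ Subgroup.mem_top g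
    induction hg using Subgroup.closure_induction_left with
    | one => exact hU fun l => hF _ (hS.pow_subset_pow (by lia) ((one_mul (w l)).symm ▸ hw l))
    | mul_left s hs x _ ih => exact map_mul ρ s x ▸ hstep s hs _ ih
    | inv_mul_cancel s hs x _ ih => exact map_mul ρ s⁻¹ x ▸ hstep s⁻¹ (hS.inv_mem s hs) _ ih
  suffices htrace : ∀ X ∈ U, X.trace ∈ F from htrace _ hρ
  intro X hX
  induction hX using Submodule.span_induction with
  | mem X hX =>
    obtain ⟨i, rfl⟩ := hX
    exact hF _ (hS.pow_subset_pow (by lia) (hw i))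
  | zero => simp
  | add X Y _ _ hX hY => exact trace_add X Y ▸ add_mem hX hY
  | smul a X _ hX => exact trace_smul a X ▸ mul_mem a.2 hX

/-- An element of the image of `ρ` is determined by its traces against a fixed basis, so there are
boundedly many words, and hence boundedly many elements in all. -/
theorem finiteIndex_ker_of_forall_trace_mem {ρ : Γ →* Matrix ι ι K}
    (hspan : Submodule.span K (Set.range ρ) = ⊤) {S : Set Γ} (hfin : S.Finite) (hS : IsSymmGen S)
    {C : Set K} (hC : C.Finite)
    (htrace : ∀ g ∈ S ^ (C.ncard ^ Fintype.card ι ^ 2 + Fintype.card ι ^ 2), (ρ g).trace ∈ C) :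
    ρ.toHomUnits.ker.FiniteIndex := by
  obtain ⟨w, hw, hwspan, -⟩ := exists_words_det_traceGram_ne_zero hspan hS
  set X := Γ ⧸ ρ.toHomUnits.ker
  let Φ : X → ι × ι → K := fun x l =>
    ((QuotientGroup.kerLift ρ.toHomUnits x : Matrix ι ι K) * ρ (w l)).trace
  have hΦ : Function.Injective Φ := fun x y hxy =>
    QuotientGroup.kerLift_injective _ <| Units.ext <| eq_of_forall_trace_mul_eq hwspan <|
      Set.forall_mem_range.2 fun l => congrFun hxy l
  have hcard : (Set.univ.pi fun _ : ι × ι => C).ncard = C.ncard ^ Fintype.card ι ^ 2 := by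
    have := hC.to_subtype
    rw [← Nat.card_coe_set_eq, Nat.card_congr (Equiv.Set.univPi _), Nat.card_pi]
    simp [Nat.card_coe_set_eq, sq]
  have hfinX (k : ℕ) : ((· • (1 : X)) '' (S ^ k)).Finite := (finite_pow hfin k).image _
  have huniv := hS.image_pow_smul_eq_univ_of_ncard_le hfinX <| hcard ▸
    Set.ncard_le_ncard_of_injOn Φ (by
      rintro _ ⟨g, hg, rfl⟩ l _
      have hgw := htrace (g * w l) (pow_add S _ _ ▸ Set.mul_mem_mul (hcard ▸ hg) (hw l))
      rw [map_mul] at hgw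
      change ((QuotientGroup.kerLift ρ.toHomUnits (QuotientGroup.mk (g * 1)) : Matrix ι ι K) *
        ρ (w l)).trace ∈ C
      simpa using hgw) hΦ.injOn (Set.Finite.pi fun _ => hC)
  have : Finite X := Set.finite_univ_iff.1 (huniv ▸ hfinX _)
  exact Subgroup.finiteIndex_of_finite_quotient

lemma StronglySpanning.not_finiteIndex_ker [Nontrivial ι] {ρ : Γ →* Matrix ι ι K}
    (h : StronglySpanning ρ) : ¬ρ.toHomUnits.ker.FiniteIndex := fun hfin => by
  obtain ⟨i, j, hij⟩ := exists_pair_ne ι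
  have hsub : ρ '' (ρ.toHomUnits.ker : Set Γ) ⊆ {1} := by
    rintro _ ⟨g, hg, rfl⟩
    exact congrArg Units.val (MonoidHom.mem_ker.1 hg)
  have hmem : Matrix.single i j (1 : K) ∈ Submodule.span K {(1 : Matrix ι ι K)} :=
    Submodule.span_mono hsub (h _ hfin ▸ Submodule.mem_top)
  obtain ⟨c, hc⟩ := Submodule.mem_span_singleton.1 hmem
  simpa [hij] using congrFun (congrFun hc i) j

end TraceOfWords

section BoundedTraces

variable {Γ G K V ι : Type*} [Group Γ] [Group G] [Field K] [Fintype V] [Fintype ι]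
  [DecidableEq ι] {p : Γ →* G} {ρ : Γ →* Matrix ι ι K}

/-- The integers of size at most `r` at every place. -/
def PlaceSystem.box (𝓕 : PlaceSystem K V) (r : ℝ) : Set K :=
  {x | x ∈ 𝓕.integers ∧ ∀ u, 𝓕.abv u x ≤ r}

theorem IsStrongProjectiveRep.uniformlyNonamenable_of_trace_notMem_box [Nonempty ι]
    (hrep : IsStrongProjectiveRep p ρ) (𝓕 : PlaceSystem K V)
    (hρ : ∀ γ i k, ρ γ i k ∈ 𝓕.integers) {q : ℕ} (hq : 0 < q)
    (htrace : ∀ S : Set Γ, S.Finite → IsSymmGen S →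
      ∃ g ∈ S ^ q, (ρ g).trace ∉ 𝓕.box (4 * Fintype.card ι)) :
    UniformlyNonamenable G := by
  refine hrep.uniformlyNonamenable_of_not_expansionLE 𝓕 hρ hq fun S hfin hS => ?_
  obtain ⟨g, hg, hbox⟩ := htrace S hfin hS
  by_contra! hexp
  refine hbox ⟨sum_mem fun i _ => hρ g i i, fun u => ?_⟩
  have hle := (hexp u).abv_trace_le zero_le_two (L := 1) (by simpa using ⟨g, hg, rfl⟩)
  linarith

theorem IsStrongProjectiveRep.uniformlyNonamenable_of_finite_box [Nontrivial ι]
    (hrep : IsStrongProjectiveRep p ρ) (𝓕 : PlaceSystem K V)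
    (hρ : ∀ γ i k, ρ γ i k ∈ 𝓕.integers) (hbox : (𝓕.box (4 * Fintype.card ι)).Finite) :
    UniformlyNonamenable G := by
  refine hrep.uniformlyNonamenable_of_trace_notMem_box 𝓕 hρ
    (q := (𝓕.box (4 * Fintype.card ι)).ncard ^ Fintype.card ι ^ 2 + Fintype.card ι ^ 2)
    (by positivity) fun S hfin hS => ?_
  by_contra! htrace
  have hspan : Submodule.span K (Set.range ρ) = ⊤ := by
    simpa using hrep.stronglySpanning ⊤ inferInstance
  exact hrep.stronglySpanning.not_finiteIndex_ker
    (finiteIndex_ker_of_forall_trace_mem hspan hfin hS hbox htrace)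

theorem IsStrongProjectiveRep.uniformlyNonamenable_of_box_subset [Nonempty ι]
    (hrep : IsStrongProjectiveRep p ρ) (𝓕 : PlaceSystem K V)
    (hρ : ∀ γ i k, ρ γ i k ∈ 𝓕.integers) (F : Subfield K)
    (hF : 𝓕.box (4 * Fintype.card ι) ⊆ F) {g : Γ} (hg : (ρ g).trace ∉ F) :
    UniformlyNonamenable G := by
  refine hrep.uniformlyNonamenable_of_trace_notMem_box 𝓕 hρ
    (q := 2 * Fintype.card ι ^ 2 + 1) (by positivity) fun S _ hS => ?_
  by_contra! htrace
  have hspan : Submodule.span K (Set.range ρ) = ⊤ := by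
    simpa using hrep.stronglySpanning ⊤ inferInstance
  exact hg (trace_mem_subfield_of_forall_mem_pow hspan hS F (fun h hh => hF (htrace h hh)) g)

end BoundedTraces

section NumberField

open NumberField

variable {k : Type*} [Field k] [NumberField k] (B : Finset (FinitePlace k))

/-- The ring of elements of a number field that are integral away from a finite set of places. -/
def integersAwayFrom : Subring k where
  carrier := {x | ∀ w ∉ B, w x ≤ 1}
  mul_mem' ha hb w hw := map_mul w _ _ ▸ mul_le_one₀ (ha w hw) (apply_nonneg _ _) (hb w hw)
  one_mem' w _ := (map_one w).le
  add_mem' ha hb w hw := (FinitePlace.add_le w _ _).trans (max_le (ha w hw) (hb w hw))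
  zero_mem' w _ := (map_zero w).le.trans zero_le_one
  neg_mem' {a} ha w hw := (AbsoluteValue.map_neg w.1 a).le.trans (ha w hw)

/-- The infinite places, each repeated according to its multiplicity, and the finite places in
`B`. -/
def placesIn : (Σ w : InfinitePlace k, Fin w.mult) ⊕ B → AbsoluteValue k ℝ :=
  Sum.elim (fun u => u.1.1) fun w => w.1.1

lemma prod_placesIn (φ : AbsoluteValue k ℝ → ℝ) :
    ∏ u, φ (placesIn B u) = (∏ w : InfinitePlace k, φ w.1 ^ w.mult) * ∏ w ∈ B, φ w.1 := by
  simp only [placesIn, Fintype.prod_sum_type, Fintype.prod_sigma, Sum.elim_inl, Sum.elim_inr,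
    Finset.prod_const, Finset.card_univ, Fintype.card_fin, Finset.prod_coe_sort B fun w => φ w.1]

lemma one_le_prod_placesIn {x : k} (hx : x ∈ integersAwayFrom B) (hx0 : x ≠ 0) :
    1 ≤ ∏ u, placesIn B u x := by
  classical
  set T := (FinitePlace.hasFiniteMulSupport hx0).toFinset ∪ B
  have hT : (Function.mulSupport fun w : FinitePlace k => w x) ⊆ T := fun w hw =>
    Finset.mem_union_left B ((Set.Finite.mem_toFinset _).2 hw)
  have hout : ∏ w ∈ T \ B, w x ≤ 1 :=
    Finset.prod_le_one (fun w _ => apply_nonneg _ _) fun w hw => hx w (Finset.mem_sdiff.1 hw).2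
  rw [prod_placesIn B fun v => v x, ← prod_abs_eq_one hx0,
    finprod_eq_prod_of_mulSupport_subset _ hT,
    ← Finset.prod_sdiff (Finset.subset_union_right : B ⊆ T)]
  exact mul_le_mul_of_nonneg_left
    (mul_le_of_le_one_left (Finset.prod_nonneg fun w _ => apply_nonneg _ _) hout)
    (Finset.prod_nonneg fun w _ => pow_nonneg (apply_nonneg _ _) _)

/-- The places of a number field that are infinite or belong to `B`. -/
def numberFieldPlaces : PlaceSystem k ((Σ w : InfinitePlace k, Fin w.mult) ⊕ B) where
  abv := placesIn B
  integers := integersAwayFrom B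
  one_le_prod _ := one_le_prod_placesIn B

lemma finite_box_numberFieldPlaces (r : ℝ) : ((numberFieldPlaces B).box r).Finite := by
  refine (finite_setOfPred_mulHeight₁_le k
    (∏ _u : (Σ w : InfinitePlace k, Fin w.mult) ⊕ B, max r 1)).subset ?_
  rintro x ⟨hx, hxr⟩
  have hsupp : (Function.mulSupport fun w : FinitePlace k => max (w x) 1) ⊆ B := fun w hw => by
    by_contra hwB
    exact hw (max_eq_right (hx w hwB))
  calc Height.mulHeight₁ x
      = ∏ u, max (placesIn B u x) 1 := by
        rw [mulHeight₁_eq, finprod_eq_prod_of_mulSupport_subset _ hsupp]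
        exact (prod_placesIn B fun v => max (v x) 1).symm
    _ ≤ _ := Finset.prod_le_prod (fun _ _ => by positivity) fun u _ =>
        max_le_max_right 1 (hxr u)

omit B in
lemma finite_setOf_finitePlace_not_le_one (x : k) : {w : FinitePlace k | ¬w x ≤ 1}.Finite := by
  rcases eq_or_ne x 0 with rfl | hx
  · simp
  · exact (FinitePlace.hasFiniteMulSupport hx).subset fun w hw h1 => hw h1.le

omit B in
lemma exists_integersAwayFrom_of_fg {Γ ι : Type*} [Monoid Γ] [Monoid.FG Γ] [Fintype ι]
    [DecidableEq ι] (ρ : Γ →* Matrix ι ι k) :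
    ∃ B : Finset (FinitePlace k), ∀ γ i j, ρ γ i j ∈ integersAwayFrom B := by
  classical
  obtain ⟨T, hT⟩ := Monoid.FG.fg_top (M := Γ)
  let B : Finset (FinitePlace k) := T.biUnion fun t => Finset.univ.biUnion fun e : ι × ι =>
    (finite_setOf_finitePlace_not_le_one (ρ t e.1 e.2)).toFinset
  refine ⟨B, fun γ => ?_⟩
  suffices hle : (⊤ : Submonoid Γ) ≤ ((integersAwayFrom B).matrix (n := ι)).toSubmonoid.comap ρ
    from hle (Submonoid.mem_top γ)
  refine hT ▸ Submonoid.closure_le.2 fun t ht i j w hw => ?_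
  contrapose! hw
  simpa [B] using ⟨t, ht, i, j, hw⟩

theorem IsStrongProjectiveRep.uniformlyNonamenable_of_numberField {Γ G ι : Type*} [Group Γ]
    [Group G] [Fintype ι] [DecidableEq ι] [Nontrivial ι] [Group.FG Γ] {p : Γ →* G}
    {ρ : Γ →* Matrix ι ι k} (hrep : IsStrongProjectiveRep p ρ) : UniformlyNonamenable G := by
  obtain ⟨B, hB⟩ := exists_integersAwayFrom_of_fg ρ
  exact hrep.uniformlyNonamenable_of_finite_box (numberFieldPlaces B) hB
    (finite_box_numberFieldPlaces B _)

end NumberField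

section AlgebraicTraces

variable {Γ G O ι : Type*} [Group Γ] [Group G] [CommRing O] [Fintype ι] [DecidableEq ι]
  {p : Γ →* G} {ρ : Γ →* Matrix ι ι O}

lemma IsStrongProjectiveRep.map {A : Type*} [CommRing A] (h : IsStrongProjectiveRep p ρ)
    (φ : O →+* A)
    (hφ : ∀ w : ι × ι → Γ, (traceGram fun i => ρ (w i)).det ≠ 0 →
      φ (traceGram fun i => ρ (w i)).det ≠ 0) :
    IsStrongProjectiveRep p ((φ.mapMatrix (m := ι) : Matrix ι ι O →* Matrix ι ι A).comp ρ) where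
  surjective := h.surjective
  finite_ker := h.finite_ker
  det_eq_one γ := (φ.map_det (ρ γ)).symm.trans (by rw [h.det_eq_one, map_one])
  scalar_of_mem_ker z hz := by
    obtain ⟨c, hc⟩ := h.scalar_of_mem_ker z hz
    exact ⟨φ c, by simp [hc, Matrix.map_smul']⟩
  exists_det_traceGram_ne_zero H hH := by
    obtain ⟨w, hw, hdet⟩ := h.exists_det_traceGram_ne_zero H hH
    refine ⟨w, hw, ?_⟩
    have hmap := hφ w hdet
    rwa [φ.map_det, RingHom.mapMatrix_apply, map_traceGram] at hmap

/-- The discriminants of bases of words are algebraic, hence units, so they survive in the residue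
field of a maximal ideal, which is a finite extension of `F`. -/
theorem IsStrongProjectiveRep.uniformlyNonamenable_of_isAlgebraic_trace {F : Type*} [Field F]
    (hF : Finite F ∨ NumberField F) [IsDomain O] [Algebra F O] [Algebra.FiniteType F O]
    [Nontrivial ι] [Group.FG Γ] (hrep : IsStrongProjectiveRep p ρ)
    (halg : ∀ g, IsAlgebraic F (ρ g).trace) : UniformlyNonamenable G := by
  obtain ⟨m, hm⟩ := Ideal.exists_maximal O
  let _ : Field (O ⧸ m) := Ideal.Quotient.field m
  have hft : Algebra.FiniteType F (O ⧸ m) :=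
    .of_surjective (Ideal.Quotient.mkₐ F m) (Ideal.Quotient.mkₐ_surjective F m)
  have hfin : Module.Finite F (O ⧸ m) := finite_of_finite_type_of_isJacobsonRing F (O ⧸ m)
  have hdet (w : ι × ι → Γ) : IsIntegral F (traceGram fun i => ρ (w i)).det :=
    IsIntegral.det fun i l => by
      simpa [traceGram] using (halg (w i * w l)).isIntegral
  have hrep' := hrep.map (Ideal.Quotient.mk m) fun w hw =>
    (((hdet w).isUnit hw).map (Ideal.Quotient.mk m)).ne_zero
  rcases hF with hF | hF
  · have : Finite (O ⧸ m) := Module.finite_of_finite F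
    exact absurd Subgroup.finiteIndex_of_finite_quotient
      hrep'.stronglySpanning.not_finiteIndex_ker
  · have : NumberField (O ⧸ m) := NumberField.of_module_finite F (O ⧸ m)
    exact hrep'.uniformlyNonamenable_of_numberField

end AlgebraicTraces

section AbsoluteValueExtension

variable {k K : Type*} [Field k] [Field K]

lemma isUltrametricDist_completion {v : AbsoluteValue k ℝ} (hv : IsNonarchimedean v) :
    IsUltrametricDist v.Completion := by
  refine IsUltrametricDist.isUltrametricDist_of_forall_norm_add_le_max_norm fun x y => ?_
  have hnorm (a : WithAbs v) : ‖(a : v.Completion)‖ = v a.ofAbs :=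
    UniformSpace.Completion.norm_coe a
  induction x, y using UniformSpace.Completion.induction_on₂ with
  | hp => exact isClosed_le (by fun_prop) (by fun_prop)
  | ih a b =>
    rw [← UniformSpace.Completion.coe_add, hnorm, hnorm, hnorm]
    exact hv a.ofAbs b.ofAbs

variable [Algebra k K]

lemma exists_extension_of_one_lt [Algebra.IsAlgebraic k K] {v : AbsoluteValue k ℝ}
    (hv : IsNonarchimedean v) {t : k} (ht : 1 < v t) :
    ∃ w : AbsoluteValue K ℝ, ∀ x, w (algebraMap k K x) = v x := by
  let C := v.Completion
  let e : k →+* C :=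
    UniformSpace.Completion.coeRingHom.comp (WithAbs.equiv v).symm.toRingHom
  have he (x : k) : ‖e x‖ = v x := UniformSpace.Completion.norm_coe _
  let _ : NontriviallyNormedField C := { (inferInstance : NormedField C) with
    non_trivial := ⟨e t, by rwa [he]⟩ }
  have _ := isUltrametricDist_completion hv
  let L := AlgebraicClosure C
  let _ : Algebra k L := ((algebraMap C L).comp e).toAlgebra
  let φ : K →ₐ[k] L := IsAlgClosed.lift
  let u : AbsoluteValue L ℝ :=
    MulRingNorm.mulRingNormEquivAbsoluteValue (spectralMulAlgNorm C L).toMulRingNorm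
  refine ⟨u.comp (f := (φ : K →+* L)) φ.injective, fun x => ?_⟩
  calc u (φ (algebraMap k K x)) = spectralNorm C L (algebraMap C L (e x)) :=
        congrArg u (φ.commutes x)
    _ = v x := by rw [spectralNorm_extends, he]

lemma exists_extension_of_isNonarchimedean [Algebra.IsAlgebraic k K] {v : AbsoluteValue k ℝ}
    (hv : IsNonarchimedean v) : ∃ w : AbsoluteValue K ℝ, ∀ x, w (algebraMap k K x) = v x := by
  classical
  by_cases htriv : ∃ t, 1 < v t
  · exact exists_extension_of_one_lt hv htriv.choose_spec
  push Not at htriv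
  refine ⟨AbsoluteValue.trivial, fun x => ?_⟩
  rcases eq_or_ne x 0 with rfl | hx
  · simp
  have hinv : (v x)⁻¹ ≤ 1 := map_inv₀ v x ▸ htriv x⁻¹
  have hone : v x = 1 := le_antisymm (htriv x) ((inv_le_one₀ (v.pos hx)).1 hinv)
  rw [hone, AbsoluteValue.trivial_apply ((map_ne_zero _).2 hx)]

end AbsoluteValueExtension

section DegreeValuation

open scoped NNReal

variable {σ F : Type*} [Field F]

open Classical in
/-- The exponential `Q ^ totalDegree` of the total degree, as a valuation on polynomials. -/
noncomputable def degreeValuation (σ F : Type*) [Field F] {Q : ℝ≥0} (hQ : 1 < Q) :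
    Valuation (MvPolynomial σ F) ℝ≥0 where
  toFun q := if q = 0 then 0 else Q ^ q.totalDegree
  map_zero' := by simp
  map_one' := by simp
  map_mul' p q := by
    rcases eq_or_ne p 0 with rfl | hp
    · simp
    rcases eq_or_ne q 0 with rfl | hq
    · simp
    simp [hp, hq, MvPolynomial.totalDegree_mul_of_isDomain hp hq, pow_add]
  map_add_le_max' p q := by
    rcases eq_or_ne p 0 with rfl | hp
    · simp
    rcases eq_or_ne q 0 with rfl | hq
    · simp
    rcases eq_or_ne (p + q) 0 with hpq | hpq
    · simp [hpq]
    simp only [hp, hq, hpq, if_false]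
    rw [← (pow_right_mono₀ hQ.le).map_max]
    exact pow_right_mono₀ hQ.le (MvPolynomial.totalDegree_add p q)

lemma degreeValuation_apply {Q : ℝ≥0} (hQ : 1 < Q) {q : MvPolynomial σ F} (hq : q ≠ 0) :
    degreeValuation σ F hQ q = Q ^ q.totalDegree :=
  if_neg hq

lemma exists_isNonarchimedean_eq_pow_totalDegree (σ F k : Type*) [Field F] [Field k]
    [Algebra (MvPolynomial σ F) k] [IsFractionRing (MvPolynomial σ F) k] {Q : ℝ≥0} (hQ : 1 < Q) :
    ∃ v : AbsoluteValue k ℝ, IsNonarchimedean v ∧ ∀ q : MvPolynomial σ F, q ≠ 0 →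
      v (algebraMap _ k q) = Q ^ q.totalDegree := by
  have hQ0 : Q ≠ 0 := (zero_lt_one.trans hQ).ne'
  have hsupp :
      nonZeroDivisors (MvPolynomial σ F) ≤ (degreeValuation σ F hQ).supp.primeCompl :=
    fun q hq hq' => pow_ne_zero _ hQ0
      ((degreeValuation_apply hQ (nonZeroDivisors.ne_zero hq)).symm.trans hq')
  let u := (degreeValuation σ F hQ).extendToLocalization hsupp k
  have hu (x y : k) : (u (x + y) : ℝ) ≤ max (u x : ℝ) (u y) := mod_cast u.map_add x y
  let v : AbsoluteValue k ℝ :=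
    { toFun := fun x => u x
      map_mul' := by simp
      nonneg' := fun x => (u x).coe_nonneg
      eq_zero' := by simp
      add_le' := fun x y => (hu x y).trans
        (max_le_add_of_nonneg (u x).coe_nonneg (u y).coe_nonneg) }
  refine ⟨v, hu, fun q hq => ?_⟩
  calc (u (algebraMap _ k q) : ℝ) = (degreeValuation σ F hQ q : ℝ≥0) :=
        congrArg _ (Valuation.extendToLocalization_apply_map_apply _ hsupp k q)
    _ = Q ^ q.totalDegree := by rw [degreeValuation_apply hQ hq, NNReal.coe_pow]

end DegreeValuation

section GaloisPlaces

variable {R k K : Type*} [CommRing R] [IsDomain R] [IsIntegrallyClosed R] [Field k] [Field K]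
  [Algebra R k] [IsFractionRing R k] [Algebra k K] [Algebra R K] [IsScalarTower R k K]

omit [IsScalarTower R k K] [IsDomain R] [IsIntegrallyClosed R] [Algebra R K] [Algebra R k]
  [IsFractionRing R k] in
lemma exists_algEquiv_eq_of_mem_roots [Normal k K] {x z : K}
    (hz : z ∈ ((minpoly k x).map (algebraMap k K)).roots) : ∃ τ : K ≃ₐ[k] K, τ x = z := by
  refine minpoly.exists_algEquiv_of_root' (Algebra.IsAlgebraic.isAlgebraic x) ?_
  rw [← Polynomial.eval_map_algebraMap]
  exact (Polynomial.mem_roots'.1 hz).2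

variable (k) in
lemma coeff_map_minpoly_eq {x : K} (hx : IsIntegral R x) (i : ℕ) :
    ((minpoly k x).map (algebraMap k K)).coeff i = algebraMap R K ((minpoly R x).coeff i) := by
  rw [minpoly.isIntegrallyClosed_eq_field_fractions' k hx, Polynomial.coeff_map,
    Polynomial.coeff_map, ← IsScalarTower.algebraMap_apply]

variable (k) in
/-- The minimal polynomial of `y` is a power of `X - y`, so its constant term is `± y ^ d`. -/
lemma one_le_abv_of_forall_algEquiv_eq [Normal k K] {w : AbsoluteValue K ℝ}
    (hw : ∀ r : R, r ≠ 0 → 1 ≤ w (algebraMap R K r)) {y : K} (hy : IsIntegral R y) (hy0 : y ≠ 0)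
    (hfix : ∀ τ : K ≃ₐ[k] K, τ y = y) : 1 ≤ w y := by
  have hyk : IsIntegral k y := Algebra.IsIntegral.isIntegral y
  set q := (minpoly k y).map (algebraMap k K)
  have hsplit : q.Splits := Normal.splits inferInstance y
  have hdeg : q.roots.card ≠ 0 := by
    rw [← hsplit.natDegree_eq_card_roots, Polynomial.natDegree_map]
    exact (minpoly.natDegree_pos hyk).ne'
  have hroots : ∀ z ∈ q.roots, z = y := fun z hz => by
    obtain ⟨τ, rfl⟩ := exists_algEquiv_eq_of_mem_roots hz
    exact hfix τ
  have hconst : w (q.coeff 0) = w y ^ q.roots.card := by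
    rw [hsplit.coeff_zero_eq_prod_roots_of_monic ((minpoly.monic hyk).map _),
      Multiset.eq_replicate_of_mem hroots, Multiset.prod_replicate]
    simp
  rw [coeff_map_minpoly_eq k hy] at hconst
  have hne : (minpoly R y).coeff 0 ≠ 0 := fun h0 => by
    rw [h0, map_zero, map_zero] at hconst
    exact pow_ne_zero _ (w.ne_zero hy0) hconst.symm
  exact (one_le_pow_iff_of_nonneg (w.nonneg y) hdeg).1 (hconst ▸ hw _ hne)

variable (R k) in
/-- The Galois conjugates of an absolute value `w` over the base field `k`, in a finite normal
extension; `R` is a ring of integers of `k` whose nonzero elements are bounded below by `1`. -/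
noncomputable def galoisPlaces [FiniteDimensional k K] [Normal k K] (w : AbsoluteValue K ℝ)
    (hw : ∀ r : R, r ≠ 0 → 1 ≤ w (algebraMap R K r)) : PlaceSystem K (K ≃ₐ[k] K) where
  abv τ := w.comp (f := (τ : K →+* K)) τ.injective
  integers := (integralClosure R K).toSubring
  one_le_prod x hx hx0 := by
    have hmem (τ : K ≃ₐ[k] K) : IsIntegral R (τ x) :=
      IsIntegral.map ((τ : K →ₐ[k] K).restrictScalars R) hx
    refine (one_le_abv_of_forall_algEquiv_eq k hw (y := ∏ τ : K ≃ₐ[k] K, τ x)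
      (IsIntegral.prod _ fun τ _ => hmem τ) ?_ fun τ => ?_).trans_eq (map_prod w _ _)
    · exact Finset.prod_ne_zero_iff.2 fun τ _ => (map_ne_zero τ).2 hx0
    · rw [map_prod]
      exact Fintype.prod_equiv (Equiv.mulLeft τ) _ _ fun _ => rfl

variable (k) in
/-- Bounded conjugates give a minimal polynomial with bounded coefficients. -/
lemma isIntegral_of_forall_abv_algEquiv_le {F : Type*} [CommRing F] [Algebra F R] [Algebra F K]
    [IsScalarTower F R K] [FiniteDimensional k K] [Normal k K] (w : AbsoluteValue K ℝ) {B : ℝ}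
    (hw : ∀ r : R, w (algebraMap R K r) ≤ max B 1 ^ Module.finrank k K *
      (Module.finrank k K).choose (Module.finrank k K / 2) → r ∈ Set.range (algebraMap F R))
    {x : K} (hx : IsIntegral R x) (hB : ∀ τ : K ≃ₐ[k] K, w (τ x) ≤ B) : IsIntegral F x := by
  let _ : NormedField K := w.toNormedField
  have hlift : minpoly R x ∈ Polynomial.lifts (algebraMap F R) := by
    refine (Polynomial.lifts_iff_coeff_lifts _).2 fun i => hw _ ?_
    rw [← coeff_map_minpoly_eq k hx]
    refine Polynomial.coeff_bdd_of_roots_le (algebraMap k K)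
      (minpoly.monic (Algebra.IsIntegral.isIntegral x)) (Normal.splits inferInstance x)
      (minpoly.natDegree_le x) (fun z hz => ?_) i
    obtain ⟨τ, rfl⟩ := exists_algEquiv_eq_of_mem_roots hz
    exact hB τ
  obtain ⟨q, hq, -, hmonic⟩ :=
    Polynomial.lifts_and_natDegree_eq_and_monic hlift (minpoly.monic hx)
  refine ⟨q, hmonic, ?_⟩
  rw [← Polynomial.aeval_def, ← Polynomial.aeval_map_algebraMap R, hq, minpoly.aeval]

end GaloisPlaces

section TranscendentalTraces

variable {Γ G ι F σ : Type*} [Group Γ] [Group G] [Fintype ι] [DecidableEq ι] [Field F]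
  {p : Γ →* G}

/-- A large power of the total degree separates the constants from all other polynomials, so
bounded integers are algebraic over `F`. -/
theorem IsStrongProjectiveRep.uniformlyNonamenable_of_isIntegral_mvPolynomial [Nonempty ι]
    (k : Type*) {K : Type*} [Field k] [Field K] [Algebra (MvPolynomial σ F) k]
    [IsFractionRing (MvPolynomial σ F) k] [Algebra k K] [FiniteDimensional k K] [Normal k K]
    [Algebra (MvPolynomial σ F) K] [IsScalarTower (MvPolynomial σ F) k K] [Algebra F K]
    [IsScalarTower F (MvPolynomial σ F) K] {ρ : Γ →* Matrix ι ι K}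
    (hrep : IsStrongProjectiveRep p ρ) (hρ : ∀ γ i j, IsIntegral (MvPolynomial σ F) (ρ γ i j))
    {g : Γ} (hg : ¬ IsAlgebraic F (ρ g).trace) : UniformlyNonamenable G := by
  let M : ℝ := max (4 * Fintype.card ι : ℝ) 1 ^ Module.finrank k K *
    (Module.finrank k K).choose (Module.finrank k K / 2)
  have hM : 0 ≤ M := by positivity
  lift M + 2 to NNReal using by positivity with Q hQ
  have hQ1 : 1 < Q := by rw [← NNReal.coe_lt_coe, hQ, NNReal.coe_one]; linarith
  obtain ⟨v, hv, hvdeg⟩ := exists_isNonarchimedean_eq_pow_totalDegree σ F k hQ1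
  obtain ⟨w, hwv⟩ := exists_extension_of_isNonarchimedean (K := K) hv
  have hw (q : MvPolynomial σ F) (hq : q ≠ 0) :
      w (algebraMap _ K q) = Q ^ q.totalDegree := by
    rw [IsScalarTower.algebraMap_apply _ k, hwv, hvdeg q hq]
  have hone (q : MvPolynomial σ F) (hq : q ≠ 0) : 1 ≤ w (algebraMap _ K q) :=
    (one_le_pow₀ (mod_cast hQ1.le)).trans_eq (hw q hq).symm
  refine hrep.uniformlyNonamenable_of_box_subset (galoisPlaces (MvPolynomial σ F) k w hone) hρ
    (algebraicClosure F K).toSubfield (fun x hx => ?_) fun hc => hg (mem_algebraicClosure_iff.1 hc)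
  refine mem_algebraicClosure_iff.2
    (isIntegral_of_forall_abv_algEquiv_le k w (fun q hq => ?_) hx.1 hx.2).isAlgebraic
  rcases eq_or_ne q 0 with rfl | hq0
  · exact ⟨0, map_zero _⟩
  suffices hdeg : q.totalDegree = 0 from
    ⟨_, (MvPolynomial.totalDegree_eq_zero_iff_eq_C.1 hdeg).symm⟩
  by_contra hne
  have hlarge : M + 2 ≤ w (algebraMap _ K q) := by
    rw [hw q hq0, ← hQ]
    exact le_self_pow₀ (mod_cast hQ1.le) hne
  linarith [show w (algebraMap _ K q) ≤ M from hq]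

variable {O : Type*} [CommRing O] [IsDomain O] [Algebra F O] {ρ : Γ →* Matrix ι ι O}

theorem IsStrongProjectiveRep.uniformlyNonamenable_of_finite_mvPolynomial [Nonempty ι]
    [Algebra (MvPolynomial σ F) O] [IsScalarTower F (MvPolynomial σ F) O]
    [Module.Finite (MvPolynomial σ F) O] [FaithfulSMul (MvPolynomial σ F) O]
    (hrep : IsStrongProjectiveRep p ρ) {g : Γ} (hg : ¬ IsAlgebraic F (ρ g).trace) :
    UniformlyNonamenable G := by
  let P := MvPolynomial σ F
  let L := FractionRing O
  have : FaithfulSMul P L := FaithfulSMul.trans P O L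
  let k := FractionRing P
  let _ : Algebra k L := FractionRing.liftAlgebra P L
  have : IsScalarTower P k L := FractionRing.isScalarTower_liftAlgebra P L
  let Ω := AlgebraicClosure L
  have : Algebra.IsAlgebraic k Ω := Algebra.IsAlgebraic.trans k L Ω
  have : IsAlgClosure k Ω := ⟨inferInstance, inferInstance⟩
  have : Normal k Ω := IsAlgClosure.normal k Ω
  let N := IntermediateField.normalClosure k L Ω
  let φ : O →+* N := (algebraMap L N).comp (algebraMap O L)
  let _ : Algebra P N := (φ.comp (algebraMap P O)).toAlgebra
  have : IsScalarTower P k N := .of_algebraMap_eq fun x => by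
    rw [IsScalarTower.algebraMap_apply k L N, ← IsScalarTower.algebraMap_apply P k L,
      IsScalarTower.algebraMap_apply P O L]
    rfl
  let _ : Algebra F N := (φ.comp (algebraMap F O)).toAlgebra
  have : IsScalarTower F P N := .of_algebraMap_eq fun x =>
    congrArg φ (IsScalarTower.algebraMap_apply F P O x)
  have hφ : Function.Injective φ := (algebraMap L N).injective.comp (IsFractionRing.injective O L)
  let φP : O →ₐ[P] N := { φ with commutes' := fun _ => rfl }
  let φF : O →ₐ[F] N := { φ with commutes' := fun _ => rfl }
  have hrepN := hrep.map φ fun w hw => (map_ne_zero_iff φ hφ).2 hw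
  refine hrepN.uniformlyNonamenable_of_isIntegral_mvPolynomial (σ := σ) (F := F) k
    (fun γ i j => (Algebra.IsIntegral.isIntegral (R := P) (ρ γ i j)).map φP) (g := g) ?_
  have htrace : ((ρ g).map φ).trace = φ (ρ g).trace :=
    (AddMonoidHom.map_trace φ.toAddMonoidHom (ρ g)).symm
  exact fun halg => hg ((isAlgebraic_algHom_iff φF hφ).1 (htrace ▸ halg))

theorem IsStrongProjectiveRep.uniformlyNonamenable_of_finiteType
    (hF : Finite F ∨ NumberField F) [Algebra.FiniteType F O] [Nontrivial ι] [Group.FG Γ]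
    (hrep : IsStrongProjectiveRep p ρ) : UniformlyNonamenable G := by
  by_cases halg : ∀ g, IsAlgebraic F (ρ g).trace
  · exact hrep.uniformlyNonamenable_of_isAlgebraic_trace hF halg
  push Not at halg
  obtain ⟨g, hg⟩ := halg
  obtain ⟨s, φ, hφ, hfin⟩ := exists_finite_inj_algHom_of_fg F O
  let _ : Algebra (MvPolynomial (Fin s) F) O := φ.toRingHom.toAlgebra
  have : IsScalarTower F (MvPolynomial (Fin s) F) O :=
    .of_algebraMap_eq fun x => (φ.commutes x).symm
  have : Module.Finite (MvPolynomial (Fin s) F) O := hfin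
  have : FaithfulSMul (MvPolynomial (Fin s) F) O := (faithfulSMul_iff_algebraMap_injective _ _).2 hφ
  exact hrep.uniformlyNonamenable_of_finite_mvPolynomial (σ := Fin s) hg

end TranscendentalTraces

section FieldOfDefinition

variable {Γ G K ι : Type*} [Group Γ] [Group G] [Field K] [Fintype ι] [DecidableEq ι]
  {p : Γ →* G} {ρ : Γ →* Matrix ι ι K}

lemma exists_finiteType_subalgebra_of_fg [Group.FG Γ] (F : Type*) [CommRing F] [Algebra F K]
    (ρ : Γ →* Matrix ι ι K) :
    ∃ O : Subalgebra F K, Algebra.FiniteType F O ∧ ∀ γ i j, ρ γ i j ∈ O := by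
  classical
  obtain ⟨T, hT⟩ := Monoid.FG.fg_top (M := Γ)
  let E : Finset K := T.biUnion fun t => Finset.univ.image fun e : ι × ι => ρ t e.1 e.2
  refine ⟨Algebra.adjoin F E, (Subalgebra.fg_iff_finiteType _).1 ⟨E, rfl⟩, fun γ => ?_⟩
  suffices hle : (⊤ : Submonoid Γ) ≤
      ((Algebra.adjoin F (E : Set K)).toSubring.matrix (n := ι)).toSubmonoid.comap ρ
    from hle (Submonoid.mem_top γ)
  refine hT ▸ Submonoid.closure_le.2 fun t ht i j => Algebra.subset_adjoin ?_
  exact Finset.mem_biUnion.2 ⟨t, ht, Finset.mem_image_of_mem _ (Finset.mem_univ (i, j))⟩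

lemma exists_mapMatrix_comp_eq {R : Type*} [CommRing R] {φ : R →+* K}
    (hφ : Function.Injective φ) (hρ : ∀ γ i j, ρ γ i j ∈ φ.range) :
    ∃ ρ' : Γ →* Matrix ι ι R,
      (φ.mapMatrix (m := ι) : Matrix ι ι R →* Matrix ι ι K).comp ρ' = ρ := by
  have hinj : Function.Injective (φ.mapMatrix (m := ι) : Matrix ι ι R →* Matrix ι ι K) :=
    Matrix.map_injective hφ
  have hrange (γ : Γ) : ∃ M : Matrix ι ι R,
      (φ.mapMatrix (m := ι) : Matrix ι ι R →* Matrix ι ι K) M = ρ γ := by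
    choose r hr using hρ γ
    exact ⟨Matrix.of r, Matrix.ext hr⟩
  choose r hr using hrange
  exact ⟨⟨⟨r, hinj (by rw [hr, map_one, map_one])⟩, fun a b =>
    hinj (by rw [hr, map_mul, map_mul, hr, hr])⟩, MonoidHom.ext hr⟩

lemma IsStrongProjectiveRep.of_map [Nonempty ι] {R : Type*} [CommRing R] {φ : R →+* K}
    (hφ : Function.Injective φ) {ρ' : Γ →* Matrix ι ι R}
    (h : IsStrongProjectiveRep p ((φ.mapMatrix (m := ι) : Matrix ι ι R →* Matrix ι ι K).comp ρ')) :
    IsStrongProjectiveRep p ρ' where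
  surjective := h.surjective
  finite_ker := h.finite_ker
  det_eq_one γ := hφ ((φ.map_det (ρ' γ)).trans (by rw [map_one]; exact h.det_eq_one γ))
  scalar_of_mem_ker z hz := by
    obtain ⟨c, hc⟩ := h.scalar_of_mem_ker z hz
    have hentry (i j : ι) : φ (ρ' z i j) = c * (1 : Matrix ι ι K) i j := congrFun (congrFun hc i) j
    obtain ⟨i₀⟩ := ‹Nonempty ι›
    refine ⟨ρ' z i₀ i₀, Matrix.ext fun i j => hφ ?_⟩
    rw [hentry, Matrix.smul_apply, smul_eq_mul, map_mul, hentry, Matrix.one_apply_eq, mul_one,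
      Matrix.one_apply, Matrix.one_apply, apply_ite φ, map_one, map_zero]
  exists_det_traceGram_ne_zero H hH := by
    obtain ⟨w, hw, hdet⟩ := h.exists_det_traceGram_ne_zero H hH
    refine ⟨w, hw, fun h0 => hdet ?_⟩
    have hmap := congrArg φ h0
    rwa [φ.map_det, RingHom.mapMatrix_apply, map_traceGram, map_zero] at hmap

theorem IsStrongProjectiveRep.uniformlyNonamenable_of_algebra [Nontrivial ι] [Group.FG Γ]
    (hrep : IsStrongProjectiveRep p ρ) {F : Type*} [Field F] (hF : Finite F ∨ NumberField F)
    [Algebra F K] : UniformlyNonamenable G := by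
  obtain ⟨O, hO, hmem⟩ := exists_finiteType_subalgebra_of_fg F ρ
  have hinj : Function.Injective (O.val : O →+* K) := Subtype.val_injective
  obtain ⟨ρ', rfl⟩ := exists_mapMatrix_comp_eq hinj fun γ i j => ⟨⟨_, hmem γ i j⟩, rfl⟩
  exact (hrep.of_map hinj).uniformlyNonamenable_of_finiteType hF

theorem IsStrongProjectiveRep.uniformlyNonamenable [Nontrivial ι] [Group.FG Γ]
    (hrep : IsStrongProjectiveRep p ρ) : UniformlyNonamenable G := by
  obtain ⟨q, hq⟩ := CharP.exists K
  rcases CharP.char_is_prime_or_zero K q with hprime | rfl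
  · have : Fact q.Prime := ⟨hprime⟩
    let _ : Algebra (ZMod q) K := ZMod.algebra K q
    exact hrep.uniformlyNonamenable_of_algebra (F := ZMod q) (Or.inl inferInstance)
  · have : CharZero K := CharP.charP_to_charZero K
    exact hrep.uniformlyNonamenable_of_algebra (F := ℚ) (Or.inr inferInstance)

end FieldOfDefinition

section SpecialLinearLift

lemma group_fg_of_finite_ker {Γ G : Type*} [Group Γ] [Group G] [Group.FG G] {p : Γ →* G}
    (hp : Function.Surjective p) (hker : (p.ker : Set Γ).Finite) : Group.FG Γ := by
  obtain ⟨S, hS, hfin⟩ := Group.fg_iff.1 ‹Group.FG G›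
  choose σ hσ using hp
  refine Group.fg_iff.2 ⟨σ '' S ∪ p.ker, top_unique fun x _ => ?_, (hfin.image σ).union hker⟩
  set C := Subgroup.closure (σ '' S ∪ (p.ker : Set Γ))
  have hmap : (⊤ : Subgroup G) ≤ C.map p := by
    rw [← hS, Subgroup.closure_le]
    exact fun s hs => ⟨σ s, Subgroup.subset_closure (Or.inl ⟨s, hs, rfl⟩), hσ s⟩
  obtain ⟨c, hc, hcx⟩ := hmap (Subgroup.mem_top (p x))
  have hker : c⁻¹ * x ∈ p.ker := by rw [MonoidHom.mem_ker, map_mul, map_inv, hcx, inv_mul_cancel]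
  simpa using C.mul_mem hc (Subgroup.subset_closure (Or.inr hker))

variable {G K ι : Type*} [Group G] [Field K] [Fintype ι] [DecidableEq ι]

/-- The fibre product of `G` and `SL` over `PGL`, through which the projective representation
underlying `ρ` becomes one by matrices of determinant one. -/
def slLift (ρ : G →* Matrix ι ι K) : Subgroup (G × SpecialLinearGroup ι K) :=
  let π := QuotientGroup.mk' (Subgroup.center (GL ι K))
  (π.comp (ρ.toHomUnits.comp (MonoidHom.fst _ _))).eqLocus
    (π.comp (SpecialLinearGroup.toGL.comp (MonoidHom.snd _ _)))

lemma mem_slLift_iff {ρ : G →* Matrix ι ι K} {x : G × SpecialLinearGroup ι K} :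
    x ∈ slLift ρ ↔ ∃ c : K, (x.2 : Matrix ι ι K) = c • ρ x.1 := by
  have hinv : ρ x.1⁻¹ * ρ x.1 = 1 := by rw [← map_mul, inv_mul_cancel, map_one]
  have hinv' : ρ x.1 * ρ x.1⁻¹ = 1 := by rw [← map_mul, mul_inv_cancel, map_one]
  have hmem : x ∈ slLift ρ ↔ ∃ c : K, scalar ι c = ρ x.1⁻¹ * x.2 :=
    QuotientGroup.eq.trans GeneralLinearGroup.mem_center_iff_val_mem_range_scalar
  refine hmem.trans (exists_congr fun c => ⟨fun h => ?_, fun h => ?_⟩)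
  · rw [← one_mul (x.2 : Matrix ι ι K), ← hinv', mul_assoc, ← h, smul_eq_mul_diagonal]
    rfl
  · rw [h, Matrix.mul_smul, hinv, smul_one_eq_diagonal]
    rfl

namespace slLift

/-- The projection of `slLift ρ` to `G`. -/
def fst (ρ : G →* Matrix ι ι K) : slLift ρ →* G :=
  (MonoidHom.fst _ _).comp (slLift ρ).subtype

/-- The representation of `slLift ρ` by matrices of determinant one. -/
def rep (ρ : G →* Matrix ι ι K) : slLift ρ →* Matrix ι ι K :=
  SpecialLinearGroup.coeMonoidHom.comp ((MonoidHom.snd _ _).comp (slLift ρ).subtype)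

variable {ρ : G →* Matrix ι ι K}

lemma det_rep (x : slLift ρ) : (rep ρ x).det = 1 := x.1.2.2

lemma exists_rep_eq_smul (x : slLift ρ) : ∃ c : K, rep ρ x = c • ρ (fst ρ x) :=
  mem_slLift_iff.1 x.2

lemma fst_surjective [IsAlgClosed K] [Nonempty ι] : Function.Surjective (fst ρ) := fun g => by
  have hdet : (ρ g).det ≠ 0 := ((isUnit_iff_isUnit_det _).1 ((Group.isUnit g).map ρ)).ne_zero
  obtain ⟨c, hc⟩ := IsAlgClosed.exists_pow_nat_eq (ρ g).det⁻¹ (Fintype.card_pos (α := ι))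
  let x : SpecialLinearGroup ι K := ⟨c • ρ g, by rw [det_smul, hc, inv_mul_cancel₀ hdet]⟩
  exact ⟨⟨(g, x), mem_slLift_iff.2 ⟨c, rfl⟩⟩, rfl⟩

lemma exists_rep_eq_smul_one {z : slLift ρ} (hz : z ∈ (fst ρ).ker) :
    ∃ c : K, c ^ Fintype.card ι = 1 ∧ rep ρ z = c • 1 := by
  obtain ⟨c, hc⟩ := exists_rep_eq_smul z
  rw [MonoidHom.mem_ker.1 hz, map_one] at hc
  refine ⟨c, ?_, hc⟩
  rw [← det_rep z, hc, det_smul, det_one, mul_one]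

lemma finite_ker_fst [Nonempty ι] : ((fst ρ).ker : Set (slLift ρ)).Finite := by
  have hinj : Set.InjOn (rep ρ) (fst ρ).ker := fun a ha b hb hab =>
    Subtype.ext (Prod.ext ((MonoidHom.mem_ker.1 ha).trans (MonoidHom.mem_ker.1 hb).symm)
      (Subtype.ext hab))
  have hroots : {c : K | c ^ Fintype.card ι = 1}.Finite :=
    (Polynomial.nthRootsFinset (Fintype.card ι) (1 : K)).finite_toSet.subset fun c hc =>
      (Polynomial.mem_nthRootsFinset Fintype.card_pos _).2 hc
  refine Set.Finite.of_finite_image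
    ((hroots.image fun c => c • (1 : Matrix ι ι K)).subset ?_) hinj
  rintro _ ⟨z, hz, rfl⟩
  obtain ⟨c, hc, hzc⟩ := exists_rep_eq_smul_one hz
  exact ⟨c, hc, hzc.symm⟩

lemma stronglySpanning_rep [IsAlgClosed K] [Nonempty ι] (hρ : StronglySpanning ρ) :
    StronglySpanning (rep ρ) := fun H hH => by
  have hfin : (H.map (fst ρ)).FiniteIndex :=
    ⟨ne_zero_of_dvd_ne_zero hH.index_ne_zero (H.index_map_dvd fst_surjective)⟩
  rw [eq_top_iff, ← hρ _ hfin, Submodule.span_le]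
  rintro _ ⟨_, ⟨x, hx, rfl⟩, rfl⟩
  obtain ⟨c, hc⟩ := exists_rep_eq_smul x
  have hc0 : c ≠ 0 := by
    rintro rfl
    exact one_ne_zero ((det_rep x).symm.trans (by rw [hc, zero_smul, det_zero]))
  rw [← inv_smul_smul₀ hc0 (ρ (fst ρ x)), ← hc]
  exact Submodule.smul_mem _ _ (Submodule.subset_span ⟨x, hx, rfl⟩)

theorem isStrongProjectiveRep [IsAlgClosed K] [Nonempty ι] (hρ : StronglySpanning ρ) :
    IsStrongProjectiveRep (fst ρ) (rep ρ) where
  surjective := fst_surjective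
  finite_ker := finite_ker_fst
  det_eq_one := det_rep
  scalar_of_mem_ker _ hz := (exists_rep_eq_smul_one hz).imp fun _ => And.right
  exists_det_traceGram_ne_zero H hH := by
    have hcard : Module.finrank K (Matrix ι ι K) = Fintype.card (ι × ι) := by
      simp [Module.finrank_matrix]
    obtain ⟨w, hw, hli⟩ := exists_linearIndependent_of_span_eq_top
      (hcard.trans Nat.card_eq_fintype_card.symm) (stronglySpanning_rep hρ H hH)
    choose w' hw' hww' using hw
    obtain rfl : (fun i => rep ρ (w' i)) = w := funext hww'
    exact ⟨w', hw', det_traceGram_ne_zero hli (hli.span_eq_top_of_card_eq_finrank' hcard.symm)⟩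

end slLift

theorem StronglySpanning.uniformlyNonamenable [IsAlgClosed K] [Nontrivial ι] [Group.FG G]
    {ρ : G →* Matrix ι ι K} (hρ : StronglySpanning ρ) : UniformlyNonamenable G :=
  have := group_fg_of_finite_ker slLift.fst_surjective (slLift.finite_ker_fst (ρ := ρ))
  (slLift.isStrongProjectiveRep hρ).uniformlyNonamenable

end SpecialLinearLift

section Burnside

variable {k G V : Type*} [Field k] [Group G] [AddCommGroup V] [Module k V]

lemma asAlgebraHom_mem_span_range (ρ : Representation k G V) (r : MonoidAlgebra k G) :
    ρ.asAlgebraHom r ∈ Submodule.span k (Set.range ρ) := by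
  induction r using MonoidAlgebra.induction_linear with
  | zero => rw [map_zero]; exact zero_mem _
  | add a b ha hb => rw [map_add]; exact add_mem ha hb
  | single g c =>
    rw [Representation.asAlgebraHom_single]
    exact Submodule.smul_mem _ _ (Submodule.subset_span ⟨g, rfl⟩)

lemma span_range_eq_top_of_isIrreducible [IsAlgClosed k] [FiniteDimensional k V]
    (ρ : Representation k G V) [ρ.IsIrreducible] : Submodule.span k (Set.range ρ) = ⊤ := by
  have hscalar := IsSimpleModule.algebraMap_end_bijective_of_isAlgClosed
    (A := MonoidAlgebra k G) (V := ρ.asModule) k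
  refine Submodule.eq_top_iff'.2 fun f => ?_
  let f' : Module.End (Module.End (MonoidAlgebra k G) ρ.asModule) ρ.asModule :=
    { toFun := fun v => ρ.asModuleEquiv.symm (f (ρ.asModuleEquiv v))
      map_add' := fun v w => by simp only [map_add]
      map_smul' := fun g v => by
        obtain ⟨c, rfl⟩ := hscalar.2 g
        exact map_smul f c v }
  obtain ⟨s, hs⟩ := Module.finite_def.1 (inferInstance : Module.Finite k V)
  obtain ⟨r, hr⟩ := jacobson_density f' s
  have hfr : f = ρ.asAlgebraHom r := LinearMap.ext_on hs fun v hv => hr v hv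
  exact hfr ▸ asAlgebraHom_mem_span_range ρ r

end Burnside

section Solvable

variable {G M : Type*} [Group G] [Group M]

lemma isSolvable_range_iff {f : G →* M} :
    Group.IsSolvable f.range ↔ ∃ n, derivedSeries G n ≤ f.ker := by
  refine (Group.isSolvable_def _).trans (exists_congr fun n => ?_)
  rw [← map_derivedSeries_eq f.rangeRestrict_surjective, Subgroup.map_eq_bot_iff,
    f.ker_rangeRestrict]

lemma isSolvable_range_domRestrict {f : G →* M} {H J : Subgroup G}
    (h : Group.IsSolvable (H.map f)) (hJ : J ≤ H) : Group.IsSolvable (f.domRestrict J).range := by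
  rw [MonoidHom.domRestrict_range]
  exact Group.isSolvable_of_isSolvable_injective
    (Subgroup.inclusion_injective (Subgroup.map_mono hJ))

lemma isSolvable_range_of_commute {M₁ M₂ : Type*} [Group M₁] [Group M₂] {f : G →* M}
    {f₁ : G →* M₁} {f₂ : G →* M₂} (h₁ : Group.IsSolvable f₁.range) (h₂ : Group.IsSolvable f₂.range)
    (h : ∀ a ∈ f₁.ker ⊓ f₂.ker, ∀ b ∈ f₁.ker ⊓ f₂.ker, Commute (f a) (f b)) :
    Group.IsSolvable f.range := by
  obtain ⟨n₁, hn₁⟩ := isSolvable_range_iff.1 h₁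
  obtain ⟨n₂, hn₂⟩ := isSolvable_range_iff.1 h₂
  have hle : derivedSeries G (max n₁ n₂) ≤ f₁.ker ⊓ f₂.ker :=
    le_inf ((derivedSeries_antitone G (le_max_left n₁ n₂)).trans hn₁)
      ((derivedSeries_antitone G (le_max_right n₁ n₂)).trans hn₂)
  refine isSolvable_range_iff.2 ⟨max n₁ n₂ + 1, ?_⟩
  rw [derivedSeries_succ, Subgroup.commutator_le]
  intro a ha b hb
  rw [MonoidHom.mem_ker, map_commutatorElement, commutatorElement_eq_one_iff_commute]
  exact h a (hle ha) b (hle hb)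

/-- The image of `f` is virtually solvable, expressed through subgroups of the source: some subgroup
of finite index has solvable image. -/
def HasVirtuallySolvableImage (f : G →* M) : Prop :=
  ∃ H : Subgroup G, H.FiniteIndex ∧ Group.IsSolvable (H.map f)

lemma HasVirtuallySolvableImage.of_comp_subtype {f : G →* M} {H : Subgroup G} [H.FiniteIndex]
    (h : HasVirtuallySolvableImage (f.comp H.subtype)) : HasVirtuallySolvableImage f := by
  obtain ⟨J, hJ, hsol⟩ := h
  refine ⟨J.map H.subtype, ⟨?_⟩, Subgroup.map_map J f H.subtype ▸ hsol⟩
  rw [Subgroup.index_map_subtype]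
  exact mul_ne_zero hJ.index_ne_zero Subgroup.FiniteIndex.index_ne_zero

lemma HasVirtuallySolvableImage.of_injective_comp {N : Type*} [Group N] {f : G →* M} {g : M →* N}
    (hg : Function.Injective g) (h : HasVirtuallySolvableImage (g.comp f)) :
    HasVirtuallySolvableImage f := by
  obtain ⟨H, hH, hsol⟩ := h
  rw [← Subgroup.map_map] at hsol
  exact ⟨H, hH, Group.isSolvable_of_isSolvable_injective
    (f := ((H.map f).equivMapOfInjective g hg).toMonoidHom) (MulEquiv.injective _)⟩

lemma HasVirtuallySolvableImage.of_commute {M₁ M₂ : Type*} [Group M₁] [Group M₂] {f : G →* M}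
    {f₁ : G →* M₁} {f₂ : G →* M₂} (h₁ : HasVirtuallySolvableImage f₁)
    (h₂ : HasVirtuallySolvableImage f₂)
    (h : ∀ a ∈ f₁.ker ⊓ f₂.ker, ∀ b ∈ f₁.ker ⊓ f₂.ker, Commute (f a) (f b)) :
    HasVirtuallySolvableImage f := by
  obtain ⟨H₁, hH₁, hsol₁⟩ := h₁
  obtain ⟨H₂, hH₂, hsol₂⟩ := h₂
  refine ⟨H₁ ⊓ H₂, inferInstance, ?_⟩
  rw [← MonoidHom.domRestrict_range]
  exact isSolvable_range_of_commute (isSolvable_range_domRestrict hsol₁ inf_le_left)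
    (isSolvable_range_domRestrict hsol₂ inf_le_right) fun a ha b hb => h a ha b hb

end Solvable

section Representations

variable {k G V : Type*} [Field k] [Group G] [AddCommGroup V] [Module k V]

lemma hasVirtuallySolvableImage_of_finrank_le_one [FiniteDimensional k V]
    (ρ : Representation k G V) (h : Module.finrank k V ≤ 1) :
    HasVirtuallySolvableImage ρ.asGroupHom := by
  refine ⟨⊤, inferInstance, Group.isSolvable_of_comm ?_⟩
  rintro ⟨_, a, -, rfl⟩ ⟨_, b, -, rfl⟩
  refine Subtype.ext (Units.ext (LinearMap.ext fun u => ?_))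
  obtain ⟨v, hv⟩ := finrank_le_one_iff.1 h
  obtain ⟨x, hx⟩ := hv (ρ a v)
  obtain ⟨y, hy⟩ := hv (ρ b v)
  obtain ⟨c, rfl⟩ := hv u
  change ρ a (ρ b (c • v)) = ρ b (ρ a (c • v))
  simp only [map_smul, ← hx, ← hy, smul_smul]
  rw [mul_right_comm]

lemma hasVirtuallySolvableImage_of_subrepresentation {ρ : Representation k G V}
    {W : Submodule k V} (hW : ∀ g, W ≤ W.comap (ρ g))
    (hsub : HasVirtuallySolvableImage (ρ.subrepresentation W hW).asGroupHom)
    (hquot : HasVirtuallySolvableImage (ρ.quotient W hW).asGroupHom) :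
    HasVirtuallySolvableImage ρ.asGroupHom := by
  refine hsub.of_commute hquot ?_
  have hfix {g : G} (hg : g ∈ (ρ.subrepresentation W hW).asGroupHom.ker) {w : V} (hw : w ∈ W) :
      ρ g w = w :=
    congrArg Subtype.val (LinearMap.congr_fun (congrArg Units.val hg) ⟨w, hw⟩)
  have hdiff {g : G} (hg : g ∈ (ρ.quotient W hW).asGroupHom.ker) (v : V) : ρ g v - v ∈ W :=
    (Submodule.Quotient.eq W).1 (LinearMap.congr_fun (congrArg Units.val hg) (W.mkQ v))
  rintro a ⟨ha₁, ha₂⟩ b ⟨hb₁, hb₂⟩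
  refine Units.ext (LinearMap.ext fun v => ?_)
  change ρ a (ρ b v) = ρ b (ρ a v)
  have hab := hfix ha₁ (hdiff hb₂ v)
  have hba := hfix hb₁ (hdiff ha₂ v)
  rw [map_sub, sub_eq_iff_eq_add] at hab hba
  rw [hab, hba]
  abel

lemma exists_invariant_submodule_of_not_isIrreducible [Nontrivial V] {ρ : Representation k G V}
    (h : ¬ρ.IsIrreducible) :
    ∃ W : Submodule k V, W ≠ ⊥ ∧ W ≠ ⊤ ∧ ∀ g, W ≤ W.comap (ρ g) := by
  by_contra! hW
  have : Nontrivial (Subrepresentation ρ) :=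
    ⟨⊥, ⊤, fun heq => bot_ne_top (congrArg Subrepresentation.toSubmodule heq)⟩
  refine h ⟨fun σ => or_iff_not_imp_left.2 fun hbot => by_contra fun htop => ?_⟩
  obtain ⟨g, hg⟩ := hW σ.toSubmodule
    (fun heq => hbot (Subrepresentation.toSubmodule_injective heq))
    (fun heq => htop (Subrepresentation.toSubmodule_injective heq))
  exact hg (σ.apply_mem_toSubmodule g)

lemma stronglySpanning_toMatrix [IsAlgClosed k] [FiniteDimensional k V] {ι : Type*} [Fintype ι]
    [DecidableEq ι] (b : Module.Basis ι k V) {ρ : Representation k G V}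
    (hirr : ∀ H : Subgroup G, H.FiniteIndex →
      Representation.IsIrreducible (ρ.comp H.subtype)) :
    StronglySpanning ((LinearMap.toMatrixAlgEquiv b : (V →ₗ[k] V) →* Matrix ι ι k).comp ρ) :=
  fun H hH => by
  have := hirr H hH
  have hspan := congrArg (Submodule.map (LinearMap.toMatrixAlgEquiv b).toLinearMap)
    (span_range_eq_top_of_isIrreducible (ρ.comp H.subtype))
  rw [Submodule.map_span, ← Set.range_comp, Submodule.map_top] at hspan
  rw [Set.image_eq_range]
  exact hspan.trans (LinearMap.range_eq_top.2 (LinearMap.toMatrixAlgEquiv b).surjective)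

theorem uniformlyNonamenable_of_representation [IsAlgClosed k] [Group.FG G] [FiniteDimensional k V]
    (ρ : Representation k G V) (hρ : ¬HasVirtuallySolvableImage ρ.asGroupHom) :
    UniformlyNonamenable G := by
  induction hd : Module.finrank k V using Nat.strong_induction_on generalizing G V with
  | _ d ih =>
  have hdim : 1 < Module.finrank k V :=
    not_le.1 fun h => hρ (hasVirtuallySolvableImage_of_finrank_le_one ρ h)
  have : Nontrivial V := Module.nontrivial_of_finrank_pos (R := k) (zero_lt_one.trans hdim)
  by_cases hirr : ∀ H : Subgroup G, H.FiniteIndex →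
      Representation.IsIrreducible (ρ.comp H.subtype)
  · have : Nontrivial (Fin (Module.finrank k V)) := Fin.nontrivial_iff_two_le.2 hdim
    exact (stronglySpanning_toMatrix (Module.finBasis k V) hirr).uniformlyNonamenable
  push Not at hirr
  obtain ⟨H, hH, hred⟩ := hirr
  obtain ⟨W, hbot, htop, hW⟩ := exists_invariant_submodule_of_not_isIrreducible hred
  have hWlt : Module.finrank k W < d := hd ▸ Submodule.finrank_lt htop
  have hQlt : Module.finrank k (V ⧸ W) < d := by
    have hpos : 0 < Module.finrank k W := Submodule.one_le_finrank_iff.2 hbot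
    have := W.finrank_quotient_add_finrank
    omega
  refine UniformlyNonamenable.of_finiteIndex H (by_contra fun hH => hρ ?_)
  refine HasVirtuallySolvableImage.of_comp_subtype (H := H) ?_
  exact hasVirtuallySolvableImage_of_subrepresentation hW
    (by_contra fun h => hH (ih _ hWlt _ h rfl)) (by_contra fun h => hH (ih _ hQlt _ h rfl))

lemma asGroupHom_coeHom_comp (f : G →* LinearMap.GeneralLinearGroup k V) :
    Representation.asGroupHom ((Units.coeHom _).comp f : Representation k G V) = f :=
  MonoidHom.ext fun _ => Units.ext rfl

lemma toLin_comp_map_injective {K L ι : Type*} [Field K] [Field L] [Fintype ι] [DecidableEq ι]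
    (φ : K →+* L) : Function.Injective
      ((GeneralLinearGroup.toLin : GL ι L ≃* _).toMonoidHom.comp (GeneralLinearGroup.map φ)) :=
  GeneralLinearGroup.toLin.injective.comp
    (Units.map_injective (Matrix.map_injective φ.injective))

theorem uniformlyNonamenable_of_not_hasVirtuallySolvableImage {K ι : Type*} [Field K] [Fintype ι]
    [DecidableEq ι] [Group.FG G] {ρ : G →* GL ι K} (hρ : ¬HasVirtuallySolvableImage ρ) :
    UniformlyNonamenable G := by
  let j := (GeneralLinearGroup.toLin : GL ι (AlgebraicClosure K) ≃* _).toMonoidHom.comp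
    (GeneralLinearGroup.map (algebraMap K (AlgebraicClosure K)))
  refine uniformlyNonamenable_of_representation ((Units.coeHom _).comp (j.comp ρ)) fun h => hρ ?_
  rw [asGroupHom_coeHom_comp] at h
  exact h.of_injective_comp (toLin_comp_map_injective _)

end Representations

lemma hasVirtuallySolvableImage_subtype_iff {G : Type*} [Group G] {Γ : Subgroup G} :
    HasVirtuallySolvableImage Γ.subtype ↔ ∃ H : Subgroup Γ, H.FiniteIndex ∧ Group.IsSolvable H :=
  exists_congr fun H => and_congr_right fun _ =>
    let e := H.equivMapOfInjective Γ.subtype Γ.subtype_injective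
    ⟨fun _ => Group.isSolvable_of_surjective (f := e.symm.toMonoidHom) e.symm.surjective,
      fun _ => Group.isSolvable_of_surjective (f := e.toMonoidHom) e.surjective⟩

end UniformKazhdan

theorem uniform_kazhdan_constant_general {K G ι E : Type*} [Field K] [Group G] [Group.FG G]
    [Fintype ι] [DecidableEq ι] [NormedAddCommGroup E] {ρ : G →* GL ι K}
    (hρ : ¬UniformKazhdan.HasVirtuallySolvableImage ρ) :
    ∃ ε > 0, ∀ S : Set G, S.Finite → UniformKazhdan.IsSymmGen S →
      ∀ f : G → E, (Summable fun x => ‖f x‖ ^ 2) →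
        ∃ s ∈ S, ε ^ 2 * ∑' x, ‖f x‖ ^ 2 ≤ ∑' x, ‖f (s⁻¹ * x) - f x‖ ^ 2 :=
  (UniformKazhdan.uniformlyNonamenable_of_not_hasVirtuallySolvableImage
    hρ).exists_forall_mul_tsum_le

/-- **Uniform ℓ²-Kazhdan constant.** If `Γ ≤ GL_n(K)` is finitely generated and not virtually
solvable, there is `ε > 0` such that for every finite symmetric generating set `S` containing `1`
and every `f ∈ ℓ²(Γ)`, some `s ∈ S` satisfies `‖s·f - f‖₂ ≥ ε ‖f‖₂` (stated with squares). -/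
theorem uniform_kazhdan_constant {K : Type*} [Field K] {n : ℕ}
    (Γ : Subgroup (GL (Fin n) K)) (hfg : Group.FG Γ)
    (hns : ¬ ∃ H : Subgroup Γ, H.FiniteIndex ∧ IsSolvable ↥H) :
    ∃ ε : ℝ, 0 < ε ∧
      ∀ S : Finset Γ, (1 : Γ) ∈ S → (∀ s ∈ S, s⁻¹ ∈ S) →
        Subgroup.closure (S : Set Γ) = ⊤ →
        ∀ f : Γ → ℂ, Memℓp f 2 →
          ∃ s ∈ S, ε ^ 2 * ∑' x : Γ, ‖f x‖ ^ 2 ≤ ∑' x : Γ, ‖f (s⁻¹ * x) - f x‖ ^ 2 := by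
  obtain ⟨ε, hε, h⟩ := uniform_kazhdan_constant_general (E := ℂ)
    (mt UniformKazhdan.hasVirtuallySolvableImage_subtype_iff.1 hns)
  exact ⟨ε, hε, fun S h1 hinv hgen f hf => h S S.finite_toSet ⟨h1, hinv, hgen⟩ f
    (by simpa using hf.summable (by norm_num))⟩
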